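/- Let t ≥ 3 be an odd integer. If the map x ↦ x^t is APN on the finite field F_{2^n} for infinitely many positive integers n, then t = 2^i + 1 for some i ≥ 1 or t = 4^i − 2^i + 1 for some i ≥ 1. -/

import Mathlib

section
open Polynomial

namespace APN

lemma eq_map_add {K : Type*} [Field K] (x : K) (P : K[X][X]) :
    ∃ P' : K[X][X], P = (P.map (evalRingHom x)).map C + C (X - C x) * P' := by
  have : C (X - C x) ∣ P - (P.map (evalRingHom x)).map C := by
    rw [C_dvd_iff_dvd_coeff]
    intro i
    rw [dvd_iff_isRoot]
    simp
  obtain ⟨P', h⟩ := this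
  exact ⟨P', by rw [← h]; ring⟩

lemma exists_G {K : Type*} [Field K] (a : K[X][X]) (d : ℕ) 
    (x y : K) (e : K[X]) (he : (X - C y) * e = a.map (evalRingHom x)) (hem : e.Monic)
    (hed : e.natDegree = d - 1) (hey : e.eval y ≠ 0)
    (M A : ℕ) (hMA : (d - 1) * M < A * d) :
    ∃ G : K[X][X], G ≠ 0 ∧ G.natDegree < d ∧ (∀ j, (G.coeff j).natDegree < A) ∧
      G ∈ Ideal.span {C (X - C x) ^ M, (e.map C) ^ M, a} := by
  set I : Ideal K[X][X] := Ideal.span {C (X - C x) ^ M, (e.map C) ^ M, a} with hI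
  set H : K[X][X] := C (X - C x) with hH
  have hHI : H ^ M ∈ I := Ideal.subset_span (Set.mem_insert _ _)
  have heI : (e.map C) ^ M ∈ I := Ideal.subset_span (by simp)
  have haI : a ∈ I := Ideal.subset_span (by simp)
  -- e in (H) + I
  have heH : ∃ w ι, ι ∈ I ∧ e.map C = H * w + ι := by
    have hcop : IsCoprime (X - C y) e := by
      rw [(irreducible_X_sub_C y).coprime_iff_not_dvd]
      intro h
      rw [dvd_iff_isRoot] at h
      exact hey h
    have hcop' : IsCoprime (e ^ M) (X - C y) := (hcop.symm).pow_left
    obtain ⟨u, v, huv⟩ := hcop'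
    obtain ⟨a', ha'⟩ := eq_map_add x a
    rw [← he] at ha'
    refine ⟨- (v.map C) * a', (u * e).map C * (e.map C) ^ M + v.map C * a, ?_, ?_⟩
    · exact I.add_mem (I.mul_mem_left _ heI) (I.mul_mem_left _ haI)
    · have h1 : e = (u * e ^ M + v * (X - C y)) * e := by rw [huv]; ring
      conv_lhs => rw [h1]
      rw [ha']
      simp only [Polynomial.map_mul, Polynomial.map_add, Polynomial.map_pow, Polynomial.map_sub, ← hH]
      ring
  obtain ⟨w, ι, hι, hew⟩ := heH
  let mk : K[X][X] →ₗ[K] (K[X][X] ⧸ I) := (Ideal.Quotient.mkₐ K I).toLinearMap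
  have hmk0 : ∀ P, mk P = 0 ↔ P ∈ I := fun P => Ideal.Quotient.eq_zero_iff_mem
  let b : Fin M × Fin (d - 1) → (K[X][X] ⧸ I) := fun ij => mk (H ^ (ij.1 : ℕ) * X ^ (ij.2 : ℕ))
  let W : Submodule K (K[X][X] ⧸ I) := Submodule.span K (Set.range b)
  have hW : ∀ n, ∀ i, i + n = M → ∀ P, mk (H ^ i * P) ∈ W := by
    intro n
    induction n with
    | zero =>
      intro i hi P
      have : mk (H ^ i * P) = 0 := by
        rw [hmk0]
        have : i = M := by omega
        rw [this]; exact I.mul_mem_right _ hHI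
      rw [this]; exact W.zero_mem
    | succ n ih =>
      intro i hi P
      have hem' : (e.map (C : K →+* K[X])).Monic := hem.map _
      obtain ⟨r', hr'⟩ := eq_map_add x (P %ₘ e.map C)
      set r0 := (P %ₘ e.map C).map (evalRingHom x) with hr0
      have hP : H ^ i * P = H ^ i * r0.map C + H ^ (i+1) * (r' + w * (P /ₘ e.map C)) + 
          (H ^ i * (P /ₘ e.map C)) * ι := by
        have h1 := modByMonic_add_div P (e.map C)
        have h2 : P = (r0.map C + H * r') + (H * w + ι) * (P /ₘ e.map C) := by
          rw [← hew, ← hr', h1]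
        linear_combination H ^ i * h2
      rw [hP, map_add, map_add]
      have h0 : mk ((H ^ i * (P /ₘ e.map C)) * ι) = 0 := by
        rw [hmk0]; exact I.mul_mem_left _ hι
      rw [h0, add_zero]
      refine W.add_mem ?_ (ih (i+1) (by omega) _)
      by_cases hd : e.map (C : K →+* K[X]) = 1
      · have : r0 = 0 := by rw [hr0, hd]; simp
        rw [this]; simp
      have hdeg : r0.natDegree < d - 1 := by
        calc r0.natDegree ≤ (P %ₘ e.map C).natDegree := natDegree_map_le
          _ < (e.map C).natDegree := natDegree_modByMonic_lt _ hem' hd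
          _ = d - 1 := by rw [hem.natDegree_map, hed]
      rw [as_sum_range' r0 (d-1) hdeg, Polynomial.map_sum, Finset.mul_sum, map_sum]
      refine W.sum_mem fun j hj => ?_
      have : H ^ i * (monomial j (r0.coeff j)).map C = (r0.coeff j) • (H ^ i * X ^ j) := by
        rw [← C_mul_X_pow_eq_monomial]
        simp only [Polynomial.map_mul, Polynomial.map_pow, map_C, map_X]
        rw [Algebra.smul_def]
        simp only [Polynomial.algebraMap_apply, Algebra.algebraMap_self, RingHom.id_apply]
        ring
      rw [this, map_smul]
      refine W.smul_mem _ (Submodule.subset_span ⟨(⟨i, by omega⟩, ⟨j, by simpa using hj⟩), rfl⟩)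
  have hWtop : W = ⊤ := by
    rw [eq_top_iff]
    intro z _
    obtain ⟨P, rfl⟩ := Ideal.Quotient.mk_surjective z
    have := hW M 0 (by omega) P
    rw [pow_zero, one_mul] at this
    exact this
  have hfin : Module.Finite K (K[X][X] ⧸ I) := by
    classical
    exact ⟨⟨Finset.univ.image b, by simpa using hWtop⟩⟩
  have hrank : Module.finrank K (K[X][X] ⧸ I) ≤ M * (d - 1) := by
    have := finrank_range_le_card (R := K) b
    rw [Set.finrank] at this
    change Module.finrank K W ≤ _ at this
    rw [hWtop, finrank_top] at this
    simpa using this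
  let Φ : (Fin d × Fin A → K) →ₗ[K] K[X][X] :=
    ∑ ij : Fin d × Fin A, ((monomial (ij.1 : ℕ)).restrictScalars K ∘ₗ (monomial (ij.2 : ℕ)) ∘ₗ 
      LinearMap.proj ij)
  have hΦ : ∀ c, Φ c = ∑ ij : Fin d × Fin A, monomial (ij.1 : ℕ) (monomial (ij.2 : ℕ) (c ij)) := by
    intro c; simp [Φ]
  have hcoeff : ∀ c (ij : Fin d × Fin A), ((Φ c).coeff ij.1).coeff ij.2 = c ij := by
    intro c ij
    rw [hΦ, finsetSum_coeff, finsetSum_coeff]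
    rw [Finset.sum_eq_single ij]
    · simp
    · intro b _ hb
      by_cases h1 : b.1 = ij.1
      · have h2 : b.2 ≠ ij.2 := fun h2 => hb (Prod.ext h1 h2)
        rw [h1, coeff_monomial_same, coeff_monomial, if_neg]
        exact fun h => h2 (Fin.ext h)
      · rw [coeff_monomial, if_neg (fun h => h1 (Fin.ext h)), coeff_zero]
    · simp
  have hker : (mk ∘ₗ Φ).ker ≠ ⊥ := by
    apply LinearMap.ker_ne_bot_of_finrank_lt
    refine hrank.trans_lt ?_
    simp; rw [mul_comm, mul_comm d]; exact hMA
  obtain ⟨c, hc, hc0⟩ := (Submodule.ne_bot_iff _).1 hker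
  refine ⟨Φ c, ?_, ?_, ?_, ?_⟩
  · intro h
    apply hc0
    ext ij
    rw [← hcoeff c ij, h]; simp
  · have hd : 0 < d := by
      by_contra hd
      have : d = 0 := by omega
      subst this
      apply hc0; ext ij; exact ij.1.elim0
    rw [hΦ]
    refine lt_of_le_of_lt (natDegree_sum_le_of_forall_le (n := d - 1) _ _ ?_) (by omega)
    intro ij _
    exact (natDegree_monomial_le _).trans (by have := ij.1.2; omega)
  · intro j
    have hA : 0 < A := by
      by_contra hA
      have : A = 0 := by omega
      subst this
      omega
    rw [hΦ, finsetSum_coeff]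
    refine lt_of_le_of_lt (natDegree_sum_le_of_forall_le (n := A - 1) _ _ ?_) (by omega)
    intro ij _
    rw [coeff_monomial]
    split_ifs
    · exact (natDegree_monomial_le _).trans (by have := ij.2.2; omega)
    · simp
  · rw [← hmk0]; exact hc

end APN
end

section
open Polynomial

namespace APN

lemma clear_inner {R K : Type*} [CommRing R] [IsDomain R] [Field K] [Algebra R K] [IsFractionRing R K]
    (P : K[X]) : ∃ r : R, r ≠ 0 ∧ ∃ P' : R[X], P'.map (algebraMap R K) = C (algebraMap R K r) * P := by
  obtain ⟨b, hbM, hb⟩ := IsLocalization.integerNormalization_spec (nonZeroDivisors R) P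
  refine ⟨b, nonZeroDivisors.ne_zero hbM, 
    IsLocalization.integerNormalization (nonZeroDivisors R) P, ?_⟩
  rw [hb, Algebra.smul_def]
  rfl

lemma clear_outer {R K : Type*} [CommRing R] [IsDomain R] [Field K] [Algebra R K] [IsFractionRing R K]
    (P : K[X][X]) : ∃ r : R, r ≠ 0 ∧ ∃ P' : R[X][X], 
      P'.map (mapRingHom (algebraMap R K)) = C (C (algebraMap R K r)) * P := by
  induction P using Polynomial.induction_on' with
  | add p q hp hq =>
    obtain ⟨r, hr, p', hp⟩ := hp
    obtain ⟨s, hs, q', hq⟩ := hq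
    refine ⟨r * s, mul_ne_zero hr hs, C (C s) * p' + C (C r) * q', ?_⟩
    simp only [Polynomial.map_add, Polynomial.map_mul, hp, hq, map_mul, map_C, coe_mapRingHom]
    ring
  | monomial n p =>
    obtain ⟨r, hr, p', hp⟩ := clear_inner (R := R) p
    refine ⟨r, hr, monomial n p', ?_⟩
    rw [map_monomial, C_mul_monomial, coe_mapRingHom, hp]

lemma bezoutOne {K : Type*} [Field K] (a G : K[X][X]) (hm : a.Monic) (hirr : Irreducible a)
    (hG : G ≠ 0) (hGd : G.natDegree < a.natDegree) :
    ∃ u v : K[X][X], ∃ δ : K[X], δ ≠ 0 ∧ u * G + v * a = C δ := by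
  let F := FractionRing K[X]
  have hinj : Function.Injective (algebraMap K[X] F) := IsFractionRing.injective _ _
  have h1 : Irreducible (a.map (algebraMap K[X] F)) :=
    (hm.irreducible_iff_irreducible_map_fraction_map (K := F)).1 hirr
  have h2 : IsCoprime (a.map (algebraMap K[X] F)) (G.map (algebraMap K[X] F)) := by
    rw [h1.coprime_iff_not_dvd]
    intro h
    have := natDegree_le_of_dvd h (by rwa [Ne, Polynomial.map_eq_zero_iff hinj])
    rw [natDegree_map_eq_of_injective hinj, natDegree_map_eq_of_injective hinj] at this
    omega
  obtain ⟨u, v, huv⟩ := h2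
  obtain ⟨r, hr, u', hu⟩ := clear_inner (R := K[X]) u
  obtain ⟨s, hs, v', hv⟩ := clear_inner (R := K[X]) v
  refine ⟨C r * v', C s * u', r * s, mul_ne_zero hr hs, ?_⟩
  apply Polynomial.map_injective _ hinj
  simp only [Polynomial.map_add, Polynomial.map_mul, hu, hv, map_C, map_mul]
  linear_combination (C ((algebraMap K[X] F) r) * C ((algebraMap K[X] F) s)) * huv

lemma exists_point {k A : Type*} [Field k] [IsAlgClosed k] [CommRing A] [Nontrivial A] [Algebra k A]
    [Algebra.FiniteType k A] : Nonempty (A →ₐ[k] k) := by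
  obtain ⟨m, hm⟩ := Ideal.exists_maximal A
  let _ : Field (A ⧸ m) := Ideal.Quotient.field m
  have : Module.Finite k (A ⧸ m) := finite_of_finite_type_of_isJacobsonRing k (A ⧸ m)
  have φ : (A ⧸ m) →ₐ[k] k := IsAlgClosed.lift
  exact ⟨φ.comp (Ideal.Quotient.mkₐ k m)⟩

lemma irreducible_ext {k K : Type*} [Field k] [IsAlgClosed k] [Field K] [Algebra k K]
    (a : k[X][X]) (hm : a.Monic) (hirr : Irreducible a) :
    Irreducible (a.map (mapRingHom (algebraMap k K))) := by
  classical
  rw [(hm.map _).irreducible_iff_natDegree']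
  rw [hm.irreducible_iff_natDegree'] at hirr
  refine ⟨?_, ?_⟩
  · intro h
    apply hirr.1
    have := hm.natDegree_map (mapRingHom (algebraMap k K))
    rw [h, natDegree_one] at this
    exact hm.natDegree_eq_zero.1 this.symm
  intro f g hf hg hfg
  have key : ∀ f : K[X][X], ∃ s : Finset K, ∀ A : Subalgebra k K, (s : Set K) ⊆ A → 
      f ∈ Polynomial.lifts (mapRingHom (algebraMap A K)) := by
    intro f
    refine ⟨f.support.biUnion fun i => (f.coeff i).coeffs, fun A hA => ?_⟩
    rw [Polynomial.lifts_iff_coeff_lifts]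
    intro i
    suffices h : f.coeff i ∈ Polynomial.lifts (algebraMap A K) by
      rw [Polynomial.mem_lifts] at h
      exact h
    rw [Polynomial.lifts_iff_coeff_lifts]
    intro j
    by_cases h0 : (f.coeff i).coeff j = 0
    · rw [h0]; exact ⟨0, map_zero _⟩
    refine ⟨⟨(f.coeff i).coeff j, hA ?_⟩, rfl⟩
    rw [Finset.mem_coe, Finset.mem_biUnion]
    refine ⟨i, ?_, coeff_mem_coeffs h0⟩
    rw [mem_support_iff]; intro h; rw [h] at h0; exact h0 (coeff_zero _)
  obtain ⟨s, hs⟩ := key f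
  obtain ⟨s', hs'⟩ := key g
  let A := Algebra.adjoin k ((s ∪ s' : Finset K) : Set K)
  have hsub : ((s ∪ s' : Finset K) : Set K) ⊆ A := Algebra.subset_adjoin
  rw [Finset.coe_union, Set.union_subset_iff] at hsub
  obtain ⟨f0, hf0, hf0d, hf0m⟩ := Polynomial.lifts_and_natDegree_eq_and_monic (hs A hsub.1) hf
  obtain ⟨g0, hg0, hg0d, hg0m⟩ := Polynomial.lifts_and_natDegree_eq_and_monic (hs' A hsub.2) hg
  have : Algebra.FiniteType k A := by
    rw [← Subalgebra.fg_iff_finiteType]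
    exact ⟨_, rfl⟩
  obtain ⟨φ⟩ := exists_point (k := k) (A := A)
  have hA : f0 * g0 = a.map (mapRingHom (algebraMap k A)) := by
    apply Polynomial.map_injective (mapRingHom (algebraMap A K)) 
      (Polynomial.map_injective _ Subtype.val_injective)
    rw [Polynomial.map_mul, hf0, hg0, hfg, Polynomial.map_map, mapRingHom_comp]
    rfl
  have hk : f0.map (mapRingHom (φ : A →+* k)) * g0.map (mapRingHom (φ : A →+* k)) = a := by
    rw [← Polynomial.map_mul, hA, Polynomial.map_map, mapRingHom_comp, AlgHom.comp_algebraMap]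
    simp
  have := hirr.2 _ _ (hf0m.map _) (hg0m.map _) hk
  rw [hg0m.natDegree_map, hg0d] at this
  rwa [hm.natDegree_map]

lemma card_rat {k : Type*} [Field k] [IsAlgClosed k] [CharP k 2] (n : ℕ) (hn : n ≠ 0) :
    ∃ s : Finset k, s.card = 2 ^ n ∧ ∀ z, z ∈ s ↔ z ^ (2 ^ n) = z := by
  classical
  let P : k[X] := X ^ (2 ^ n) - X
  have hs : P.Separable := galois_poly_separable 2 _ (dvd_pow_self 2 hn)
  have h1 : 1 < 2 ^ n := Nat.one_lt_pow hn (by norm_num)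
  have hdeg : P.natDegree = 2 ^ n := FiniteField.X_pow_card_sub_X_natDegree_eq k h1
  have h0 : P ≠ 0 := FiniteField.X_pow_card_sub_X_ne_zero k h1
  refine ⟨P.roots.toFinset, ?_, ?_⟩
  · rw [Multiset.toFinset_card_of_nodup (nodup_roots hs), ← hdeg]
    exact (splits_iff_card_roots.1 (IsAlgClosed.splits P))
  · intro z
    rw [Multiset.mem_toFinset, mem_roots h0]
    simp [P, sub_eq_zero]

end APN
end

section
open Polynomial

namespace APN

section R
variable {k : Type*} [Field k] (a : k[X][X])

/-- degree bound for elements of the coordinate ring -/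
def DegLE (z : AdjoinRoot a) (D : ℕ) : Prop :=
  ∃ P : k[X][X], AdjoinRoot.mk a P = z ∧ P.natDegree < a.natDegree ∧ ∀ j, (P.coeff j).natDegree ≤ D

variable {a}

lemma DegLE.mono {z : AdjoinRoot a} {D D' : ℕ} (h : DegLE a z D) (hD : D ≤ D') : DegLE a z D' := by
  obtain ⟨P, h1, h2, h3⟩ := h
  exact ⟨P, h1, h2, fun j => (h3 j).trans hD⟩

lemma DegLE.add {z w : AdjoinRoot a} {D : ℕ} (hz : DegLE a z D) (hw : DegLE a w D) :
    DegLE a (z + w) D := by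
  obtain ⟨P, h1, h2, h3⟩ := hz
  obtain ⟨Q, g1, g2, g3⟩ := hw
  refine ⟨P + Q, by rw [map_add, h1, g1], (natDegree_add_le _ _).trans_lt (max_lt h2 g2), fun j => ?_⟩
  rw [coeff_add]
  exact (natDegree_add_le _ _).trans (max_le (h3 j) (g3 j))

lemma DegLE.sum {ι : Type*} (s : Finset ι) (f : ι → AdjoinRoot a) {D : ℕ} (ha : 0 < a.natDegree)
    (h : ∀ i ∈ s, DegLE a (f i) D) : DegLE a (∑ i ∈ s, f i) D := by
  classical
  induction s using Finset.induction_on with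
  | empty => exact ⟨0, by simp, by simpa using ha, by simp⟩
  | insert i s hi ih =>
    rw [Finset.sum_insert hi]
    exact (h i (by simp)).add (ih fun j hj => h j (by simp [hj]))

lemma DegLE.mul_x {z : AdjoinRoot a} {D : ℕ} (hz : DegLE a z D) (i : ℕ) :
    DegLE a (z * (AdjoinRoot.of a X) ^ i) (D + i) := by
  obtain ⟨P, h1, h2, h3⟩ := hz
  refine ⟨P * C (X ^ i), by rw [map_mul, h1, AdjoinRoot.mk_C, map_pow], 
    (natDegree_mul_C_le _ _).trans_lt h2, fun j => ?_⟩
  rw [coeff_mul_C]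
  exact natDegree_mul_le.trans (add_le_add (h3 j) (by simp))

lemma DegLE.mul_y {z : AdjoinRoot a} {D e : ℕ} (ha : a.Monic) (he : ∀ j, (a.coeff j).natDegree ≤ e)
    (hz : DegLE a z D) : DegLE a (z * AdjoinRoot.root a) (D + e) := by
  obtain ⟨P, h1, h2, h3⟩ := hz
  refine ⟨P * X - C (P.coeff (a.natDegree - 1)) * a, ?_, ?_, ?_⟩
  · simp [h1]
  · set d := a.natDegree with hd
    suffices hle : (P * X - C (P.coeff (d - 1)) * a).natDegree ≤ d - 1 by omega
    rw [natDegree_le_iff_coeff_eq_zero]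
    intro m hm
    replace hm : d ≤ m := by omega
    rw [coeff_sub, coeff_C_mul]
    rcases Nat.exists_eq_succ_of_ne_zero (show m ≠ 0 by omega) with ⟨m', rfl⟩
    rw [Nat.succ_eq_add_one, coeff_mul_X]
    rcases eq_or_lt_of_le hm with h | h
    · have : a.coeff (m' + 1) = 1 := by rw [← Nat.succ_eq_add_one, ← h]; exact ha.coeff_natDegree
      rw [this, h, mul_one]
      simp
    · rw [coeff_eq_zero_of_natDegree_lt (by omega : P.natDegree < m'),
        coeff_eq_zero_of_natDegree_lt (by omega : a.natDegree < m' + 1)]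
      simp
  · intro j
    rw [coeff_sub, coeff_C_mul]
    refine (natDegree_sub_le _ _).trans (max_le ?_ ?_)
    · cases j with
      | zero => simp
      | succ j => rw [coeff_mul_X]; exact (h3 j).trans (by omega)
    · exact natDegree_mul_le.trans (add_le_add (h3 _) (he j))

lemma DegLE.mul_y_pow {z : AdjoinRoot a} {D e : ℕ} (ha : a.Monic) (he : ∀ j, (a.coeff j).natDegree ≤ e)
    (hz : DegLE a z D) (i : ℕ) : DegLE a (z * AdjoinRoot.root a ^ i) (D + e * i) := by
  induction i with
  | zero => simpa using hz
  | succ i ih =>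
    have := ih.mul_y ha he
    rw [pow_succ, ← mul_assoc]
    exact this.mono (by ring_nf; rfl)

lemma exists_rep (ha : a.Monic) (hd : 0 < a.natDegree) (z : AdjoinRoot a) : 
    ∃ P : k[X][X], AdjoinRoot.mk a P = z ∧ P.natDegree < a.natDegree := by
  obtain ⟨P, rfl⟩ := AdjoinRoot.mk_surjective z
  refine ⟨P %ₘ a, ?_, natDegree_modByMonic_lt _ ha (by rintro rfl; simp at hd)⟩
  rw [AdjoinRoot.mk_eq_mk]
  conv_lhs => rw [← one_mul a]
  rw [← dvd_neg, neg_sub]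
  rw [one_mul]
  exact ⟨P /ₘ a, by rw [sub_eq_iff_eq_add, add_comm, modByMonic_add_div]⟩

lemma exists_degLE (ha : a.Monic) (hd : 0 < a.natDegree) (z : AdjoinRoot a) : ∃ D, DegLE a z D := by
  obtain ⟨P, h1, h2⟩ := exists_rep ha hd z
  refine ⟨P.support.sup fun j => (P.coeff j).natDegree, P, h1, h2, fun j => ?_⟩
  by_cases hj : j ∈ P.support
  · exact Finset.le_sup (f := fun j => (P.coeff j).natDegree) hj
  · rw [notMem_support_iff.1 hj]; simp

lemma rep_unique (ha : a.Monic) {P Q : k[X][X]} (hP : P.natDegree < a.natDegree)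
    (hQ : Q.natDegree < a.natDegree) (h : AdjoinRoot.mk a P = AdjoinRoot.mk a Q) : P = Q := by
  rw [AdjoinRoot.mk_eq_mk] at h
  rw [← sub_eq_zero]
  by_contra hne
  have h1 : (P - Q).natDegree < a.natDegree := (natDegree_sub_le _ _).trans_lt (max_lt hP hQ)
  exact ha.not_dvd_of_natDegree_lt hne h1 h

lemma eq_zero_of_dvd (ha : a.Monic) (hd : 0 < a.natDegree) {z : AdjoinRoot a} {D M : ℕ} (hz : DegLE a z D)
    (s : Finset k) (hs : ∀ c ∈ s, (AdjoinRoot.of a (X - C c)) ^ M ∣ z) (hM : D < M * s.card) : z = 0 := by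
  obtain ⟨P, h1, h2, h3⟩ := hz
  suffices P = 0 by rw [← h1, this, map_zero]
  have hdvd : ∀ c ∈ s, ∀ j, (X - C c) ^ M ∣ P.coeff j := by
    intro c hc
    rw [← C_dvd_iff_dvd_coeff]
    obtain ⟨w, hw⟩ := hs c hc
    obtain ⟨Q, hQ, hQd⟩ := exists_rep ha hd w
    refine ⟨Q, ?_⟩
    apply rep_unique ha h2 ((natDegree_C_mul_le _ _).trans_lt hQd)
    rw [h1, hw, map_mul, hQ, AdjoinRoot.mk_C, map_pow]
  ext1 j
  by_contra hne
  rw [coeff_zero] at hne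
  have : ∏ c ∈ s, (X - C c) ^ M ∣ P.coeff j := by
    apply Finset.prod_dvd_of_coprime
    · intro c _ c' _ hcc
      exact (pairwise_coprime_X_sub_C Function.injective_id hcc).pow
    · intro c hc; exact hdvd c hc j
  have := natDegree_le_of_dvd this hne
  rw [natDegree_prod_of_monic _ _ (fun c _ => (monic_X_sub_C c).pow M)] at this
  simp only [natDegree_pow, natDegree_X_sub_C, mul_one, Finset.sum_const, smul_eq_mul] at this
  have := h3 j
  rw [mul_comm] at hM
  omega

lemma dvd_of_vanish [IsAlgClosed k] (ha : a.Monic) (hd : 0 < a.natDegree) (c : k) 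
    (hsep : (a.map (evalRingHom c)).Separable) (z : AdjoinRoot a)
    (hz : ∀ (y : k) (hy : a.eval₂ (evalRingHom c) y = 0), AdjoinRoot.lift (evalRingHom c) y hy z = 0) :
    AdjoinRoot.of a (X - C c) ∣ z := by
  classical
  obtain ⟨P, rfl, hP⟩ := exists_rep ha hd z
  have hm : (a.map (evalRingHom c)).Monic := ha.map _
  have h0 : P.map (evalRingHom c) = 0 := by
    apply eq_zero_of_natDegree_lt_card_of_eval_eq_zero' _ (a.map (evalRingHom c)).roots.toFinset
    · intro y hy
      rw [Multiset.mem_toFinset, mem_roots hm.ne_zero, IsRoot, eval_map] at hy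
      have := hz y hy
      rw [AdjoinRoot.lift_mk] at this
      rw [eval_map, this]
    · rw [Multiset.toFinset_card_of_nodup (nodup_roots hsep), 
        (splits_iff_card_roots.1 (IsAlgClosed.splits _)), ha.natDegree_map]
      exact natDegree_map_le.trans_lt hP
  obtain ⟨P', hP'⟩ := eq_map_add c P
  rw [h0, Polynomial.map_zero, zero_add] at hP'
  rw [hP', map_mul, AdjoinRoot.mk_C]
  exact dvd_mul_right _ _

end R
end APN
end

section
open Polynomial

namespace APN

section
variable {k : Type*} [Field k]

lemma map_evalEval_eq {S : Type*} [CommRing S] (φ : k →+* S) (a : k[X][X]) (ξ η : S) :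
    (a.map (mapRingHom φ)).evalEval ξ η = a.eval₂ (eval₂RingHom φ ξ) η := by
  rw [← map_evalRingHom_eval, Polynomial.map_map, eval_map]
  congr 1
  ext <;> simp

lemma evalEval_mk (a P : k[X][X]) :
    (P.map (mapRingHom (algebraMap k (AdjoinRoot a)))).evalEval (AdjoinRoot.of a X) (AdjoinRoot.root a)
      = AdjoinRoot.mk a P := by
  rw [map_evalEval_eq]
  have : eval₂RingHom (algebraMap k (AdjoinRoot a)) (AdjoinRoot.of a X) = AdjoinRoot.of a := by
    ext z
    · simp only [RingHom.comp_apply, coe_eval₂RingHom, eval₂_C]; rfl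
    · simp
  rw [this]
  have h := AdjoinRoot.lift_mk (f := a) (i := AdjoinRoot.of a) (a := AdjoinRoot.root a) 
    (AdjoinRoot.eval₂_root a) P
  rw [← h]
  have h2 : AdjoinRoot.lift (AdjoinRoot.of a) (AdjoinRoot.root a) (AdjoinRoot.eval₂_root a) = 
      RingHom.id _ := by
    apply AdjoinRoot.ringHom_ext
    all_goals (try ext) <;> simp
  rw [h2]; rfl

lemma fix_iter [CharP k 2] (a : k[X][X]) (hfix : a.map (mapRingHom (frobenius k 2)) = a) (n : ℕ) :
    a.map (mapRingHom (iterateFrobenius k 2 n)) = a := by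
  induction n with
  | zero => rw [iterateFrobenius_zero]; simp
  | succ n ih =>
    rw [iterateFrobenius_add, iterateFrobenius_one, ← mapRingHom_comp, ← Polynomial.map_map, hfix, ih]

lemma evalEval_frob [CharP k 2] {S : Type*} [CommRing S] [CharP S 2] (φ : k →+* S) (a : k[X][X]) 
    (hfix : a.map (mapRingHom (frobenius k 2)) = a) (n : ℕ) (ξ η : S) :
    (a.map (mapRingHom φ)).evalEval (ξ ^ 2 ^ n) (η ^ 2 ^ n) = 
      ((a.map (mapRingHom φ)).evalEval ξ η) ^ 2 ^ n := by
  have h := map_mapRingHom_evalEval (iterateFrobenius S 2 n) (a.map (mapRingHom φ)) ξ η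
  simp only [iterateFrobenius_def] at h
  rw [← h, Polynomial.map_map, mapRingHom_comp, ← RingHom.iterateFrobenius_comm, 
    ← mapRingHom_comp, ← Polynomial.map_map, fix_iter a hfix]

lemma of_injective (a : k[X][X]) (hm : a.Monic) (hd : 0 < a.natDegree) :
    Function.Injective (AdjoinRoot.of a) := by
  apply AdjoinRoot.of.injective_of_degree_ne_zero
  rw [degree_eq_natDegree hm.ne_zero]
  exact_mod_cast hd.ne'

lemma mk_ne_zero (a : k[X][X]) (hm : a.Monic) {P : k[X][X]} (hP : P ≠ 0) (hPd : P.natDegree < a.natDegree) :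
    AdjoinRoot.mk a P ≠ 0 := by
  intro h
  rw [AdjoinRoot.mk_eq_zero] at h
  exact hm.not_dvd_of_natDegree_lt hP hPd h

lemma natDegree_derivative_lt' (a : k[X][X]) (h : derivative a ≠ 0) : 
    (derivative a).natDegree < a.natDegree := by
  apply natDegree_derivative_lt
  intro h0
  rw [natDegree_eq_zero] at h0
  obtain ⟨x, rfl⟩ := h0
  simp at h

lemma LW_G [IsAlgClosed k] [CharP k 2] (a : k[X][X]) (hm : a.Monic) (hirr : Irreducible a) 
    (hfix : a.map (mapRingHom (frobenius k 2)) = a) (hder : derivative a ≠ 0) 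
    (M A : ℕ) (hMA : (a.natDegree - 1) * M < A * a.natDegree) :
    ∃ G α β γ : (AdjoinRoot a)[X][X], ∃ e : (AdjoinRoot a)[X], 
      G.natDegree < a.natDegree ∧ (∀ j, (G.coeff j).natDegree < A) ∧
      (X - C (AdjoinRoot.root a)) * e = 
        (a.map (mapRingHom (algebraMap k (AdjoinRoot a)))).map (evalRingHom (AdjoinRoot.of a X)) ∧
      G = α * (C (X - C (AdjoinRoot.of a X))) ^ M + β * (e.map C) ^ M + 
        γ * a.map (mapRingHom (algebraMap k (AdjoinRoot a))) ∧
      {n : ℕ | G.evalEval ((AdjoinRoot.of a X) ^ 2 ^ n) ((AdjoinRoot.root a) ^ 2 ^ n) = 0}.Finite := by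
  classical
  have hd : 0 < a.natDegree := (Nat.zero_le _).trans_lt (natDegree_derivative_lt' a hder)
  have : IsDomain (AdjoinRoot a) := AdjoinRoot.isDomain_of_prime hirr.prime
  set R := AdjoinRoot a with hR
  obtain ⟨K, iF, iA, iFr⟩ : ∃ (K : Type _) (_ : Field K) (_ : Algebra R K), IsFractionRing R K :=
    ⟨FractionRing R, inferInstance, inferInstance, inferInstance⟩
  let _ : Algebra k K := ((algebraMap R K).comp (algebraMap k R)).toAlgebra
  set x : R := AdjoinRoot.of a X with hx
  set y : R := AdjoinRoot.root a with hy
  have hofinj := of_injective a hm hd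
  have hkinj : Function.Injective (algebraMap k R) := (algebraMap k R).injective
  have : CharP R 2 := charP_of_injective_ringHom hkinj 2
  have hinj : Function.Injective (algebraMap R K) := IsFractionRing.injective _ _
  set aR : R[X][X] := a.map (mapRingHom (algebraMap k R)) with haR
  have haRm : aR.Monic := hm.map _
  have hroot : aR.evalEval x y = 0 := by rw [haR, evalEval_mk]; simp
  set e : R[X] := (aR.map (evalRingHom x)) /ₘ (X - C y) with he
  have hemul : (X - C y) * e = aR.map (evalRingHom x) := by
    rw [he, mul_divByMonic_eq_iff_isRoot, IsRoot, map_evalRingHom_eval, hroot]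
  have hem : e.Monic := (monic_X_sub_C y).of_mul_monic_left (by rw [hemul]; exact haRm.map _)
  have hed : e.natDegree = a.natDegree - 1 := by
    have : (aR.map (evalRingHom x)).natDegree = a.natDegree := by
      rw [haRm.natDegree_map, haR, hm.natDegree_map]
    rw [← this, ← hemul, (monic_X_sub_C y).natDegree_mul hem, natDegree_X_sub_C]
    omega
  have hey : e.eval y ≠ 0 := by
    have h1 : (derivative (aR.map (evalRingHom x))).eval y = e.eval y := by
      rw [← hemul]; simp
    rw [derivative_map, haR, derivative_map, map_evalRingHom_eval, evalEval_mk] at h1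
    rw [← h1]
    exact mk_ne_zero a hm hder (natDegree_derivative_lt' a hder)
  set ι := algebraMap R K
  have hcomp : (evalRingHom (ι x)).comp (mapRingHom ι) = ι.comp (evalRingHom x) := by
    ext <;> simp
  obtain ⟨G, hG0, hGd, hGA, hGI⟩ := exists_G (aR.map (mapRingHom ι)) a.natDegree (ι x) (ι y) (e.map ι)
    (by rw [Polynomial.map_map, hcomp, ← Polynomial.map_map, ← hemul]; simp) (hem.map _)
    (by rw [hem.natDegree_map, hed]) (by rw [eval_map_apply]; rwa [Ne, map_eq_zero_iff _ hinj])
    M A hMA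
  rw [Ideal.mem_span_insert'] at hGI
  obtain ⟨α, hGI⟩ := hGI
  rw [Ideal.mem_span_pair] at hGI
  obtain ⟨β, γ, hG⟩ := hGI
  obtain ⟨r1, hr1, G', hG'⟩ := clear_outer (R := R) G
  change G'.map (mapRingHom ι) = C (C (ι r1)) * G at hG'
  obtain ⟨r2, hr2, α', hα'⟩ := clear_outer (R := R) α
  change α'.map (mapRingHom ι) = C (C (ι r2)) * α at hα'
  obtain ⟨r3, hr3, β', hβ'⟩ := clear_outer (R := R) β
  change β'.map (mapRingHom ι) = C (C (ι r3)) * β at hβ'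
  obtain ⟨r4, hr4, γ', hγ'⟩ := clear_outer (R := R) γ
  change γ'.map (mapRingHom ι) = C (C (ι r4)) * γ at hγ'
  have hiinj : Function.Injective (mapRingHom ι) := Polynomial.map_injective _ hinj
  set G1 : R[X][X] := C (C (r2 * r3 * r4)) * G' with hG1
  have hr : r1 * r2 * r3 * r4 ≠ 0 := by simp [hr1, hr2, hr3, hr4]
  have hGG : G1.map (mapRingHom ι) = C (C (ι (r1 * r2 * r3 * r4))) * G := by
    rw [hG1, Polynomial.map_mul, hG']
    simp only [map_C, coe_mapRingHom]
    simp only [map_mul]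
    ring
  refine ⟨G1, - (C (C (r1 * r3 * r4)) * α'), (C (C (r1 * r2 * r4)) * β'), (C (C (r1 * r2 * r3)) * γ'), 
    e, ?_, ?_, hemul, ?_, ?_⟩
  · rw [← natDegree_map_eq_of_injective hiinj, hGG]
    exact (natDegree_C_mul_le _ _).trans_lt hGd
  · intro j
    rw [← natDegree_map_eq_of_injective hinj, ← coe_mapRingHom, ← coeff_map, hGG, coeff_C_mul]
    exact (natDegree_C_mul_le _ _).trans_lt (hGA j)
  · apply Polynomial.map_injective _ hiinj
    rw [hGG]
    have hce : (e.map (C : R →+* R[X])).map (mapRingHom ι) = (e.map ι).map C := by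
      rw [Polynomial.map_map, Polynomial.map_map]
      congr 1
      ext <;> simp
    simp only [Polynomial.map_add, Polynomial.map_mul, Polynomial.map_neg, Polynomial.map_pow, hα', hβ', hγ', hce]
    simp only [map_C, coe_mapRingHom, Polynomial.map_sub, Polynomial.map_X]
    simp only [map_mul]
    linear_combination (- C (C (ι r1)) * C (C (ι r2)) * C (C (ι r3)) * C (C (ι r4))) * hG
  · have haK : aR.map (mapRingHom ι) = a.map (mapRingHom (algebraMap k K)) := by
      rw [haR, Polynomial.map_map, mapRingHom_comp]
      congr 2
    obtain ⟨u, v, δ, hδ, huv⟩ := bezoutOne (aR.map (mapRingHom ι)) G (haRm.map _) 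
      (by rw [haK]; exact irreducible_ext a hm hirr) hG0 
      (by rw [haRm.natDegree_map, haR, hm.natDegree_map]; exact hGd)
    refine Set.Finite.of_finite_image (f := fun n => ι (x ^ 2 ^ n)) 
      ((δ.rootSet_finite K).subset ?_) ?_
    · rintro _ ⟨n, hn, rfl⟩
      rw [mem_rootSet]
      refine ⟨hδ, ?_⟩
      simp only [Set.mem_ofPred_eq] at hn
      have hn2 : (C (C (ι (r1 * r2 * r3 * r4))) * G).evalEval (ι (x ^ 2 ^ n)) (ι (y ^ 2 ^ n)) = 0 := by
        rw [← hGG, map_mapRingHom_evalEval, hn, map_zero]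
      rw [evalEval_mul, evalEval_C, eval_C, mul_eq_zero] at hn2
      have hn3 := hn2.resolve_left (by rwa [map_eq_zero_iff _ hinj])
      have ha3 : (aR.map (mapRingHom ι)).evalEval (ι (x ^ 2 ^ n)) (ι (y ^ 2 ^ n)) = 0 := by
        rw [map_mapRingHom_evalEval, haR, evalEval_frob _ a hfix, ← haR, hroot]
        simp
      have h4 := congrArg (evalEval (ι (x ^ 2 ^ n)) (ι (y ^ 2 ^ n))) huv
      rw [evalEval_add, evalEval_mul, evalEval_mul, hn3, ha3, evalEval_C] at h4
      rw [coe_aeval_eq_eval, ← h4]; simp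
    · intro n _ m _ hnm
      have h1 := hinj hnm
      rw [hx, ← map_pow, ← map_pow] at h1
      have h2 := congrArg natDegree (hofinj h1)
      rw [natDegree_X_pow, natDegree_X_pow] at h2
      exact Nat.pow_right_injective le_rfl h2

end
end APN
end

section
open Polynomial

namespace APN

lemma LW_dvd {k : Type*} [Field k] [IsAlgClosed k] [CharP k 2] (a : k[X][X]) (hm : a.Monic) 
    (hd : 0 < a.natDegree) (hfix : a.map (mapRingHom (frobenius k 2)) = a) 
    (M n : ℕ) (c : k) (hc : c ^ 2 ^ n = c) (hsep : (a.map (evalRingHom c)).Separable)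
    (hno : ∀ y0, y0 ^ 2 ^ n = y0 → a.evalEval c y0 ≠ 0)
    (G α β γ : (AdjoinRoot a)[X][X]) (e : (AdjoinRoot a)[X])
    (he : (X - C (AdjoinRoot.root a)) * e = 
        (a.map (mapRingHom (algebraMap k (AdjoinRoot a)))).map (evalRingHom (AdjoinRoot.of a X)))
    (hG : G = α * (C (X - C (AdjoinRoot.of a X))) ^ M + β * (e.map C) ^ M + 
        γ * a.map (mapRingHom (algebraMap k (AdjoinRoot a)))) :
    (AdjoinRoot.of a (X - C c)) ^ M ∣ 
      G.evalEval ((AdjoinRoot.of a X) ^ 2 ^ n) ((AdjoinRoot.root a) ^ 2 ^ n) := by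
  set R := AdjoinRoot a with hR
  set x : R := AdjoinRoot.of a X with hx
  set y : R := AdjoinRoot.root a with hy
  set aR : R[X][X] := a.map (mapRingHom (algebraMap k R)) with haR
  have hofinj := of_injective a hm hd
  have : Nontrivial R := hofinj.nontrivial
  have hkinj : Function.Injective (algebraMap k R) := (algebraMap k R).injective
  have : CharP R 2 := charP_of_injective_ringHom hkinj 2
  have hroot : aR.evalEval x y = 0 := by rw [haR, evalEval_mk]; simp
  have hroot2 : aR.evalEval (x ^ 2 ^ n) (y ^ 2 ^ n) = 0 := by
    rw [haR, evalEval_frob _ a hfix, ← haR, hroot]; simp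
  have h1 : AdjoinRoot.of a (X - C c) ∣ x ^ 2 ^ n - x := by
    rw [hx, ← map_pow, ← map_sub]
    apply _root_.map_dvd
    rw [dvd_iff_isRoot]
    simp [hc]
  have h2 : AdjoinRoot.of a (X - C c) ∣ e.eval (y ^ 2 ^ n) := by
    apply dvd_of_vanish hm hd c hsep
    intro y0 hy0
    set π := AdjoinRoot.lift (evalRingHom c) y0 hy0 with hπ
    have hπx : π x = c := by simp [hπ, hx]
    have hπy : π y = y0 := by simp [hπ, hy]
    have hπk : π.comp (algebraMap k R) = RingHom.id k := by
      ext z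
      have : algebraMap k R z = AdjoinRoot.of a (C z) := rfl
      rw [RingHom.comp_apply, this]
      simp [hπ]
    have h3 := congrArg (eval (y ^ 2 ^ n)) he
    rw [map_evalRingHom_eval, eval_mul] at h3
    have h4 := congrArg π h3
    rw [← map_mapRingHom_evalEval, haR, Polynomial.map_map, mapRingHom_comp, hπk, hπx, map_mul, 
      map_pow, hπy] at h4
    simp only [eval_sub, eval_X, eval_C, map_sub, map_pow, hπy, mapRingHom_id, Polynomial.map_id] at h4
    have h0 : a.evalEval c y0 = 0 := by
      rw [← map_evalRingHom_eval, eval_map]; exact hy0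
    have h5 := evalEval_frob (RingHom.id k) a hfix n c y0
    simp only [mapRingHom_id, Polynomial.map_id, hc, h0] at h5
    rw [h5, zero_pow (by positivity), mul_eq_zero] at h4
    rcases h4 with h4 | h4
    · exact absurd h0 (hno y0 (sub_eq_zero.1 h4))
    · exact h4
  rw [hG]
  simp only [evalEval_add, evalEval_mul, evalEval_pow, hroot2, mul_zero, add_zero]
  refine dvd_add (Dvd.dvd.mul_left ?_ _) (Dvd.dvd.mul_left ?_ _)
  · apply pow_dvd_pow_of_dvd
    simpa [evalEval_C] using h1
  · apply pow_dvd_pow_of_dvd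
    rw [evalEval_map_C]; exact h2

theorem LW {k : Type*} [Field k] [IsAlgClosed k] [CharP k 2] (a : k[X][X]) (hm : a.Monic) 
    (hirr : Irreducible a) (hfix : a.map (mapRingHom (frobenius k 2)) = a) (hder : derivative a ≠ 0)
    (s : Finset k) :
    {n : ℕ | ∀ x0 y0 : k, x0 ^ 2 ^ n = x0 → y0 ^ 2 ^ n = y0 → a.evalEval x0 y0 = 0 → x0 ∈ s}.Finite := by
  classical
  have hdd := natDegree_derivative_lt' a hder
  have hd : 0 < a.natDegree := (Nat.zero_le _).trans_lt hdd
  obtain ⟨e0, he0⟩ : ∃ e0, ∀ j, (a.coeff j).natDegree ≤ e0 := by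
    refine ⟨a.support.sup fun j => (a.coeff j).natDegree, fun j => ?_⟩
    by_cases hj : j ∈ a.support
    · exact Finset.le_sup (f := fun j => (a.coeff j).natDegree) hj
    · rw [notMem_support_iff.1 hj]; simp
  set d := a.natDegree with hd'
  obtain ⟨d', hd1⟩ : ∃ d', d = d' + 1 := ⟨d - 1, by omega⟩
  set E := e0 * d' + 1 with hE
  set A := E * d' + 1 with hA
  set M := E * d + 1 with hM
  have hMA : (a.natDegree - 1) * M < A * a.natDegree := by
    rw [← hd', hA, hM, hd1]; simp only [Nat.add_sub_cancel]; nlinarith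
  obtain ⟨G, α, β, γ, e, hGd, hGA, he, hG, hfin⟩ := LW_G a hm hirr hfix hder M A hMA
  obtain ⟨u, v, δ, hδ, huv⟩ := bezoutOne a (derivative a) hm hirr hder hdd
  -- degree bound
  obtain ⟨D0, hD0⟩ : ∃ D0, ∀ i < A, ∀ j < d, DegLE a ((G.coeff j).coeff i) D0 := by
    choose D hD using fun z : AdjoinRoot a => exists_degLE hm hd z
    refine ⟨(Finset.range A ×ˢ Finset.range d).sup fun ij => D ((G.coeff ij.2).coeff ij.1), ?_⟩
    intro i hi j hj
    refine (hD _).mono ?_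
    exact Finset.le_sup (f := fun ij : ℕ × ℕ => D ((G.coeff ij.2).coeff ij.1)) 
      (b := (i, j)) (by simp [hi, hj])
  have hdeg : ∀ n, DegLE a (G.evalEval ((AdjoinRoot.of a X) ^ 2 ^ n) ((AdjoinRoot.root a) ^ 2 ^ n)) 
      (D0 + 2 ^ n * (E * d' + e0 * d')) := by
    intro n
    have : G.evalEval ((AdjoinRoot.of a X) ^ 2 ^ n) ((AdjoinRoot.root a) ^ 2 ^ n) = 
        ∑ j ∈ Finset.range d, ∑ i ∈ Finset.range A, 
          (G.coeff j).coeff i * (AdjoinRoot.of a X) ^ (2 ^ n * i) * (AdjoinRoot.root a) ^ (2 ^ n * j) := by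
      rw [← map_evalRingHom_eval, eval_eq_sum_range' (natDegree_map_le.trans_lt hGd)]
      refine Finset.sum_congr rfl fun j _ => ?_
      rw [coeff_map, coe_evalRingHom, eval_eq_sum_range' (hGA j), Finset.sum_mul]
      simp only [pow_mul]
    rw [this]
    refine DegLE.sum _ _ hd fun j hj => DegLE.sum _ _ hd fun i hi => ?_
    rw [Finset.mem_range] at hi hj
    refine DegLE.mono (((hD0 i hi j hj).mul_x (2 ^ n * i)).mul_y_pow hm he0 (2 ^ n * j)) ?_
    have h1 : i ≤ E * d' := by omega
    have h2 : j ≤ d' := by omega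
    have h3 : e0 * j ≤ e0 * d' := Nat.mul_le_mul_left _ h2
    have h4 := Nat.mul_le_mul_left (2 ^ n) (add_le_add h1 h3)
    calc D0 + 2 ^ n * i + e0 * (2 ^ n * j) = D0 + 2 ^ n * (i + e0 * j) := by ring
      _ ≤ _ := by omega
  set N := D0 + M * (s.card + δ.natDegree) + 1 with hN
  refine (hfin.union (Set.finite_lt_nat N)).subset ?_
  intro n hn
  by_cases hnN : n < N
  · right; exact hnN
  left
  simp only [Set.mem_ofPred_eq] at hn ⊢
  obtain ⟨S, hScard, hS⟩ := card_rat (k := k) n (by omega)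
  apply eq_zero_of_dvd hm hd (hdeg n) (M := M) ((S \ s) \ δ.roots.toFinset)
  · intro c hc
    simp only [Finset.mem_sdiff, hS, Multiset.mem_toFinset, mem_roots hδ] at hc
    refine LW_dvd a hm hd hfix M n c hc.1.1 ?_ ?_ G α β γ e he hG
    · have h1 := congrArg (Polynomial.map (evalRingHom c)) huv
      rw [Polynomial.map_add, Polynomial.map_mul, Polynomial.map_mul, map_C, ← derivative_map] at h1
      have h2 : eval c δ ≠ 0 := hc.2
      refine ⟨C (eval c δ)⁻¹ * v.map (evalRingHom c), C (eval c δ)⁻¹ * u.map (evalRingHom c), ?_⟩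
      have h3 : C (eval c δ)⁻¹ * C (eval c δ) = 1 := by rw [← C_mul, inv_mul_cancel₀ h2, C_1]
      rw [coe_evalRingHom] at h1
      linear_combination C (eval c δ)⁻¹ * h1 + h3
    · intro y0 hy0 h0
      exact hc.1.2 (hn c y0 hc.1.1 hy0 h0)
  · have h1 : 2 ^ n ≤ ((S \ s) \ δ.roots.toFinset).card + (s.card + δ.natDegree) := by
      have h2 := Finset.le_card_sdiff s S
      have h3 := Finset.le_card_sdiff δ.roots.toFinset (S \ s)
      have h4 : δ.roots.toFinset.card ≤ δ.natDegree := (Multiset.toFinset_card_le _).trans (card_roots' _)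
      omega
    have h5 := Nat.mul_le_mul_left M h1
    have h6 : n < 2 ^ n := Nat.lt_two_pow_self
    rw [mul_add] at h5
    have h7 : 2 ^ n * (E * d' + e0 * d') + 2 ^ n * 2 = M * 2 ^ n := by
      rw [hM, hd1]; 
      have : E * (d' + 1) + 1 = (E * d' + e0 * d') + 2 := by rw [mul_add, mul_one]; omega
      rw [this]; ring
    omega

end APN
end

section
open Polynomial

namespace APN

section
variable {k : Type*} [Field k] [IsAlgClosed k] [CharP k 2]
set_option linter.unusedSectionVars false
set_option linter.unusedSimpArgs false

/-- the curve polynomial, in `k[X][Y]` -/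
noncomputable def FF (k : Type*) [Field k] (t : ℕ) : k[X][X] := 
  C (X ^ t) + X ^ t + 1 + (C X + X + 1) ^ t

lemma two_eq (k : Type*) [Field k] [CharP k 2] : (2 : k[X][X]) = 0 := by
  have : ((2 : ℕ) : k[X][X]) = 0 := CharP.cast_eq_zero _ 2
  exact_mod_cast this

lemma FF_derivative (t : ℕ) (ht : Odd t) :
    derivative (FF k t) = X ^ (t - 1) + (X + C (X + 1)) ^ (t - 1) := by
  obtain ⟨m, rfl⟩ := ht
  have h : ((2 * m + 1 : ℕ) : k[X][X]) = 1 := by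
    push_cast; rw [two_eq]; ring
  simp only [FF, derivative_add, derivative_C, derivative_X_pow, derivative_one, derivative_pow, 
    derivative_X, map_natCast, h, map_add, map_one]
  ring

lemma FF_natDegree_le (t : ℕ) (ht : 3 ≤ t) : (FF k t).natDegree ≤ t - 1 := by
  rw [natDegree_le_iff_coeff_eq_zero]
  intro m hm
  have h1 : (C X + X + 1 : k[X][X]) = X + C (X + 1) := by simp; ring
  have hm0 : m ≠ 0 := by omega
  rw [FF, h1, coeff_add, coeff_add, coeff_add, coeff_C, coeff_X_pow, coeff_X_add_C_pow, 
    coeff_one, if_neg hm0, if_neg hm0]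
  by_cases h : m = t
  · subst h; simp; exact CharTwo.add_self_eq_zero _
  · rw [if_neg h, Nat.choose_eq_zero_of_lt (by omega)]; simp

lemma FF_coeff (t : ℕ) (ht : 3 ≤ t) (hodd : Odd t) : (FF k t).coeff (t - 1) = X + 1 := by
  have h1 : (C X + X + 1 : k[X][X]) = X + C (X + 1) := by simp; ring
  rw [FF, h1, coeff_add, coeff_add, coeff_add, coeff_C, coeff_X_pow, coeff_X_add_C_pow, 
    coeff_one, if_neg (by omega), if_neg (by omega), if_neg (by omega)]
  have h2 : t.choose (t - 1) = t := by
    rw [Nat.choose_symm (by omega : 1 ≤ t)]; simp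
  have h3 : ((t : ℕ) : k[X]) = 1 := by
    obtain ⟨m, rfl⟩ := hodd
    have : ((2 : ℕ) : k[X]) = 0 := CharP.cast_eq_zero _ 2
    push_cast; push_cast at this; rw [this]; ring
  rw [h2, h3, show t - (t - 1) = 1 by omega]; simp

lemma g_monic (t : ℕ) (ht : 3 ≤ t) (hodd : Odd t) (g : k[X][X])
    (hg : FF k t = C (X + 1) * ((X + 1) * (C X + X)) * g) : g.Monic := by
  have hX1 : (X + 1 : k[X]) ≠ 0 := by
    have := X_add_C_ne_zero (1 : k); simpa using this
  have hlc : (FF k t).leadingCoeff = X + 1 := by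
    have h := FF_coeff (k := k) t ht hodd
    have h2 : (FF k t).natDegree = t - 1 := 
      le_antisymm (FF_natDegree_le t ht) (le_natDegree_of_ne_zero (by rwa [h]))
    rw [leadingCoeff, h2, h]
  have hm1 : (X + 1 : k[X][X]).leadingCoeff = 1 := by
    have := monic_X_add_C (1 : k[X])
    rw [C_1] at this; exact this
  have hm2 : (C X + X : k[X][X]).leadingCoeff = 1 := by 
    rw [add_comm]; exact monic_X_add_C (X : k[X])
  rw [hg, leadingCoeff_mul, leadingCoeff_mul, leadingCoeff_C, leadingCoeff_mul, hm1, hm2] at hlc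
  simp only [mul_one] at hlc
  exact mul_left_cancel₀ hX1 (by rw [hlc, mul_one])

lemma sep_aux (t q ℓ i : ℕ) (hq : q = 2 ^ i) (hℓ : Odd ℓ) (htq : t = q * ℓ + 1) (hodd : Odd t)
    (a : k[X][X]) (hm : a.Monic) (hirr : Irreducible a) (hdvd : a ∣ FF k t) : derivative a ≠ 0 := by
  intro h0
  have hp := hirr.prime
  have two := two_eq k
  have step : ∀ P : k[X][X], a ∣ P → a ∣ derivative P := by
    rintro _ ⟨b, rfl⟩
    rw [derivative_mul, h0, zero_mul, zero_add]; exact dvd_mul_right _ _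
  have h1 : a ∣ (X ^ ℓ + (X + C (X + 1)) ^ ℓ) := by
    have := step _ hdvd
    rw [FF_derivative t hodd, htq, Nat.add_sub_cancel, mul_comm q ℓ, pow_mul, pow_mul, hq, 
      ← add_pow_char_pow] at this
    exact hp.dvd_of_dvd_pow this
  have h2 := step _ h1
  obtain ⟨m, rfl⟩ := hℓ
  have h : ((2 * m + 1 : ℕ) : k[X][X]) = 1 := by
    push_cast; rw [two]; ring
  simp only [derivative_add, derivative_C, derivative_X_pow, derivative_pow, 
    derivative_X, map_natCast, h, Nat.add_sub_cancel] at h2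
  have hc : ¬ a ∣ C (X + 1) := by
    intro hc
    have h3 : (C (X + 1) : k[X][X]) ≠ 0 := by
      rw [Ne, C_eq_zero]
      have := X_add_C_ne_zero (1 : k); simpa using this
    have h4 := natDegree_le_of_dvd hc h3
    rw [natDegree_C, Nat.le_zero, hm.natDegree_eq_zero] at h4
    exact hirr.not_isUnit (h4 ▸ isUnit_one)
  have e1 : a ∣ C (X + 1) * (X + C (X + 1)) ^ (2 * m) := by
    have := dvd_add (h2.mul_left X) h1
    convert this using 1
    linear_combination (-X ^ (2 * m + 1) - X * (X + C (X + 1)) ^ (2 * m)) * two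
  have e2 : a ∣ C (X + 1) * X ^ (2 * m) := by
    have := dvd_add (h2.mul_left (X + C (X + 1))) h1
    convert this using 1
    linear_combination (-X ^ (2 * m + 1) - (X + C (X + 1)) ^ (2 * m + 1)) * two
  have e3 := hp.dvd_of_dvd_pow ((hp.dvd_or_dvd e1).resolve_left hc)
  have e4 := hp.dvd_of_dvd_pow ((hp.dvd_or_dvd e2).resolve_left hc)
  exact hc ((dvd_add_right e4).1 e3)

lemma exists_galois (n : ℕ) (hn : n ≠ 0) : ∃ φ : GaloisField 2 n →+* k, 
    ∀ z : k, z ^ 2 ^ n = z → ∃ w, φ w = z := by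
  classical
  let _ : Algebra (ZMod 2) k := ZMod.algebra k 2
  let φ : GaloisField 2 n →ₐ[ZMod 2] k := IsAlgClosed.lift
  refine ⟨φ, fun z hz => ?_⟩
  obtain ⟨S, hS, hmem⟩ := card_rat (k := k) n hn
  have : Fintype (GaloisField 2 n) := Fintype.ofFinite _
  have hcard : Fintype.card (GaloisField 2 n) = 2 ^ n := by
    rw [Fintype.card_eq_nat_card]; exact GaloisField.card 2 n hn
  have hinj : Function.Injective φ := φ.toRingHom.injective
  have hsub : Finset.univ.image φ ⊆ S := by
    intro z hz
    rw [Finset.mem_image] at hz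
    obtain ⟨w, _, rfl⟩ := hz
    rw [hmem, ← map_pow, ← hcard, FiniteField.pow_card]
  have heq : Finset.univ.image φ = S := by
    apply Finset.eq_of_subset_of_card_le hsub
    rw [Finset.card_image_of_injective _ hinj, Finset.card_univ, hcard, hS]
  have hz' : z ∈ Finset.univ.image φ := by rw [heq, hmem]; exact hz
  rw [Finset.mem_image] at hz'
  obtain ⟨w, _, hw⟩ := hz'
  exact ⟨w, hw⟩

theorem no_fixed (t q ℓ i : ℕ) (ht : 3 ≤ t) (hq : q = 2 ^ i) (hℓ : Odd ℓ) (htq : t = q * ℓ + 1) (hodd : Odd t)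
    (h : {n : ℕ | 0 < n ∧ ∀ a b : GaloisField 2 n, a ≠ 0 →
        Set.ncard {x : GaloisField 2 n | (x + a) ^ t + x ^ t = b} ≤ 2}.Infinite) 
    (g : k[X][X]) (hg : FF k t = C (X + 1) * ((X + 1) * (C X + X)) * g) 
    (a : k[X][X]) (hirr : Irreducible a) (hag : a ∣ g) : 
    ¬ Associated a (a.map (mapRingHom (frobenius k 2))) := by
  classical
  intro hass
  have two := two_eq k
  have hgm := g_monic t ht hodd g hg
  -- normalise
  obtain ⟨a1, ha1m, ha1⟩ : ∃ a1 : k[X][X], a1.Monic ∧ Associated a a1 := by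
    obtain ⟨b, hb⟩ := hag
    have hu : IsUnit a.leadingCoeff := by
      rw [hb] at hgm
      have := hgm.leadingCoeff
      rw [leadingCoeff_mul] at this
      exact IsUnit.of_mul_eq_one _ this
    obtain ⟨u, hu⟩ := hu
    refine ⟨a * C ((u⁻¹ : k[X]ˣ) : k[X]), ?_, ?_⟩
    · rw [Monic, leadingCoeff_mul, leadingCoeff_C, ← hu]; simp
    · exact ⟨Units.map C.toMonoidHom u⁻¹, rfl⟩
  have hirr1 : Irreducible a1 := ha1.irreducible_iff.1 hirr
  have hfix : a1.map (mapRingHom (frobenius k 2)) = a1 := by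
    apply eq_of_monic_of_associated (ha1m.map _) ha1m
    have h2 : Associated (a.map (mapRingHom (frobenius k 2))) (a1.map (mapRingHom (frobenius k 2))) := by
      have := ha1.map (mapRingHom (mapRingHom (frobenius k 2)))
      simpa using this
    exact (h2.symm.trans hass.symm).trans ha1
  have ha1g : a1 ∣ g := ha1.symm.dvd.trans hag
  have ha1F : a1 ∣ FF k t := by rw [hg]; exact ha1g.mul_left _
  have hder := sep_aux t q ℓ i hq hℓ htq hodd a1 ha1m hirr1 ha1F
  have hXt : (X ^ (t - 1) + 1 : k[X]) ≠ 0 := by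
    have := X_pow_add_C_ne_zero (show 0 < t - 1 by omega) (1 : k); simpa using this
  have he1 : a1.eval 1 ≠ 0 := by
    intro h0
    have h1 : (X - C 1) ∣ a1 := dvd_iff_isRoot.2 h0
    obtain ⟨b, hb⟩ := h1.trans ha1g
    have h2 := congrArg (eval 1) (FF_derivative (k := k) t hodd)
    rw [hg, hb] at h2
    simp only [derivative_mul, eval_add, eval_mul, eval_sub, derivative_add, derivative_sub, derivative_C,
      derivative_X, derivative_one, eval_X, eval_C, eval_one, eval_pow, eval_zero, sub_self] at h2
    apply hXt
    have h3 : (1 + 1 : k[X]) = 0 := CharTwo.add_self_eq_zero _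
    have h4 : (1 + (X + 1) : k[X]) = X := by linear_combination h3
    rw [h3, h4] at h2
    ring_nf at h2
    rw [add_comm]; exact h2.symm
  have he2 : a1.eval X ≠ 0 := by
    intro h0
    have h1 : (X - C X) ∣ a1 := dvd_iff_isRoot.2 h0
    obtain ⟨b, hb⟩ := h1.trans ha1g
    have h2 := congrArg (eval X) (FF_derivative (k := k) t hodd)
    rw [hg, hb] at h2
    simp only [derivative_mul, eval_add, eval_mul, eval_sub, derivative_add, derivative_sub, derivative_C,
      derivative_X, derivative_one, eval_X, eval_C, eval_one, eval_pow, eval_zero, sub_self] at h2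
    apply hXt
    have h3 : (X + X : k[X]) = 0 := CharTwo.add_self_eq_zero _
    have h4 : (X + (X + 1) : k[X]) = 1 := by linear_combination h3
    rw [h3, h4] at h2
    ring_nf at h2
    rw [add_comm]; exact h2.symm
  set s : Finset k := {1} ∪ (a1.eval 1).roots.toFinset ∪ (a1.eval X).roots.toFinset with hs
  refine h ((LW a1 ha1m hirr1 hfix hder s).subset ?_)
  rintro n ⟨hn0, hn⟩ x0 y0 hx0 hy0 hz
  by_contra hxs
  simp only [hs, Finset.mem_union, Finset.mem_singleton, Multiset.mem_toFinset, mem_roots he1, 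
    mem_roots he2, not_or, IsRoot] at hxs
  obtain ⟨⟨hx1, hxy1⟩, hxy2⟩ := hxs
  have hyne1 : y0 ≠ 1 := by
    rintro rfl
    apply hxy1
    rw [evalEval] at hz; simpa using hz
  have hyne2 : y0 ≠ x0 := by
    rintro rfl
    apply hxy2
    rw [← map_evalRingHom_eval] at hz
    have := eval_map_apply (evalRingHom y0) (p := a1) X
    simp only [coe_evalRingHom, eval_X] at this
    rw [← this]; exact hz
  have hF : (FF k t).evalEval x0 y0 = 0 := by
    obtain ⟨b, hb⟩ := ha1F
    rw [hb, evalEval_mul, hz, zero_mul]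
  simp only [FF, evalEval_add, evalEval_pow, evalEval_C, evalEval_X, evalEval_one, eval_pow, eval_X] at hF
  obtain ⟨φ, hφ⟩ := exists_galois (k := k) n hn0.ne'
  obtain ⟨x, rfl⟩ := hφ x0 hx0
  obtain ⟨y, rfl⟩ := hφ y0 hy0
  have hinj := φ.injective
  have hF' : x ^ t + y ^ t + 1 + (x + y + 1) ^ t = 0 := hinj (by simpa using hF)
  have hx1' : x ≠ 1 := by rintro rfl; simp at hx1
  have hy1' : y ≠ 1 := by rintro rfl; simp at hyne1
  have hyx : y ≠ x := by rintro rfl; simp at hyne2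
  have two' : (1 + 1 : GaloisField 2 n) = 0 := CharTwo.add_self_eq_zero _
  have := hn (x + 1) (1 + x ^ t) (by
    intro h0; apply hx1'; linear_combination h0 - two')
  have hsub : (({1, x, y} : Finset (GaloisField 2 n)) : Set (GaloisField 2 n)) ⊆ 
      {z | (z + (x + 1)) ^ t + z ^ t = 1 + x ^ t} := by
    intro z hz
    simp only [Finset.coe_insert, Finset.coe_singleton, Set.mem_insert_iff, Set.mem_singleton_iff] at hz
    simp only [Set.mem_ofPred_eq]
    rcases hz with rfl | rfl | rfl
    · rw [show 1 + (x + 1) = x by linear_combination two']; simp; ring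
    · rw [show z + (z + 1) = 1 by linear_combination z * two']; simp
    · rw [show z + (x + 1) = x + z + 1 by ring]
      linear_combination hF' - (1 + x ^ t) * two'
  have h3 := Set.ncard_le_ncard hsub (Set.toFinite _)
  rw [Set.ncard_coe_finset, Finset.card_eq_three.2 ⟨1, x, y, hx1'.symm, hy1'.symm, hyx.symm, rfl⟩] at h3
  omega

end
end APN
end

section
open MvPolynomial

namespace APN

section
variable {k : Type*} [Field k]

/-- order at the origin at least `N` -/
def GeOrd (N : ℕ) (p : MvPolynomial (Fin 2) k) : Prop := ∀ d : Fin 2 →₀ ℕ, d.degree < N → coeff d p = 0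
/-- degree less than `N` -/
def LtDeg (N : ℕ) (p : MvPolynomial (Fin 2) k) : Prop := ∀ d : Fin 2 →₀ ℕ, N ≤ d.degree → coeff d p = 0
/-- homogeneous component -/
noncomputable abbrev hc (n : ℕ) (p : MvPolynomial (Fin 2) k) : MvPolynomial (Fin 2) k := 
  homogeneousComponent n p

lemma hc_mul_aux (i m : ℕ) (α u : MvPolynomial (Fin 2) k) 
    (h : ∀ a b : Fin 2 →₀ ℕ, a.degree + b.degree = i + m → ¬ (a.degree = i ∧ b.degree = m) → 
      coeff a α * coeff b u = 0) : hc (i + m) (α * u) = hc i α * hc m u := by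
  classical
  ext d
  rw [coeff_homogeneousComponent, coeff_mul, coeff_mul]
  by_cases hd : d.degree = i + m
  · rw [if_pos hd]
    refine Finset.sum_congr rfl fun ab hab => ?_
    rw [coeff_homogeneousComponent, coeff_homogeneousComponent]
    have hsum : ab.1.degree + ab.2.degree = i + m := by
      rw [← hd, ← Finset.HasAntidiagonal.mem_antidiagonal.1 hab, map_add]
    by_cases hh : ab.1.degree = i ∧ ab.2.degree = m
    · rw [if_pos hh.1, if_pos hh.2]
    · rw [h _ _ hsum hh]
      by_cases h1 : ab.1.degree = i
      · rw [if_neg (fun h2 => hh ⟨h1, h2⟩), mul_zero]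
      · rw [if_neg h1, zero_mul]
  · rw [if_neg hd]
    symm
    apply Finset.sum_eq_zero
    intro ab hab
    rw [coeff_homogeneousComponent, coeff_homogeneousComponent]
    have hsum : ab.1.degree + ab.2.degree = d.degree := by
      rw [← Finset.HasAntidiagonal.mem_antidiagonal.1 hab, map_add]
    by_cases h1 : ab.1.degree = i
    · rw [if_neg (by omega : ¬ ab.2.degree = m), mul_zero]
    · rw [if_neg h1, zero_mul]

lemma GeOrd.hc_mul {i m : ℕ} {α u : MvPolynomial (Fin 2) k} (h1 : GeOrd i α) (h2 : GeOrd m u) :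
    hc (i + m) (α * u) = hc i α * hc m u := by
  apply hc_mul_aux
  intro a b hab hne
  by_cases ha : a.degree < i
  · rw [h1 a ha, zero_mul]
  · rw [h2 b (by omega), mul_zero]

lemma LtDeg.hc_mul {i m : ℕ} {α u : MvPolynomial (Fin 2) k} (h1 : LtDeg (i+1) α) (h2 : LtDeg (m+1) u) :
    hc (i + m) (α * u) = hc i α * hc m u := by
  apply hc_mul_aux
  intro a b hab hne
  by_cases ha : i + 1 ≤ a.degree
  · rw [h1 a ha, zero_mul]
  · rw [h2 b (by omega), mul_zero]

lemma GeOrd.mul {i m : ℕ} {α u : MvPolynomial (Fin 2) k} (h1 : GeOrd i α) (h2 : GeOrd m u) :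
    GeOrd (i + m) (α * u) := by
  classical
  intro d hd
  rw [coeff_mul]
  apply Finset.sum_eq_zero
  intro ab hab
  have hsum : ab.1.degree + ab.2.degree = d.degree := by
    rw [← Finset.HasAntidiagonal.mem_antidiagonal.1 hab, map_add]
  by_cases ha : ab.1.degree < i
  · rw [h1 _ ha, zero_mul]
  · rw [h2 _ (by omega), mul_zero]

lemma LtDeg.mul {i m : ℕ} {α u : MvPolynomial (Fin 2) k} (h1 : LtDeg i α) (h2 : LtDeg (m+1) u) :
    LtDeg (i + m) (α * u) := by
  classical
  intro d hd
  rw [coeff_mul]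
  apply Finset.sum_eq_zero
  intro ab hab
  have hsum : ab.1.degree + ab.2.degree = d.degree := by
    rw [← Finset.HasAntidiagonal.mem_antidiagonal.1 hab, map_add]
  by_cases ha : i ≤ ab.1.degree
  · rw [h1 _ ha, zero_mul]
  · rw [h2 _ (by omega), mul_zero]

lemma GeOrd.add {i : ℕ} {α u : MvPolynomial (Fin 2) k} (h1 : GeOrd i α) (h2 : GeOrd i u) :
    GeOrd i (α + u) := fun d hd => by rw [coeff_add, h1 d hd, h2 d hd, add_zero]
lemma GeOrd.sub {i : ℕ} {α u : MvPolynomial (Fin 2) k} (h1 : GeOrd i α) (h2 : GeOrd i u) :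
    GeOrd i (α - u) := fun d hd => by rw [coeff_sub, h1 d hd, h2 d hd, sub_zero]
lemma LtDeg.add {i : ℕ} {α u : MvPolynomial (Fin 2) k} (h1 : LtDeg i α) (h2 : LtDeg i u) :
    LtDeg i (α + u) := fun d hd => by rw [coeff_add, h1 d hd, h2 d hd, add_zero]
lemma LtDeg.sub {i : ℕ} {α u : MvPolynomial (Fin 2) k} (h1 : LtDeg i α) (h2 : LtDeg i u) :
    LtDeg i (α - u) := fun d hd => by rw [coeff_sub, h1 d hd, h2 d hd, sub_zero]
lemma GeOrd.mono {i j : ℕ} {α : MvPolynomial (Fin 2) k} (h1 : GeOrd i α) (h : j ≤ i) :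
    GeOrd j α := fun d hd => h1 d (by omega)
lemma LtDeg.mono {i j : ℕ} {α : MvPolynomial (Fin 2) k} (h1 : LtDeg i α) (h : i ≤ j) :
    LtDeg j α := fun d hd => h1 d (by omega)
lemma GeOrd.zero (p : MvPolynomial (Fin 2) k) : GeOrd 0 p := fun d hd => by omega

lemma GeOrd.succ {i : ℕ} {α : MvPolynomial (Fin 2) k} (h1 : GeOrd i α) (h2 : hc i α = 0) :
    GeOrd (i + 1) α := by
  intro d hd
  by_cases h : d.degree = i
  · have := congrArg (coeff d) h2
    rw [coeff_homogeneousComponent, if_pos h] at this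
    simpa using this
  · exact h1 d (by omega)
lemma LtDeg.pred {i : ℕ} {α : MvPolynomial (Fin 2) k} (h1 : LtDeg (i+1) α) (h2 : hc i α = 0) :
    LtDeg i α := by
  intro d hd
  by_cases h : d.degree = i
  · have := congrArg (coeff d) h2
    rw [coeff_homogeneousComponent, if_pos h] at this
    simpa using this
  · exact h1 d (by omega)
lemma GeOrd.hc_eq_zero {i j : ℕ} {α : MvPolynomial (Fin 2) k} (h1 : GeOrd i α) (h : j < i) : hc j α = 0 := by
  ext d
  rw [coeff_homogeneousComponent, coeff_zero]
  split_ifs with hd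
  · exact h1 d (by omega)
  · rfl
lemma LtDeg.hc_eq_zero {i j : ℕ} {α : MvPolynomial (Fin 2) k} (h1 : LtDeg i α) (h : i ≤ j) : hc j α = 0 := by
  ext d
  rw [coeff_homogeneousComponent, coeff_zero]
  split_ifs with hd
  · exact h1 d (by omega)
  · rfl
lemma eq_zero_of_ord_deg {i : ℕ} {α : MvPolynomial (Fin 2) k} (h1 : LtDeg i α) (h2 : GeOrd i α) : α = 0 := by
  ext d
  by_cases h : d.degree < i
  · exact h2 d h
  · exact h1 d (by omega)
lemma geOrd_hc (i : ℕ) (α : MvPolynomial (Fin 2) k) : GeOrd i (hc i α) := by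
  intro d hd
  rw [coeff_homogeneousComponent, if_neg (by omega)]
lemma ltDeg_hc (i : ℕ) (α : MvPolynomial (Fin 2) k) : LtDeg (i+1) (hc i α) := by
  intro d hd
  rw [coeff_homogeneousComponent, if_neg (by omega)]
lemma hc_hc (i : ℕ) (α : MvPolynomial (Fin 2) k) : hc i (hc i α) = hc i α := by
  ext d
  rw [coeff_homogeneousComponent, coeff_homogeneousComponent]
  split_ifs <;> rfl
lemma hc_hc_ne {i j : ℕ} (h : i ≠ j) (α : MvPolynomial (Fin 2) k) : hc i (hc j α) = 0 := by
  ext d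
  rw [coeff_homogeneousComponent, coeff_homogeneousComponent, coeff_zero]
  split_ifs <;> first | rfl | omega

lemma mem_pow_iff (N : ℕ) (p : MvPolynomial (Fin 2) k) : p ∈ idealOfVars (Fin 2) k ^ N ↔ GeOrd N p :=
  mem_pow_idealOfVars_iff' N p

lemma exists_ltDeg (p : MvPolynomial (Fin 2) k) : ∃ N, LtDeg N p := by
  refine ⟨p.totalDegree + 1, fun d hd => ?_⟩
  exact coeff_eq_zero_of_totalDegree_lt (by
    rw [← Finsupp.degree_apply]; omega)

/-- A polynomial divided by a homogeneous one, of too small degree -/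
lemma eq_zero_of_dvd_hom {n : ℕ} {α q : MvPolynomial (Fin 2) k} (hα : LtDeg n α) (hq : GeOrd n q)
    (h : q ∣ α) : α = 0 := by
  obtain ⟨c, rfl⟩ := h
  have := hq.mul (GeOrd.zero c)
  exact eq_zero_of_ord_deg hα this

/-- divisor cofactor of homogeneous can be taken homogeneous -/
lemma hom_cofactor {i m : ℕ} {q γ α : MvPolynomial (Fin 2) k} (hq : hc m q = q) (h : hc (i + m) α = γ * q) :
    hc (i + m) α = hc i γ * q := by
  classical
  have h1 := congrArg (hc (i + m)) h
  rw [hc_hc] at h1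
  rw [h1, hc_mul_aux, hq]
  intro a b hab hne
  have : coeff b q = if b.degree = m then coeff b q else 0 := by
    conv_lhs => rw [← hq, coeff_homogeneousComponent]
  rw [this]
  split_ifs
  · omega
  · simp

/-! dimensions -/

/-- polynomials of degree `< N` -/
noncomputable def PN (k : Type*) [Field k] (N : ℕ) : Submodule k (MvPolynomial (Fin 2) k) :=
  restrictSupport k {d : Fin 2 →₀ ℕ | d.degree < N}
/-- homogeneous polynomials of degree `N` -/
noncomputable def TN (k : Type*) [Field k] (N : ℕ) : Submodule k (MvPolynomial (Fin 2) k) :=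
  restrictSupport k {d : Fin 2 →₀ ℕ | d.degree = N}

lemma mem_PN {N : ℕ} {p : MvPolynomial (Fin 2) k} : p ∈ PN k N ↔ LtDeg N p := by
  rw [PN, mem_restrictSupport_iff]
  constructor
  · intro h d hd
    by_contra hne
    have := h (mem_support_iff.2 hne)
    simp only [Set.mem_ofPred_eq] at this
    omega
  · intro h d hd
    by_contra hne
    exact (mem_support_iff.1 hd) (h d (not_lt.1 hne))

lemma mem_TN {N : ℕ} {p : MvPolynomial (Fin 2) k} : p ∈ TN k N ↔ hc N p = p := by
  rw [TN, mem_restrictSupport_iff]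
  constructor
  · intro h
    ext d
    rw [coeff_homogeneousComponent]
    split_ifs with hd
    · rfl
    · by_contra hne
      exact hd (h (mem_support_iff.2 (Ne.symm hne)))
  · intro h d hd
    rw [← h] at hd
    by_contra hne
    have := mem_support_iff.1 hd
    rw [coeff_homogeneousComponent, if_neg (show ¬ d.degree = N from hne)] at this
    exact this rfl

/-- exponents -/
noncomputable def expEquiv : ℕ × ℕ ≃ (Fin 2 →₀ ℕ) := (finTwoArrowEquiv ℕ).symm.trans Finsupp.equivFunOnFinite.symm

lemma expEquiv_degree (ab : ℕ × ℕ) : (expEquiv ab).degree = ab.1 + ab.2 := by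
  rw [Finsupp.degree_eq_sum, Fin.sum_univ_two]
  simp [expEquiv]

lemma set_T (N : ℕ) : {d : Fin 2 →₀ ℕ | d.degree = N} = 
    ((Finset.HasAntidiagonal.antidiagonal N).map expEquiv.toEmbedding : Finset (Fin 2 →₀ ℕ)) := by
  ext d
  obtain ⟨ab, rfl⟩ := expEquiv.surjective d
  simp [expEquiv_degree]

lemma set_P (N : ℕ) : {d : Fin 2 →₀ ℕ | d.degree < N} = 
    (((Finset.range N).biUnion Finset.HasAntidiagonal.antidiagonal).map expEquiv.toEmbedding : Finset (Fin 2 →₀ ℕ)) := by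
  ext d
  obtain ⟨ab, rfl⟩ := expEquiv.surjective d
  simp [expEquiv_degree]

lemma card_P (N : ℕ) : 2 * ((Finset.range N).biUnion (Finset.HasAntidiagonal.antidiagonal (A := ℕ))).card = N * (N + 1) := by
  rw [Finset.card_biUnion]
  · simp only [Finset.Nat.card_antidiagonal]
    induction N with
    | zero => simp
    | succ n ih => rw [Finset.sum_range_succ, mul_add, ih]; ring
  · intro i _ j _ hij
    rw [Function.onFun, Finset.disjoint_left]
    intro ab h1 h2
    rw [Finset.HasAntidiagonal.mem_antidiagonal] at h1 h2
    omega

lemma finite_restrict (s : Finset (Fin 2 →₀ ℕ)) : 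
    Module.Finite k (restrictSupport k (s : Set (Fin 2 →₀ ℕ))) :=
  Module.Finite.of_basis (basisRestrictSupport k (s : Set (Fin 2 →₀ ℕ)))
lemma finrank_restrict (s : Finset (Fin 2 →₀ ℕ)) : 
    Module.finrank k (restrictSupport k (s : Set (Fin 2 →₀ ℕ))) = s.card := by
  rw [Module.finrank_eq_card_basis (basisRestrictSupport k (s : Set (Fin 2 →₀ ℕ)))]
  simp

instance (N : ℕ) : Module.Finite k (PN k N) := by
  rw [PN, set_P]; exact finite_restrict _
instance (N : ℕ) : Module.Finite k (TN k N) := by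
  rw [TN, set_T]; exact finite_restrict _
lemma finrank_PN (N : ℕ) : 2 * Module.finrank k (PN k N) = N * (N + 1) := by
  rw [PN, set_P, finrank_restrict, Finset.card_map, card_P]
lemma finrank_TN (N : ℕ) : Module.finrank k (TN k N) = N + 1 := by
  rw [TN, set_T, finrank_restrict, Finset.card_map, Finset.Nat.card_antidiagonal]

end
end APN
end

section
open MvPolynomial

namespace APN

section
variable {k : Type*} [Field k]

lemma hc_add (i : ℕ) (a b : MvPolynomial (Fin 2) k) : hc i (a + b) = hc i a + hc i b := map_add _ _ _
lemma hc_sub (i : ℕ) (a b : MvPolynomial (Fin 2) k) : hc i (a - b) = hc i a - hc i b := map_sub _ _ _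
lemma hc_zero (a : MvPolynomial (Fin 2) k) : hc 0 a = C (coeff 0 a) := homogeneousComponent_zero a

lemma syzygy {p q α β : MvPolynomial (Fin 2) k} (hrel : IsRelPrime p q) (hq : q ≠ 0)
    (h : α * p + β * q = 0) : ∃ γ, α = γ * q ∧ β = -(γ * p) := by
  have h1 : q ∣ α * p := ⟨-β, by linear_combination h⟩
  have h2 : q ∣ α := hrel.symm.dvd_of_dvd_mul_right h1
  obtain ⟨γ, rfl⟩ := h2
  refine ⟨γ, mul_comm _ _, ?_⟩
  have : q * (β + γ * p) = 0 := by linear_combination h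
  rcases mul_eq_zero.1 this with h | h
  · exact absurd h hq
  · linear_combination h

lemma gl_descend {m n : ℕ} {u v : MvPolynomial (Fin 2) k} (hu : LtDeg (m+1) u) (hv : LtDeg (n+1) v)
    (hq : hc n v ≠ 0) (hrel : IsRelPrime (hc m u) (hc n v)) (D : ℕ) : 
    ∀ α β, LtDeg (n + D) α → LtDeg (m + D) β → LtDeg (m + n) (α * u + β * v) → 
      ∃ α' β', LtDeg n α' ∧ LtDeg m β' ∧ α * u + β * v = α' * u + β' * v := by
  induction D with
  | zero => intro α β h1 h2 _; exact ⟨α, β, h1, h2, rfl⟩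
  | succ D ih =>
    intro α β h1 h2 h3
    have e1 := LtDeg.hc_mul (i := D + n) (m := m) (h1.mono (by omega)) hu
    have e2 := LtDeg.hc_mul (i := D + m) (m := n) (h2.mono (by omega)) hv
    have e3 : hc (D + n + m) (α * u + β * v) = 0 := h3.hc_eq_zero (by omega)
    rw [hc_add, e1, show D + n + m = D + m + n by ring, e2] at e3
    obtain ⟨γ, g1, g2⟩ := syzygy hrel hq e3
    have g3 := hom_cofactor (hc_hc n v) g1
    have g4 : hc (D + m) β = - (hc D γ * hc m u) := by
      rw [g3] at e3
      have : hc n v * (hc (D + m) β + hc D γ * hc m u) = 0 := by linear_combination e3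
      rcases mul_eq_zero.1 this with h | h
      · exact absurd h hq
      · linear_combination h
    have a1 : LtDeg (D + n) (α - hc D γ * v) := by
      apply LtDeg.pred
      · refine LtDeg.sub (h1.mono (by omega)) ?_
        exact ((ltDeg_hc D γ).mul hv).mono (by omega)
      · rw [hc_sub, LtDeg.hc_mul (ltDeg_hc D γ) hv, hc_hc, g3, sub_self]
    have a2 : LtDeg (D + m) (β + hc D γ * u) := by
      apply LtDeg.pred
      · refine LtDeg.add (h2.mono (by omega)) ?_
        exact ((ltDeg_hc D γ).mul hu).mono (by omega)
      · rw [hc_add, LtDeg.hc_mul (ltDeg_hc D γ) hu, hc_hc, g4, neg_add_cancel]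
    have e : α * u + β * v = (α - hc D γ * v) * u + (β + hc D γ * u) * v := by ring
    rw [e] at h3 ⊢
    exact ih _ _ (a1.mono (by omega)) (a2.mono (by omega)) h3

/-- linear combination map -/
noncomputable def lam (m n : ℕ) (u v : MvPolynomial (Fin 2) k) : (PN k n × PN k m) →ₗ[k] MvPolynomial (Fin 2) k :=
  (LinearMap.mulRight k u).comp ((PN k n).subtype.comp (LinearMap.fst k _ _)) + 
  (LinearMap.mulRight k v).comp ((PN k m).subtype.comp (LinearMap.snd k _ _))

lemma lam_apply (m n : ℕ) (u v : MvPolynomial (Fin 2) k) (x : PN k n × PN k m) : 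
    lam m n u v x = x.1.1 * u + x.2.1 * v := rfl

lemma gl_bound {m n : ℕ} {u v : MvPolynomial (Fin 2) k} (hu : LtDeg (m+1) u) (hv : LtDeg (n+1) v)
    (hq : hc n v ≠ 0) (hrel : IsRelPrime (hc m u) (hc n v)) {V : Type*} [AddCommGroup V] [Module k V]
    [Module.Finite k V] (φ : MvPolynomial (Fin 2) k →ₗ[k] V) 
    (hφ : ∀ w, φ w = 0 → w ∈ Ideal.span {u, v}) : m * n ≤ Module.finrank k V := by
  let ψ := φ.comp (PN k (m+n)).subtype
  have h1 := LinearMap.finrank_range_add_finrank_ker ψ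
  have h2 : Module.finrank k (LinearMap.range ψ) ≤ Module.finrank k V := Submodule.finrank_le _
  have h3 : Module.finrank k (LinearMap.ker ψ) ≤ Module.finrank k (LinearMap.range (lam m n u v)) := by
    rw [← Submodule.finrank_map_subtype_eq (PN k (m+n)) (LinearMap.ker ψ)]
    apply Submodule.finrank_mono
    rintro w hw
    obtain ⟨⟨w, hwP⟩, hw, rfl⟩ := hw
    have hw0 : φ w = 0 := hw
    obtain ⟨α, β, hab⟩ := Ideal.mem_span_pair.1 (hφ w hw0)
    obtain ⟨N1, hN1⟩ := exists_ltDeg α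
    obtain ⟨N2, hN2⟩ := exists_ltDeg β
    obtain ⟨α', β', ha, hb, e⟩ := gl_descend hu hv hq hrel (N1 + N2) α β (hN1.mono (by omega)) 
      (hN2.mono (by omega)) (by rw [hab]; exact mem_PN.1 hwP)
    refine ⟨(⟨α', mem_PN.2 ha⟩, ⟨β', mem_PN.2 hb⟩), ?_⟩
    rw [lam_apply, ← e, hab]
    rfl
  have h4 := LinearMap.finrank_range_le (lam m n u v)
  rw [Module.finrank_prod] at h4
  have d1 := finrank_PN (k := k) (m + n)
  have d2 := finrank_PN (k := k) m
  have d3 := finrank_PN (k := k) n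
  nlinarith

/-- truncation -/
noncomputable def trunc (k : Type*) [Field k] (N : ℕ) : MvPolynomial (Fin 2) k →ₗ[k] MvPolynomial (Fin 2) k :=
  ∑ i ∈ Finset.range N, homogeneousComponent i

lemma coeff_trunc (N : ℕ) (p : MvPolynomial (Fin 2) k) (d : Fin 2 →₀ ℕ) : 
    coeff d (trunc k N p) = if d.degree < N then coeff d p else 0 := by
  classical
  rw [trunc, LinearMap.sum_apply, coeff_sum]
  simp only [coeff_homogeneousComponent]
  simp

lemma trunc_lt (N : ℕ) (p : MvPolynomial (Fin 2) k) : LtDeg N (trunc k N p) := by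
  intro d hd
  rw [coeff_trunc, if_neg (by omega)]

lemma trunc_ord (N : ℕ) (p : MvPolynomial (Fin 2) k) : GeOrd N (p - trunc k N p) := by
  intro d hd
  rw [coeff_sub, coeff_trunc, if_pos hd, sub_self]

lemma ll_inj {m n : ℕ} {u v : MvPolynomial (Fin 2) k} (hu : GeOrd m u) (hv : GeOrd n v)
    (hp : hc m u ≠ 0) (hq : hc n v ≠ 0) (hrel : IsRelPrime (hc m u) (hc n v)) 
    {α β : MvPolynomial (Fin 2) k} (hα : LtDeg n α) (hβ : LtDeg m β) 
    (h : GeOrd (m + n) (α * u + β * v)) (D : ℕ) (hD : D ≤ m + n) : 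
    GeOrd (D - m) α ∧ GeOrd (D - n) β := by
  induction D with
  | zero => exact ⟨(GeOrd.zero _).mono (by omega), (GeOrd.zero _).mono (by omega)⟩
  | succ D ih =>
    obtain ⟨i1, i2⟩ := ih (by omega)
    have e3 : hc D (α * u + β * v) = 0 := h.hc_eq_zero (by omega)
    rw [hc_add] at e3
    by_cases c1 : m ≤ D
    · have e1 := i1.hc_mul hu
      rw [show D - m + m = D by omega] at e1
      rw [e1] at e3
      by_cases c2 : n ≤ D
      · have e2 := i2.hc_mul hv
        rw [show D - n + n = D by omega] at e2
        rw [e2] at e3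
        obtain ⟨γ, g1, g2⟩ := syzygy hrel hq e3
        have z1 : hc (D - m) α = 0 := 
          eq_zero_of_dvd_hom (n := n) ((ltDeg_hc _ _).mono (by omega)) (geOrd_hc n v) ⟨γ, by rw [g1, mul_comm]⟩
        have z2 : hc (D - n) β = 0 := by
          rw [z1, zero_mul, zero_add] at e3
          exact (mul_eq_zero.1 e3).resolve_right hq
        exact ⟨(i1.succ z1).mono (by omega), (i2.succ z2).mono (by omega)⟩
      · rw [((GeOrd.zero β).mul hv).hc_eq_zero (by omega), add_zero] at e3
        have z1 := (mul_eq_zero.1 e3).resolve_right hp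
        exact ⟨(i1.succ z1).mono (by omega), (GeOrd.zero _).mono (by omega)⟩
    · by_cases c2 : n ≤ D
      · have e2 := i2.hc_mul hv
        rw [show D - n + n = D by omega] at e2
        rw [e2, ((GeOrd.zero α).mul hu).hc_eq_zero (by omega), zero_add] at e3
        have z2 := (mul_eq_zero.1 e3).resolve_right hq
        exact ⟨(GeOrd.zero _).mono (by omega), (i2.succ z2).mono (by omega)⟩
      · exact ⟨(GeOrd.zero _).mono (by omega), (GeOrd.zero _).mono (by omega)⟩

lemma ll_inj' {m n : ℕ} {u v : MvPolynomial (Fin 2) k} (hu : GeOrd m u) (hv : GeOrd n v)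
    (hp : hc m u ≠ 0) (hq : hc n v ≠ 0) (hrel : IsRelPrime (hc m u) (hc n v)) 
    {α β : MvPolynomial (Fin 2) k} (hα : LtDeg n α) (hβ : LtDeg m β) 
    (h : GeOrd (m + n) (α * u + β * v)) : α = 0 ∧ β = 0 := by
  obtain ⟨h1, h2⟩ := ll_inj hu hv hp hq hrel hα hβ h (m + n) le_rfl
  exact ⟨eq_zero_of_ord_deg hα (h1.mono (by omega)), eq_zero_of_ord_deg hβ (h2.mono (by omega))⟩

/-- local length bound -/
lemma ll_bound {m n : ℕ} {u v : MvPolynomial (Fin 2) k} (hu : GeOrd m u) (hv : GeOrd n v)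
    (hp : hc m u ≠ 0) (hq : hc n v ≠ 0) (hrel : IsRelPrime (hc m u) (hc n v)) 
    (I : Ideal (MvPolynomial (Fin 2) k)) (huI : u ∈ I) (hvI : v ∈ I) :
    Module.Finite k (MvPolynomial (Fin 2) k ⧸ (I ⊔ idealOfVars (Fin 2) k ^ (m + n))) ∧ 
    Module.finrank k (MvPolynomial (Fin 2) k ⧸ (I ⊔ idealOfVars (Fin 2) k ^ (m + n))) ≤ m * n := by
  set J := I ⊔ idealOfVars (Fin 2) k ^ (m + n) with hJ
  let ψ : PN k (m+n) →ₗ[k] (MvPolynomial (Fin 2) k ⧸ J) := (Ideal.Quotient.mkₐ k J).toLinearMap.comp (PN k (m+n)).subtype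
  have hψ : ∀ w, ψ w = Ideal.Quotient.mk J w.1 := fun w => rfl
  have hsurj : Function.Surjective ψ := by
    intro y
    obtain ⟨p, rfl⟩ := Ideal.Quotient.mk_surjective y
    refine ⟨⟨trunc k (m+n) p, mem_PN.2 (trunc_lt _ _)⟩, ?_⟩
    rw [hψ, eq_comm, Ideal.Quotient.eq]
    exact Ideal.mem_sup_right ((mem_pow_iff _ _).2 (trunc_ord _ _))
  have hfin : Module.Finite k (MvPolynomial (Fin 2) k ⧸ J) := Module.Finite.of_surjective ψ hsurj
  refine ⟨hfin, ?_⟩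
  have h1 := LinearMap.finrank_range_add_finrank_ker ψ
  rw [LinearMap.range_eq_top.2 hsurj, finrank_top] at h1
  let χ : (PN k n × PN k m) →ₗ[k] PN k (m+n) := 
    ((trunc k (m+n)).comp (lam m n u v)).codRestrict _ (fun x => mem_PN.2 (trunc_lt _ _))
  have hχ : ∀ x, (χ x).1 = trunc k (m+n) (lam m n u v x) := fun x => rfl
  have hχker : ∀ x, χ x ∈ LinearMap.ker ψ := by
    intro x
    rw [LinearMap.mem_ker, hψ, Ideal.Quotient.eq_zero_iff_mem, hχ]
    have e : trunc k (m+n) (lam m n u v x) = lam m n u v x - (lam m n u v x - trunc k (m+n) (lam m n u v x)) := by ring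
    rw [e]
    refine J.sub_mem ?_ (Ideal.mem_sup_right ((mem_pow_iff _ _).2 (trunc_ord _ _)))
    rw [lam_apply]
    exact Ideal.mem_sup_left (I.add_mem (I.mul_mem_left _ huI) (I.mul_mem_left _ hvI))
  have hχinj : Function.Injective (χ.codRestrict (LinearMap.ker ψ) hχker) := by
    refine (injective_iff_map_eq_zero _).2 ?_
    intro x hx
    have hx' : trunc k (m+n) (lam m n u v x) = 0 := by
      have := congrArg (fun z => ((z : LinearMap.ker ψ) : PN k (m+n)).1) hx
      exact this
    have ho := trunc_ord (m+n) (lam m n u v x)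
    rw [hx', sub_zero, lam_apply] at ho
    obtain ⟨z1, z2⟩ := ll_inj' hu hv hp hq hrel (mem_PN.1 x.1.2) (mem_PN.1 x.2.2) ho
    exact Prod.ext (Subtype.ext z1) (Subtype.ext z2)
  have h4 := LinearMap.finrank_le_finrank_of_injective hχinj
  rw [Module.finrank_prod] at h4
  have d1 := finrank_PN (k := k) (m + n)
  have d2 := finrank_PN (k := k) m
  have d3 := finrank_PN (k := k) n
  nlinarith

lemma ll_step {m n : ℕ} {u v : MvPolynomial (Fin 2) k} (hu : GeOrd (m+1) u) (hv : GeOrd (n+1) v)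
    (hp : hc (m+1) u ≠ 0) (hq : hc (n+1) v ≠ 0) (hrel : IsRelPrime (hc (m+1) u) (hc (n+1) v)) 
    (I : Ideal (MvPolynomial (Fin 2) k)) (huI : u ∈ I) (hvI : v ∈ I) : 
    idealOfVars (Fin 2) k ^ (m + n + 1) ≤ I ⊔ idealOfVars (Fin 2) k ^ (m + n + 2) := by
  set p := hc (m+1) u
  set q := hc (n+1) v
  let Φ : (TN k n × TN k m) →ₗ[k] MvPolynomial (Fin 2) k := 
    (LinearMap.mulRight k p).comp ((TN k n).subtype.comp (LinearMap.fst k _ _)) + 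
    (LinearMap.mulRight k q).comp ((TN k m).subtype.comp (LinearMap.snd k _ _))
  have hΦ : ∀ x, Φ x = x.1.1 * p + x.2.1 * q := fun x => rfl
  have hmem : ∀ x, Φ x ∈ TN k (m + n + 1) := by
    intro x
    have e1 := GeOrd.hc_mul (α := hc n x.1.1) (u := hc (m+1) u) (geOrd_hc _ _) (geOrd_hc _ _)
    have e2 := GeOrd.hc_mul (α := hc m x.2.1) (u := hc (n+1) v) (geOrd_hc _ _) (geOrd_hc _ _)
    rw [hc_hc, hc_hc, mem_TN.1 x.1.2] at e1
    rw [hc_hc, hc_hc, mem_TN.1 x.2.2] at e2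
    rw [mem_TN, hΦ]
    rw [show n + (m + 1) = m + n + 1 by ring] at e1
    rw [show m + (n + 1) = m + n + 1 by ring] at e2
    rw [hc_add, e1, e2]
  have hinj : Function.Injective (Φ.codRestrict _ hmem) := by
    rw [← LinearMap.ker_eq_bot, LinearMap.ker_eq_bot']
    intro x hx
    have hx' : x.1.1 * p + x.2.1 * q = 0 := congrArg Subtype.val hx
    have l1 : LtDeg (n+1) x.1.1 := by rw [← mem_TN.1 x.1.2]; exact ltDeg_hc _ _
    obtain ⟨γ, g1, g2⟩ := syzygy hrel hq hx'
    have z1 : x.1.1 = 0 := eq_zero_of_dvd_hom l1 (geOrd_hc (n+1) v) ⟨γ, by rw [g1, mul_comm]⟩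
    have z2 : x.2.1 = 0 := by
      rw [z1, zero_mul, zero_add] at hx'
      exact (mul_eq_zero.1 hx').resolve_right hq
    exact Prod.ext (Subtype.ext z1) (Subtype.ext z2)
  have hsurj : Function.Surjective (Φ.codRestrict _ hmem) := by
    rw [← LinearMap.injective_iff_surjective_of_finrank_eq_finrank]
    · exact hinj
    · rw [Module.finrank_prod, finrank_TN, finrank_TN, finrank_TN]; ring
  intro w hw
  rw [mem_pow_iff] at hw
  obtain ⟨x, hx⟩ := hsurj ⟨hc (m+n+1) w, mem_TN.2 (hc_hc _ _)⟩
  have hx' : x.1.1 * p + x.2.1 * q = hc (m+n+1) w := congrArg Subtype.val hx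
  have o1 : GeOrd n x.1.1 := by rw [← mem_TN.1 x.1.2]; exact geOrd_hc _ _
  have o2 : GeOrd m x.2.1 := by rw [← mem_TN.1 x.2.2]; exact geOrd_hc _ _
  have e : w = (x.1.1 * u + x.2.1 * v) + (w - (x.1.1 * u + x.2.1 * v)) := by ring
  rw [e]
  refine add_mem (Ideal.mem_sup_left (I.add_mem (I.mul_mem_left _ huI) (I.mul_mem_left _ hvI)))
    (Ideal.mem_sup_right ((mem_pow_iff _ _).2 ?_))
  have a1 := o1.mul hu
  have a2 := o2.mul hv
  apply GeOrd.succ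
  · exact hw.sub ((a1.mono (by omega)).add (a2.mono (by omega)))
  · have e1 := o1.hc_mul hu
    have e2 := o2.hc_mul hv
    rw [show n + (m + 1) = m + n + 1 by ring, mem_TN.1 x.1.2] at e1
    rw [show m + (n + 1) = m + n + 1 by ring, mem_TN.1 x.2.2] at e2
    rw [hc_sub, hc_add, e1, e2, hx', sub_self]

lemma ll_step0 {u : MvPolynomial (Fin 2) k} (hp : hc 0 u ≠ 0)
    (I : Ideal (MvPolynomial (Fin 2) k)) (huI : u ∈ I) : 
    idealOfVars (Fin 2) k ^ 0 ≤ I ⊔ idealOfVars (Fin 2) k ^ 1 := by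
  intro w _
  rw [hc_zero] at hp
  have hc0 : coeff 0 u ≠ 0 := fun h => hp (by rw [h, C_0])
  set c := coeff 0 u
  have e : w = (C c⁻¹ * w) * u + (w - (C c⁻¹ * w) * u) := by ring
  rw [e]
  refine add_mem (Ideal.mem_sup_left (I.mul_mem_left _ huI)) (Ideal.mem_sup_right ((mem_pow_iff _ _).2 ?_))
  intro d hd
  have : d = 0 := by
    rw [← Finsupp.degree_eq_zero_iff]; omega
  subst this
  have h1 : ∀ p : MvPolynomial (Fin 2) k, coeff 0 p = constantCoeff p := fun p => rfl
  rw [h1, map_sub, map_mul, map_mul, constantCoeff_C, ← h1, ← h1]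
  field_simp
  ring

lemma ll_stable {m n : ℕ} {u v : MvPolynomial (Fin 2) k} (hu : GeOrd m u) (hv : GeOrd n v)
    (hp : hc m u ≠ 0) (hq : hc n v ≠ 0) (hrel : IsRelPrime (hc m u) (hc n v)) 
    (I : Ideal (MvPolynomial (Fin 2) k)) (huI : u ∈ I) (hvI : v ∈ I) (N : ℕ) : 
    idealOfVars (Fin 2) k ^ (m + n) ≤ I ⊔ idealOfVars (Fin 2) k ^ N := by
  obtain ⟨N1, hN1, hs⟩ : ∃ N1 ≤ m + n, idealOfVars (Fin 2) k ^ N1 ≤ I ⊔ idealOfVars (Fin 2) k ^ (N1 + 1) := by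
    rcases m with _ | m
    · exact ⟨0, by omega, ll_step0 hp I huI⟩
    · rcases n with _ | n
      · exact ⟨0, by omega, ll_step0 hq I hvI⟩
      · exact ⟨m + n + 1, by omega, ll_step hu hv hp hq hrel I huI hvI⟩
  have key : ∀ j, idealOfVars (Fin 2) k ^ N1 ≤ I ⊔ idealOfVars (Fin 2) k ^ (N1 + j) := by
    generalize idealOfVars (Fin 2) k = M at hs
    intro j
    induction j with
    | zero => exact le_sup_right
    | succ j ih =>
      have h2 : M ^ (N1 + j) ≤ I ⊔ M ^ (N1 + (j + 1)) := by
        have h3 := Ideal.mul_mono_left (K := M ^ j) hs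
        rw [Ideal.sup_mul, ← pow_add, ← pow_add, show N1 + 1 + j = N1 + (j + 1) by ring] at h3
        exact h3.trans (sup_le_sup_right Ideal.mul_le_left _)
      exact ih.trans (sup_le le_sup_left h2)
  refine (Ideal.pow_le_pow_right hN1).trans ((key N).trans (sup_le_sup_left (Ideal.pow_le_pow_right (by omega)) _))

end
end APN
end

section
open MvPolynomial

namespace APN

section
variable {k : Type*} [Field k]

/-- translation by `P` -/
noncomputable def tau (P : Fin 2 → k) : MvPolynomial (Fin 2) k ≃ₐ[k] MvPolynomial (Fin 2) k :=
  AlgEquiv.ofAlgHom (aeval (fun i => X i + C (P i))) (aeval (fun i => X i - C (P i)))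
    (by ext i; simp) (by ext i; simp)

lemma tau_X (P : Fin 2 → k) (i : Fin 2) : tau P (X i) = X i + C (P i) := by simp [tau]
lemma tau_C (P : Fin 2 → k) (c : k) : tau P (C c) = C c := by simp [tau]
lemma eval_zero_tau (P : Fin 2 → k) (p : MvPolynomial (Fin 2) k) : eval 0 (tau P p) = eval P p := by
  have : (aeval (0 : Fin 2 → k)).comp (tau P).toAlgHom = aeval P := by
    ext i; simp [tau_X]
  simpa [aeval_eq_eval] using congrArg (fun f => f p) this

/-- local intersection bound -/
def LocBd (u v : MvPolynomial (Fin 2) k) (P : Fin 2 → k) (b : ℕ) : Prop :=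
  ∃ u' ∈ Ideal.span {u, v}, ∃ v' ∈ Ideal.span {u, v}, ∃ m n : ℕ, GeOrd m (tau P u') ∧ GeOrd n (tau P v') ∧
    hc m (tau P u') ≠ 0 ∧ hc n (tau P v') ≠ 0 ∧ IsRelPrime (hc m (tau P u')) (hc n (tau P v')) ∧ m * n ≤ b

lemma coeff_zero_eq_eval (p : MvPolynomial (Fin 2) k) : coeff 0 p = eval 0 p := by
  rw [eval_zero]; rfl

lemma geOrd_one_iff (p : MvPolynomial (Fin 2) k) : GeOrd 1 p ↔ eval 0 p = 0 := by
  rw [← coeff_zero_eq_eval]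
  constructor
  · intro h; exact h 0 (by simp)
  · intro h d hd
    have : d = 0 := by
      rw [← Finsupp.degree_eq_zero_iff]; omega
    rw [this, h]

theorem bezout [IsAlgClosed k] {m n : ℕ} {u v : MvPolynomial (Fin 2) k} (hu : LtDeg (m+1) u) (hv : LtDeg (n+1) v)
    (hq : hc n v ≠ 0) (hrel : IsRelPrime (hc m u) (hc n v)) (Z : Finset (Fin 2 → k)) (b : (Fin 2 → k) → ℕ)
    (hZ : ∀ P, eval P u = 0 → eval P v = 0 → P ∈ Z) (hb : ∀ P ∈ Z, LocBd u v P (b P)) : 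
    m * n ≤ ∑ P ∈ Z, b P := by
  classical
  set I := Ideal.span {u, v} with hI
  set M := idealOfVars (Fin 2) k with hM
  have huI : u ∈ I := Ideal.subset_span (by simp)
  have hvI : v ∈ I := Ideal.subset_span (by simp)
  have hloc : ∀ P : Z, ∃ J : Ideal (MvPolynomial (Fin 2) k), Module.Finite k (MvPolynomial (Fin 2) k ⧸ J) ∧ 
      Module.finrank k (MvPolynomial (Fin 2) k ⧸ J) ≤ b P ∧ ∀ N, J ≤ I.map (tau P.1) ⊔ M ^ N := by
    intro P
    obtain ⟨u', hu', v', hv', m', n', g1, g2, z1, z2, r, hle⟩ := hb P P.2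
    have q1 := Ideal.mem_map_of_mem (tau P.1) hu'
    have q2 := Ideal.mem_map_of_mem (tau P.1) hv'
    obtain ⟨f1, f2⟩ := ll_bound g1 g2 z1 z2 r (I.map (tau P.1)) q1 q2
    exact ⟨_, f1, f2.trans hle, fun N => sup_le le_sup_left (ll_stable g1 g2 z1 z2 r _ q1 q2 N)⟩
  choose J hJ1 hJ2 hJ3 using hloc
  let φ : MvPolynomial (Fin 2) k →ₗ[k] ((P : Z) → (MvPolynomial (Fin 2) k ⧸ J P)) := 
    LinearMap.pi (fun P => (Ideal.Quotient.mkₐ k (J P)).toLinearMap.comp (tau P.1).toLinearMap)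
  have hφ : ∀ w, φ w = 0 → w ∈ I := by
    intro h hh
    have hmem : ∀ P : Z, tau P.1 h ∈ J P := by
      intro P
      have := congrFun hh P
      exact Ideal.Quotient.eq_zero_iff_mem.1 this
    by_contra hnot
    let K : Ideal (MvPolynomial (Fin 2) k) := Submodule.comap (LinearMap.mulRight (MvPolynomial (Fin 2) k) h) I
    have hK : ∀ r, r ∈ K ↔ r * h ∈ I := fun r => Iff.rfl
    have hKne : K ≠ ⊤ := by
      rw [Ideal.ne_top_iff_one, hK, one_mul]; exact hnot
    obtain ⟨m0, hm0, hKm⟩ := Ideal.exists_le_maximal K hKne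
    obtain ⟨P, hP⟩ := (isMaximal_iff_eq_vanishingIdeal_singleton).1 hm0
    have hKe : ∀ r ∈ K, eval P r = 0 := by
      intro r hr
      have := hKm hr
      rw [hP] at this
      simpa [aeval_eq_eval] using mem_vanishingIdeal_singleton_iff P r |>.1 this
    have hPZ : P ∈ Z := hZ P (hKe u ((hK u).2 (I.mul_mem_right _ huI))) (hKe v ((hK v).2 (I.mul_mem_right _ hvI)))
    set I' := I.map (tau P) with hI'
    have h1 : (Ideal.Quotient.mk I' (tau P h)) ∈ (⨅ i : ℕ, M ^ i • (⊤ : Submodule (MvPolynomial (Fin 2) k) (MvPolynomial (Fin 2) k ⧸ I'))) := by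
      rw [Submodule.mem_iInf]
      intro i
      have := hJ3 ⟨P, hPZ⟩ i (hmem ⟨P, hPZ⟩)
      obtain ⟨a, ha, c, hc', e⟩ := Submodule.mem_sup.1 this
      have e' : tau P h = a + c := e.symm
      rw [e', map_add, Ideal.Quotient.eq_zero_iff_mem.2 ha, zero_add]
      have : Ideal.Quotient.mk I' c = c • (Ideal.Quotient.mk I' 1) := by
        conv_lhs => rw [← mul_one c]
        rfl
      rw [this]
      exact Submodule.smul_mem_smul hc' trivial
    obtain ⟨⟨r, hr⟩, hre⟩ := (Ideal.mem_iInf_smul_pow_eq_bot_iff M _).1 h1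
    have hre' : r * tau P h - tau P h ∈ I' := by
      rw [← Ideal.Quotient.eq, map_mul]
      exact hre
    have h2 : (tau P).symm (r - 1) * h ∈ I := by
      have h3 : tau P ((tau P).symm (r - 1) * h) ∈ I.map (tau P) := by
        rw [map_mul, AlgEquiv.apply_symm_apply, sub_mul, one_mul]; exact hre'
      obtain ⟨x, hx, hxe⟩ := (Ideal.mem_map_of_equiv (tau P) _).1 h3
      rwa [(tau P).injective hxe] at hx
    have h4 := hKe _ ((hK _).2 h2)
    rw [← eval_zero_tau, AlgEquiv.apply_symm_apply, map_sub, map_one] at h4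
    have h5 : eval 0 r = 0 := (geOrd_one_iff r).1 ((mem_pow_iff 1 r).1 (by rw [pow_one]; exact hr))
    rw [h5, zero_sub, neg_eq_zero] at h4
    exact one_ne_zero h4
  have := gl_bound hu hv hq hrel φ hφ
  refine this.trans ?_
  rw [Module.finrank_pi_fintype, ← Finset.sum_coe_sort Z]
  exact Finset.sum_le_sum fun P _ => hJ2 P

end
end APN
end

section
open MvPolynomial

namespace APN

section
variable {k : Type*} [Field k]

lemma hc_mul_left {i m : ℕ} {α u : MvPolynomial (Fin 2) k} (h : hc i α = α) : 
    hc (i + m) (α * u) = α * hc m u := by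
  rw [hc_mul_aux, h]
  intro a b hab hne
  have : coeff a α = if a.degree = i then coeff a α else 0 := by
    conv_lhs => rw [← h, coeff_homogeneousComponent]
  rw [this]
  split_ifs
  · omega
  · simp

lemma hc_of_hom {n : ℕ} {p : MvPolynomial (Fin 2) k} (h : p.IsHomogeneous n) : hc n p = p := by
  have := homogeneousComponent_of_mem (m := n) h
  rwa [if_pos rfl] at this
lemma geOrd_of_hom {n : ℕ} {p : MvPolynomial (Fin 2) k} (h : p.IsHomogeneous n) : GeOrd n p := by
  rw [← hc_of_hom h]; exact geOrd_hc _ _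
lemma ltDeg_of_hom {n : ℕ} {p : MvPolynomial (Fin 2) k} (h : p.IsHomogeneous n) : LtDeg (n+1) p := by
  rw [← hc_of_hom h]; exact ltDeg_hc _ _
lemma hc_ne_of_hom {n m : ℕ} {p : MvPolynomial (Fin 2) k} (h : p.IsHomogeneous n) (hm : m ≠ n) : hc m p = 0 := by
  rw [← hc_of_hom h]; exact hc_hc_ne hm _
lemma hom_hc (n : ℕ) (p : MvPolynomial (Fin 2) k) : (hc n p).IsHomogeneous n := 
  homogeneousComponent_isHomogeneous n p

lemma hc_second_top {i m : ℕ} {α u : MvPolynomial (Fin 2) k} (h1 : LtDeg (i+2) α) (h2 : LtDeg (m+2) u) :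
    hc (i + m + 1) (α * u) = hc (i+1) α * hc m u + hc i α * hc (m+1) u := by
  have e : α * u = hc (i+1) α * u + (α - hc (i+1) α) * u := by ring
  have l : LtDeg (i+1) (α - hc (i+1) α) := by
    apply LtDeg.pred (h1.sub (ltDeg_hc _ _))
    rw [hc_sub, hc_hc, sub_self]
  rw [e, hc_add, show i + m + 1 = (i + 1) + m by ring, hc_mul_left (hc_hc _ _), 
    show i + 1 + m = i + (m + 1) by ring, LtDeg.hc_mul l h2, hc_sub, hc_hc_ne (by omega), sub_zero]

lemma hc_second_bot {i m : ℕ} {α u : MvPolynomial (Fin 2) k} (h1 : GeOrd i α) (h2 : GeOrd m u) :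
    hc (i + m + 1) (α * u) = hc i α * hc (m+1) u + hc (i+1) α * hc m u := by
  have e : α * u = hc i α * u + (α - hc i α) * u := by ring
  have l : GeOrd (i+1) (α - hc i α) := by
    apply GeOrd.succ (h1.sub (geOrd_hc _ _))
    rw [hc_sub, hc_hc, sub_self]
  rw [e, hc_add, show i + m + 1 = i + (m + 1) by ring, hc_mul_left (hc_hc _ _), 
    show i + (m + 1) = (i + 1) + m by ring, GeOrd.hc_mul l h2, hc_sub, hc_hc_ne (by omega), sub_zero]

/-- order of vanishing -/
noncomputable def ordP (P : Fin 2 → k) (a : MvPolynomial (Fin 2) k) : ℕ := sInf {n | hc n (tau P a) ≠ 0}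

lemma exists_hc_ne {a : MvPolynomial (Fin 2) k} (ha : a ≠ 0) : ∃ n, hc n a ≠ 0 := by
  by_contra! h
  apply ha
  ext d
  have := congrArg (coeff d) (h d.degree)
  rw [coeff_homogeneousComponent, if_pos rfl] at this
  exact this

lemma tau_ne_zero (P : Fin 2 → k) {a : MvPolynomial (Fin 2) k} (ha : a ≠ 0) : tau P a ≠ 0 := by
  simpa using ha

lemma ordP_hc (P : Fin 2 → k) {a : MvPolynomial (Fin 2) k} (ha : a ≠ 0) : hc (ordP P a) (tau P a) ≠ 0 :=
  Nat.sInf_mem (s := {n | hc n (tau P a) ≠ 0}) (exists_hc_ne (tau_ne_zero P ha))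

lemma ordP_ge (P : Fin 2 → k) (a : MvPolynomial (Fin 2) k) : GeOrd (ordP P a) (tau P a) := by
  intro d hd
  have h := Nat.notMem_of_lt_sInf (s := {n | hc n (tau P a) ≠ 0}) hd
  have h' : hc d.degree (tau P a) = 0 := by
    by_contra hne
    exact h hne
  have := congrArg (coeff d) h'
  rw [coeff_homogeneousComponent, if_pos rfl] at this
  exact this

lemma ordP_eq {P : Fin 2 → k} {a : MvPolynomial (Fin 2) k} {n : ℕ} (h1 : GeOrd n (tau P a)) 
    (h2 : hc n (tau P a) ≠ 0) : ordP P a = n := by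
  have ha : a ≠ 0 := by
    rintro rfl
    exact h2 (by rw [map_zero]; exact map_zero _)
  apply le_antisymm
  · exact Nat.sInf_le h2
  · by_contra hlt
    exact ordP_hc P ha (h1.hc_eq_zero (by omega))

lemma hc_ordP_mul (P : Fin 2 → k) {a b : MvPolynomial (Fin 2) k} :
    hc (ordP P a + ordP P b) (tau P (a * b)) = hc (ordP P a) (tau P a) * hc (ordP P b) (tau P b) := by
  rw [map_mul]; exact (ordP_ge P a).hc_mul (ordP_ge P b)

lemma ordP_mul (P : Fin 2 → k) {a b : MvPolynomial (Fin 2) k} (ha : a ≠ 0) (hb : b ≠ 0) : 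
    ordP P (a * b) = ordP P a + ordP P b := by
  apply ordP_eq
  · rw [map_mul]; exact (ordP_ge P a).mul (ordP_ge P b)
  · rw [hc_ordP_mul]; exact mul_ne_zero (ordP_hc P ha) (ordP_hc P hb)

lemma ordP_pos_iff (P : Fin 2 → k) {a : MvPolynomial (Fin 2) k} (ha : a ≠ 0) : 1 ≤ ordP P a ↔ eval P a = 0 := by
  rw [← eval_zero_tau, ← geOrd_one_iff]
  constructor
  · intro h; exact (ordP_ge P a).mono h
  · intro h
    by_contra hlt
    have h0 : ordP P a = 0 := by omega
    have := ordP_hc P ha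
    rw [h0] at this
    exact this (h.hc_eq_zero (by omega))

lemma top_data {a : MvPolynomial (Fin 2) k} (ha : a ≠ 0) : 
    LtDeg (a.totalDegree + 1) a ∧ hc a.totalDegree a ≠ 0 := by
  have h1 : LtDeg (a.totalDegree + 1) a := fun d hd => coeff_eq_zero_of_totalDegree_lt (by
    rw [← Finsupp.degree_apply]; omega)
  refine ⟨h1, fun h2 => ?_⟩
  obtain ⟨d, hd, hdeg⟩ := Finset.exists_mem_eq_sup a.support (support_nonempty.2 ha) (fun s => s.degree)
  have h3 := h1.pred h2
  refine mem_support_iff.1 hd (h3 d ?_)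
  rw [← hdeg]; exact le_rfl

lemma totalDegree_eq_of {a : MvPolynomial (Fin 2) k} {n : ℕ} (h1 : LtDeg (n+1) a) (h2 : hc n a ≠ 0) : 
    a.totalDegree = n := by
  have ha : a ≠ 0 := by
    rintro rfl
    exact h2 (map_zero _)
  obtain ⟨h3, h4⟩ := top_data ha
  by_contra hne
  rcases lt_or_gt_of_ne hne with h | h
  · exact h2 (h3.hc_eq_zero (by omega))
  · exact h4 (h1.hc_eq_zero (by omega))

lemma not_dvd_X01 {π : MvPolynomial (Fin 2) k} (hπ : Irreducible π) (h0 : π ∣ X 0) (h1 : π ∣ X 1) : False := by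
  have hX : Prime (X 0 : MvPolynomial (Fin 2) k) := MvPolynomial.X_prime
  have := (hπ.dvd_irreducible_iff_associated hX.irreducible).1 h0
  have h2 : (X 0 : MvPolynomial (Fin 2) k) ∣ X 1 := this.symm.dvd.trans h1
  rw [X_dvd_X] at h2
  simp at h2

lemma irreducible_linear {L : MvPolynomial (Fin 2) k} (h : L.IsHomogeneous 1) (h0 : L ≠ 0) : Irreducible L := by
  have hd : L.totalDegree = 1 := h.totalDegree h0
  have unit_of : ∀ a : MvPolynomial (Fin 2) k, a ≠ 0 → a.totalDegree = 0 → IsUnit a := by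
    intro a ha hd
    rw [totalDegree_eq_zero_iff_eq_C] at hd
    rw [hd] at ha ⊢
    have : coeff 0 a ≠ 0 := fun h => ha (by rw [h, C_0])
    exact (IsUnit.mk0 _ this).map C
  refine ⟨fun hu => ?_, fun a b hab => ?_⟩
  · obtain ⟨b, hb⟩ := hu.exists_right_inv
    have hb0 : b ≠ 0 := by rintro rfl; simp at hb
    have := totalDegree_mul_of_isDomain h0 hb0
    rw [hb, totalDegree_one] at this
    omega
  · have ha0 : a ≠ 0 := by rintro rfl; simp at hab; exact h0 hab
    have hb0 : b ≠ 0 := by rintro rfl; simp at hab; exact h0 hab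
    have := totalDegree_mul_of_isDomain ha0 hb0
    rw [← hab, hd] at this
    rcases Nat.eq_zero_or_pos a.totalDegree with h | h
    · exact Or.inl (unit_of a ha0 h)
    · exact Or.inr (unit_of b hb0 (by omega))

lemma hc_zero_unit {a : MvPolynomial (Fin 2) k} (h : hc 0 a ≠ 0) : IsUnit (hc 0 a) := by
  rw [hc_zero] at h ⊢
  have : coeff 0 a ≠ 0 := fun h' => h (by rw [h', C_0])
  exact (IsUnit.mk0 _ this).map C

lemma LocBd.symm {u v : MvPolynomial (Fin 2) k} {P : Fin 2 → k} {b : ℕ} (h : LocBd u v P b) : LocBd v u P b := by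
  rw [LocBd, Set.pair_comm]; exact h

lemma LocBd.mono {u v u' v' : MvPolynomial (Fin 2) k} {P : Fin 2 → k} {b b' : ℕ} (h : LocBd u v P b) 
    (h1 : u ∈ Ideal.span {u', v'}) (h2 : v ∈ Ideal.span {u', v'}) (h3 : b ≤ b') : LocBd u' v' P b' := by
  obtain ⟨x, hx, y, hy, m, n, g1, g2, z1, z2, r, hle⟩ := h
  have hs : Ideal.span {u, v} ≤ Ideal.span {u', v'} := by
    rw [Ideal.span_le]
    rintro z (rfl | rfl)
    · exact h1
    · exact h2
  exact ⟨x, hs hx, y, hs hy, m, n, g1, g2, z1, z2, r, hle.trans h3⟩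

lemma locBd_of {u v : MvPolynomial (Fin 2) k} {P : Fin 2 → k} (hu : u ≠ 0) (hv : v ≠ 0)
    (h : IsRelPrime (hc (ordP P u) (tau P u)) (hc (ordP P v) (tau P v))) : LocBd u v P (ordP P u * ordP P v) :=
  ⟨u, Ideal.subset_span (by simp), v, Ideal.subset_span (by simp), _, _, ordP_ge P u, ordP_ge P v, 
    ordP_hc P hu, ordP_hc P hv, h, le_rfl⟩

end
end APN
end

section
open MvPolynomial

namespace APN

section
variable {k : Type*} [Field k]

lemma odd_cast {R : Type*} [CommRing R] [CharP R 2] {t : ℕ} (h : Odd t) : (t : R) = 1 := by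
  obtain ⟨s, rfl⟩ := h
  push_cast
  rw [CharTwo.two_eq_zero]; ring

/-- the polynomial f -/
noncomputable def fS (k : Type*) [Field k] (t : ℕ) : MvPolynomial (Fin 2) k := 
  X 0 ^ t + X 1 ^ t + 1 + (X 0 + X 1 + 1) ^ t

lemma hom_U : (X 0 + X 1 : MvPolynomial (Fin 2) k).IsHomogeneous 1 := 
  (isHomogeneous_X k 0).add (isHomogeneous_X k 1)

lemma hom_pow {L : MvPolynomial (Fin 2) k} (h : L.IsHomogeneous 1) (n : ℕ) : (L ^ n).IsHomogeneous n := by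
  simpa using h.pow n

lemma hc_U1 (t m : ℕ) : hc m ((X 0 + X 1 + 1 : MvPolynomial (Fin 2) k) ^ t) = C (t.choose m : k) * (X 0 + X 1) ^ m := by
  classical
  rw [add_pow]
  have : ∀ j, hc m ((X 0 + X 1 : MvPolynomial (Fin 2) k) ^ j * 1 ^ (t - j) * (t.choose j : MvPolynomial (Fin 2) k)) =
      if j = m then C (t.choose m : k) * (X 0 + X 1) ^ m else 0 := by
    intro j
    have e : (X 0 + X 1 : MvPolynomial (Fin 2) k) ^ j * 1 ^ (t - j) * (t.choose j : MvPolynomial (Fin 2) k) = 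
      C (t.choose j : k) * (X 0 + X 1) ^ j := by
      rw [one_pow, mul_one, mul_comm]; simp
    have hh : (C (t.choose j : k) * (X 0 + X 1 : MvPolynomial (Fin 2) k) ^ j).IsHomogeneous j := 
      (hom_pow hom_U j).C_mul _
    rw [e]
    split_ifs with hj
    · subst hj; exact hc_of_hom hh
    · exact hc_ne_of_hom hh (Ne.symm hj)
  rw [hc, map_sum, Finset.sum_congr rfl (fun j _ => this j), Finset.sum_ite_eq']
  split_ifs with h
  · rfl
  · rw [Nat.choose_eq_zero_of_lt (by simpa using h)]; simp

lemma ltDeg_iff (N : ℕ) (p : MvPolynomial (Fin 2) k) : LtDeg N p ↔ ∀ m, N ≤ m → hc m p = 0 := by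
  refine ⟨fun h m hm => h.hc_eq_zero hm, fun h d hd => ?_⟩
  have := congrArg (coeff d) (h _ hd)
  rw [coeff_homogeneousComponent, if_pos rfl] at this
  exact this

lemma hc_fS (t m : ℕ) (hm : m ≠ 0) : hc m (fS k t) = 
    (if m = t then X 0 ^ t + X 1 ^ t else 0) + C (t.choose m : k) * (X 0 + X 1) ^ m := by
  rw [fS, hc_add, hc_add, hc_add, hc_U1, hc_ne_of_hom (isHomogeneous_one _ _) hm, add_zero]
  split_ifs with h
  · subst h
    rw [hc_of_hom (hom_pow (isHomogeneous_X k 0) m), hc_of_hom (hom_pow (isHomogeneous_X k 1) m)]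
  · rw [hc_ne_of_hom (hom_pow (isHomogeneous_X k 0) t) h, hc_ne_of_hom (hom_pow (isHomogeneous_X k 1) t) h, add_zero]

lemma fS_ltDeg (t : ℕ) : LtDeg (t+1) (fS k t) := by
  rw [ltDeg_iff]
  intro m hm
  rw [hc_fS t m (by omega), if_neg (by omega), Nat.choose_eq_zero_of_lt (by omega)]
  simp

lemma sq_dvd_pderiv {π F : MvPolynomial (Fin 2) k} (h : π * π ∣ F) (i : Fin 2) : π ∣ pderiv i F := by
  obtain ⟨c, rfl⟩ := h
  rw [Derivation.leibniz, Derivation.leibniz]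
  simp only [smul_eq_mul]
  exact ⟨π * pderiv i c + c * pderiv i π + c * pderiv i π, by ring⟩

lemma hc_fS_top {t : ℕ} (ht : t ≠ 0) : hc t (fS k t) = X 0 ^ t + X 1 ^ t + (X 0 + X 1) ^ t := by
  rw [hc_fS t t ht, if_pos rfl]; simp

variable [CharP k 2]

lemma hc_fS_top' {t : ℕ} (ht : 3 ≤ t) (hodd : Odd t) : hc (t - 1) (fS k t) = (X 0 + X 1) ^ (t-1) := by
  rw [hc_fS t (t-1) (by omega), if_neg (by omega), Nat.choose_symm_of_eq_add (by omega : t = (t - 1) + 1), 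
    Nat.choose_one_right, odd_cast hodd]
  simp

lemma top_sq {t : ℕ} (ht : 3 ≤ t) (hodd : Odd t) {π : MvPolynomial (Fin 2) k} (hπ : Irreducible π) 
    (h1 : π ∣ (X 0 + X 1) ^ (t-1)) (h2 : π * π ∣ X 0 ^ t + X 1 ^ t + (X 0 + X 1) ^ t) : False := by
  have h3 := sq_dvd_pderiv h2 1
  simp only [map_add, pderiv_pow, odd_cast hodd] at h3
  rw [pderiv_X_of_ne (by decide), pderiv_X_self] at h3
  have h3' : π ∣ X 1 ^ (t-1) + (X 0 + X 1) ^ (t-1) := by convert h3 using 1; ring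
  have hp := hπ.prime
  have h5 := hp.dvd_of_dvd_pow ((dvd_add_left h1).1 h3')
  have h6 := (dvd_add_left h5).1 (hp.dvd_of_dvd_pow h1)
  exact not_dvd_X01 hπ h6 h5

lemma fS_top_ne {t : ℕ} (ht : 3 ≤ t) (hodd : Odd t) : hc t (fS k t) ≠ 0 := by
  rw [hc_fS_top (by omega)]
  intro h
  have hU : (X 0 + X 1 : MvPolynomial (Fin 2) k) ≠ 0 := by
    intro h0
    have := congrArg (eval ![1, 0]) h0
    simp at this
  exact top_sq ht hodd (irreducible_linear hom_U hU) (dvd_pow_self _ (by omega)) (by rw [h]; exact dvd_zero _)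

lemma fS_ne {t : ℕ} (ht : 3 ≤ t) (hodd : Odd t) : fS k t ≠ 0 := by
  intro h
  apply fS_top_ne (k := k) ht hodd
  rw [h]; exact map_zero _

lemma fS_deg {t : ℕ} (ht : 3 ≤ t) (hodd : Odd t) : (fS k t).totalDegree = t := 
  totalDegree_eq_of (fS_ltDeg t) (fS_top_ne ht hodd)

lemma top_relPrime {t : ℕ} (ht : 3 ≤ t) (hodd : Odd t) {a b r : MvPolynomial (Fin 2) k} (h : fS k t = a * b * r) :
    IsRelPrime (hc a.totalDegree a) (hc b.totalDegree b) := by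
  have hne := fS_ne (k := k) ht hodd
  have ha : a ≠ 0 := by rintro rfl; simp at h; exact hne h
  have hb : b ≠ 0 := by rintro rfl; simp at h; exact hne h
  have hr : r ≠ 0 := by rintro rfl; simp at h; exact hne h
  have hbr : b * r ≠ 0 := mul_ne_zero hb hr
  obtain ⟨a1, a2⟩ := top_data ha
  obtain ⟨b1, b2⟩ := top_data hb
  obtain ⟨r1, r2⟩ := top_data hr
  obtain ⟨c1, c2⟩ := top_data hbr
  have d1 := totalDegree_mul_of_isDomain hb hr
  have d2 := totalDegree_mul_of_isDomain ha hbr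
  rw [← mul_assoc, ← h, fS_deg ht hodd] at d2
  have e1 : hc (b * r).totalDegree (b * r) = hc b.totalDegree b * hc r.totalDegree r := by
    rw [d1, LtDeg.hc_mul b1 r1]
  have e2 : hc t (fS k t) = hc a.totalDegree a * hc (b*r).totalDegree (b*r) := by
    rw [h, mul_assoc, d2, LtDeg.hc_mul a1 c1]
  apply WfDvdMonoid.isRelPrime_of_no_irreducible_factors (fun h => a2 h.1)
  intro π hπ h1 h2
  have h3 : π ∣ hc (b*r).totalDegree (b*r) := by rw [e1]; exact h2.mul_right _
  have pos : ∀ x : MvPolynomial (Fin 2) k, hc x.totalDegree x ≠ 0 → π ∣ hc x.totalDegree x → x.totalDegree ≠ 0 := by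
    intro x hx hd h0
    rw [h0] at hx hd
    exact hπ.not_isUnit (isUnit_of_dvd_unit hd (hc_zero_unit hx))
  obtain ⟨i, hi⟩ := Nat.exists_eq_succ_of_ne_zero (pos a a2 h1)
  obtain ⟨j, hj⟩ := Nat.exists_eq_succ_of_ne_zero (pos _ c2 h3)
  have e3 : hc (t-1) (fS k t) = hc (i+1) a * hc j (b*r) + hc i a * hc (j+1) (b*r) := by
    rw [show t - 1 = i + j + 1 by omega, h, mul_assoc]
    exact hc_second_top (a1.mono (by omega)) (c1.mono (by omega))
  rw [hi] at h1
  rw [hj] at h3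
  refine top_sq ht hodd hπ ?_ ?_
  · rw [← hc_fS_top' ht hodd, e3]
    exact dvd_add (h1.mul_right _) (h3.mul_left _)
  · rw [← hc_fS_top (by omega), e2, hi, hj]
    exact mul_dvd_mul h1 h3

/-- third coordinate -/
def gam (P : Fin 2 → k) : k := P 0 + P 1 + 1

/-- singular point condition -/
def InZ (ℓ : ℕ) (P : Fin 2 → k) : Prop := P 0 ^ ℓ = 1 ∧ P 1 ^ ℓ = 1 ∧ gam P ^ ℓ = 1

lemma pow_q_inj {i : ℕ} {x y : k} (h : x ^ (2^i) = y ^ (2^i)) : x = y := 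
  iterateFrobenius_inj k 2 i (by simpa [iterateFrobenius_def] using h)

lemma zero_mem_Z {t ℓ i : ℕ} (htq : t = 2^i * ℓ + 1) (ht : 3 ≤ t) (hodd : Odd t) {a b r : MvPolynomial (Fin 2) k} (h : fS k t = a * b * r)
    (P : Fin 2 → k) (ha : eval P a = 0) (hb : eval P b = 0) : InZ ℓ P := by
  have hd : ∀ j, eval P (pderiv j (fS k t)) = 0 := by
    intro j
    rw [h, Derivation.leibniz, Derivation.leibniz]
    simp [ha, hb]
  have h0 := hd 0
  have h1 := hd 1
  have h2 : eval P (fS k t) = 0 := by rw [h]; simp [ha]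
  rw [fS] at h0 h1 h2
  simp only [map_add, pderiv_pow, odd_cast hodd] at h0 h1
  have p01 : pderiv 0 (X 1 : MvPolynomial (Fin 2) k) = 0 := pderiv_X_of_ne (by decide)
  have p10 : pderiv 1 (X 0 : MvPolynomial (Fin 2) k) = 0 := pderiv_X_of_ne (by decide)
  rw [p01, pderiv_X_self] at h0
  rw [p10, pderiv_X_self] at h1
  simp only [map_pow, map_add, map_mul, eval_X, map_one, pderiv_one, mul_zero, mul_one, zero_add, add_zero, one_mul, map_zero] at h0 h1 h2
  have eγ : P 0 + P 1 + 1 = gam P := rfl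
  rw [eγ] at h0 h1 h2
  have g0 : P 0 ^ (t-1) = gam P ^ (t-1) := CharTwo.add_eq_zero.1 h0
  have g1 : P 1 ^ (t-1) = gam P ^ (t-1) := CharTwo.add_eq_zero.1 h1
  have es : ∀ x : k, x ^ t = x ^ (t-1) * x := fun x => by rw [← pow_succ]; congr 1; omega
  rw [es (P 0), es (P 1), es (gam P), g0, g1] at h2
  have g2 : gam P ^ (t-1) = 1 := by
    have : gam P ^ (t-1) + 1 = 0 := by
      have e2 : (2:k) = 0 := CharTwo.two_eq_zero
      have : gam P ^ (t-1) * (P 0 + P 1 + gam P) + 1 = 0 := by linear_combination h2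
      rw [show P 0 + P 1 + gam P = 1 by rw [gam]; linear_combination (P 0 + P 1) * e2, mul_one] at this
      exact this
    exact CharTwo.add_eq_zero.1 this
  have hroot : ∀ x : k, x ^ (t-1) = 1 → x ^ ℓ = 1 := by
    intro x hx
    apply pow_q_inj (i := i)
    rw [← pow_mul, one_pow, mul_comm, ← hx, htq]; simp
  exact ⟨hroot _ (g0.trans g2), hroot _ (g1.trans g2), hroot _ g2⟩

end
end APN
end

section
open MvPolynomial

namespace APN

section
variable {k : Type*} [Field k]

/-- degree q form -/
noncomputable def Fq (q : ℕ) (P : Fin 2 → k) : MvPolynomial (Fin 2) k := 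
  C (P 0 * (P 0)⁻¹ ^ q) * X 0 ^ q + C (P 1 * (P 1)⁻¹ ^ q) * X 1 ^ q + C (gam P * (gam P)⁻¹ ^ q) * (X 0 + X 1) ^ q
/-- degree q+1 form -/
noncomputable def Fq1 (q : ℕ) (P : Fin 2 → k) : MvPolynomial (Fin 2) k := 
  C ((P 0)⁻¹ ^ q) * X 0 ^ (q+1) + C ((P 1)⁻¹ ^ q) * X 1 ^ (q+1) + C ((gam P)⁻¹ ^ q) * (X 0 + X 1) ^ (q+1)

/-- most singular points -/
def InZ1 (q : ℕ) (P : Fin 2 → k) : Prop := P 0 ^ (q-1) = 1 ∧ P 1 ^ (q-1) = 1 ∧ gam P ^ (q-1) = 1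

lemma hom_Fq (q : ℕ) (P : Fin 2 → k) : (Fq q P).IsHomogeneous q :=
  (((hom_pow (isHomogeneous_X k 0) q).C_mul _).add ((hom_pow (isHomogeneous_X k 1) q).C_mul _)).add ((hom_pow hom_U q).C_mul _)
lemma hom_Fq1 (q : ℕ) (P : Fin 2 → k) : (Fq1 q P).IsHomogeneous (q+1) :=
  (((hom_pow (isHomogeneous_X k 0) _).C_mul _).add ((hom_pow (isHomogeneous_X k 1) _).C_mul _)).add ((hom_pow hom_U _).C_mul _)

lemma ne_zero_of_pow {ℓ : ℕ} (hℓ : Odd ℓ) {c : k} (h : c ^ ℓ = 1) : c ≠ 0 := by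
  rintro rfl
  rw [zero_pow (by rintro rfl; simp at hℓ)] at h
  exact zero_ne_one h

variable [CharP k 2]

lemma expand (q ℓ i : ℕ) (hq : q = 2^i) (hℓ : Odd ℓ) (c : k) (hc1 : c ^ ℓ = 1) (U : MvPolynomial (Fin 2) k) : 
    ∃ r, (U + C c) ^ (q * ℓ + 1) = C c + U + C (c * c⁻¹ ^ q) * U ^ q + C (c⁻¹ ^ q) * U ^ (q+1) + r * U ^ (2*q) := by
  obtain ⟨r, hr⟩ := Polynomial.powAddExpansion (C (c ^ q)) (U ^ q) ℓ
  have hc0 := ne_zero_of_pow hℓ hc1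
  have e1 : (U + C c) ^ (q * ℓ) = 1 + C (c⁻¹ ^ q) * U ^ q + r * U ^ (2*q) := by
    rw [pow_mul, hq, add_pow_expChar_pow, ← hq, ← C_pow, add_comm, hr, odd_cast hℓ, one_mul, ← C_pow, ← C_pow, ← pow_mul, mul_comm q ℓ,
      pow_mul, hc1, one_pow, C_1, ← pow_mul, ← pow_mul, mul_comm q 2]
    congr 4
    rw [mul_comm, pow_mul]
    congr 1
    refine eq_inv_of_mul_eq_one_left ?_
    rw [← pow_succ, ← hc1]
    congr 1
    have := hℓ.pos
    omega
  refine ⟨r * (U + C c), ?_⟩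
  rw [pow_succ, e1, C_mul]
  ring

lemma tau_fS (q ℓ i : ℕ) (hi : 1 ≤ i) (hq : q = 2^i) (hℓ : Odd ℓ) (P : Fin 2 → k) (hP : InZ ℓ P) : 
    ∃ R, GeOrd (q+2) R ∧ tau P (fS k (q*ℓ+1)) = Fq q P + Fq1 q P + R := by
  obtain ⟨h0, h1, h2⟩ := hP
  obtain ⟨r0, e0⟩ := expand q ℓ i hq hℓ _ h0 (X 0)
  obtain ⟨r1, e1⟩ := expand q ℓ i hq hℓ _ h1 (X 1)
  obtain ⟨r2, e2⟩ := expand q ℓ i hq hℓ _ h2 (X 0 + X 1)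
  have hq2 : 2 ≤ q := by
    rw [hq]; calc 2 = 2^1 := rfl
      _ ≤ _ := Nat.pow_le_pow_right (by norm_num) hi
  refine ⟨r0 * X 0 ^ (2*q) + r1 * X 1 ^ (2*q) + r2 * (X 0 + X 1) ^ (2*q), ?_, ?_⟩
  · have key : ∀ (r L : MvPolynomial (Fin 2) k), L.IsHomogeneous 1 → GeOrd (q+2) (r * L ^ (2*q)) := by
      intro r L hL
      exact ((GeOrd.zero r).mul (geOrd_of_hom (hom_pow hL (2*q)))).mono (by omega)
    exact ((key _ _ (isHomogeneous_X k 0)).add (key _ _ (isHomogeneous_X k 1))).add (key _ _ hom_U)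
  · rw [fS]
    simp only [map_add, map_pow, tau_X, map_one]
    have e3 : (X 0 + C (P 0) + (X 1 + C (P 1)) + 1 : MvPolynomial (Fin 2) k) = (X 0 + X 1) + C (gam P) := by
      rw [gam, C_add, C_add, C_1]; ring
    rw [e3, e0, e1, e2, Fq, Fq1]
    have h2 : (2 : MvPolynomial (Fin 2) k) = 0 := CharTwo.two_eq_zero
    have e4 : (C (gam P) : MvPolynomial (Fin 2) k) = C (P 0) + C (P 1) + 1 := by
      rw [gam, C_add, C_add, C_1]
    rw [e4]
    linear_combination (C (P 0) + C (P 1) + 1 + X 0 + X 1) * h2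

lemma Fq1_sqfree (q ℓ i : ℕ) (hi : 1 ≤ i) (hq : q = 2^i) (hℓ : Odd ℓ) (P : Fin 2 → k) (hP : InZ ℓ P) : Squarefree (Fq1 q P) := by
  obtain ⟨h0, h1, h2⟩ := hP
  have z0 := ne_zero_of_pow hℓ h0
  have z1 := ne_zero_of_pow hℓ h1
  have z2 := ne_zero_of_pow hℓ h2
  have hqo : Odd (q + 1) := by
    rw [hq]; exact Even.add_one (by rw [Nat.even_pow]; exact ⟨even_two, by omega⟩)
  have hX : Irreducible (X 0 : MvPolynomial (Fin 2) k) := (X_prime (R := k)).irreducible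
  refine ((irreducible_sq_not_dvd_iff_eq_zero_and_no_irreducibles_or_squarefree (Fq1 q P)).1 ?_).resolve_left (fun h => h.2 _ hX)
  intro π hπ hdvd
  have d0 := sq_dvd_pderiv hdvd 0
  have d1 := sq_dvd_pderiv hdvd 1
  rw [Fq1] at d0 d1
  simp only [map_add, Derivation.leibniz, pderiv_pow, odd_cast hqo, pderiv_C, smul_eq_mul, mul_zero, add_zero] at d0 d1
  have p01 : pderiv 0 (X 1 : MvPolynomial (Fin 2) k) = 0 := pderiv_X_of_ne (by decide)
  have p10 : pderiv 1 (X 0 : MvPolynomial (Fin 2) k) = 0 := pderiv_X_of_ne (by decide)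
  rw [p01, pderiv_X_self] at d0
  rw [p10, pderiv_X_self] at d1
  simp only [Nat.add_sub_cancel] at d0 d1
  have f0 : (C ((P 0)⁻¹) * X 0 + C ((gam P)⁻¹) * (X 0 + X 1) : MvPolynomial (Fin 2) k) ^ q = 
      C ((P 0)⁻¹ ^ q) * X 0 ^ q + C ((gam P)⁻¹ ^ q) * (X 0 + X 1) ^ q := by
    rw [hq, add_pow_expChar_pow, mul_pow, mul_pow, C_pow, C_pow]
  have f1 : (C ((P 1)⁻¹) * X 1 + C ((gam P)⁻¹) * (X 0 + X 1) : MvPolynomial (Fin 2) k) ^ q = 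
      C ((P 1)⁻¹ ^ q) * X 1 ^ q + C ((gam P)⁻¹ ^ q) * (X 0 + X 1) ^ q := by
    rw [hq, add_pow_expChar_pow, mul_pow, mul_pow, C_pow, C_pow]
  have g0 : π ∣ C ((P 0)⁻¹) * X 0 + C ((gam P)⁻¹) * (X 0 + X 1) := by
    apply hπ.prime.dvd_of_dvd_pow (n := q)
    rw [f0]; convert d0 using 1; ring
  have g1 : π ∣ C ((P 1)⁻¹) * X 1 + C ((gam P)⁻¹) * (X 0 + X 1) := by
    apply hπ.prime.dvd_of_dvd_pow (n := q)
    rw [f1]; convert d1 using 1; ring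
  have e2 : (2:k) = 0 := CharTwo.two_eq_zero
  have hdet : (P 0 * P 1 * gam P) * ((P 0)⁻¹ * (P 1)⁻¹ + (P 0)⁻¹ * (gam P)⁻¹ + (P 1)⁻¹ * (gam P)⁻¹) = 1 := by
    field_simp
    rw [gam]; linear_combination (P 0 + P 1) * e2
  have hdet' := congrArg (C : k → MvPolynomial (Fin 2) k) hdet
  simp only [C_mul, C_add, C_1] at hdet'
  have e2' : (2:MvPolynomial (Fin 2) k) = 0 := CharTwo.two_eq_zero
  refine not_dvd_X01 hπ ?_ ?_
  · have : (X 0 : MvPolynomial (Fin 2) k) = C (P 0) * C (P 1) * C (gam P) * ((C ((P 1)⁻¹) + C ((gam P)⁻¹)) * (C ((P 0)⁻¹) * X 0 + C ((gam P)⁻¹) * (X 0 + X 1)) 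
        + C ((gam P)⁻¹) * (C ((P 1)⁻¹) * X 1 + C ((gam P)⁻¹) * (X 0 + X 1))) := by
      linear_combination (-X 0) * hdet' - C (P 0) * C (P 1) * C (gam P) * C ((gam P)⁻¹) * (C ((gam P)⁻¹) * (X 0 + X 1) + C ((P 1)⁻¹) * X 1)  * e2'
    rw [this]
    exact Dvd.dvd.mul_left (dvd_add (g0.mul_left _) (g1.mul_left _)) _
  · have : (X 1 : MvPolynomial (Fin 2) k) = C (P 0) * C (P 1) * C (gam P) * ((C ((P 0)⁻¹) + C ((gam P)⁻¹)) * (C ((P 1)⁻¹) * X 1 + C ((gam P)⁻¹) * (X 0 + X 1)) 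
        + C ((gam P)⁻¹) * (C ((P 0)⁻¹) * X 0 + C ((gam P)⁻¹) * (X 0 + X 1))) := by
      linear_combination (-X 1) * hdet' - C (P 0) * C (P 1) * C (gam P) * C ((gam P)⁻¹) * (C ((gam P)⁻¹) * (X 0 + X 1) + C ((P 0)⁻¹) * X 0)  * e2'
    rw [this]
    exact Dvd.dvd.mul_left (dvd_add (g1.mul_left _) (g0.mul_left _)) _

lemma sum_gam (P : Fin 2 → k) : P 0 + P 1 + gam P = 1 := by
  have e2 : (2:k) = 0 := CharTwo.two_eq_zero
  rw [gam]; linear_combination (P 0 + P 1) * e2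

lemma Fq_eq (q i : ℕ) (hq : q = 2^i) (P : Fin 2 → k) : Fq q P = 
    C (P 0 * (P 0)⁻¹ ^ q + gam P * (gam P)⁻¹ ^ q) * X 0 ^ q + C (P 1 * (P 1)⁻¹ ^ q + gam P * (gam P)⁻¹ ^ q) * X 1 ^ q := by
  rw [Fq, C_add, C_add, hq, add_pow_expChar_pow]; ring

lemma Fq_zero (q i : ℕ) (hi : 1 ≤ i) (hq : q = 2^i) (P : Fin 2 → k) (h0 : P 0 ≠ 0) (h1 : P 1 ≠ 0) (h2 : gam P ≠ 0) (hP : InZ1 q P) :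
    Fq q P = 0 := by
  have hq2 : q ≠ 0 := by rw [hq]; positivity
  have key : ∀ x : k, x ≠ 0 → x ^ (q-1) = 1 → x * x⁻¹ ^ q = 1 := by
    intro x hx h
    obtain ⟨s, rfl⟩ := Nat.exists_eq_succ_of_ne_zero hq2
    rw [Nat.succ_sub_one] at h
    rw [pow_succ, inv_pow, h]; field_simp
  obtain ⟨a, b, c⟩ := hP
  rw [Fq_eq q i hq, key _ h0 a, key _ h1 b, key _ h2 c, CharTwo.add_self_eq_zero]
  simp

lemma InZ1_of_Fq (q i : ℕ) (hq : q = 2^i) (P : Fin 2 → k) (h0 : P 0 ≠ 0) (h1 : P 1 ≠ 0) (h2 : gam P ≠ 0) (h : Fq q P = 0) :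
    InZ1 q P := by
  have hq2 : q ≠ 0 := by rw [hq]; positivity
  rw [Fq_eq q i hq] at h
  have a0 := congrArg (eval ![1, 0]) h
  have a1 := congrArg (eval ![0, 1]) h
  simp [hq2] at a0 a1
  rw [CharTwo.add_eq_zero] at a0 a1
  set c := gam P * (gam P ^ q)⁻¹ with hcdef
  have b0 : P 0 = c * P 0 ^ q := by rw [← a0]; field_simp
  have b1 : P 1 = c * P 1 ^ q := by rw [← a1]; field_simp
  have b2 : gam P = c * gam P ^ q := by rw [hcdef]; field_simp
  have hs := sum_gam P
  have hsq : P 0 ^ q + P 1 ^ q + gam P ^ q = 1 := by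
    rw [hq, ← add_pow_expChar_pow, ← add_pow_expChar_pow, hs, one_pow]
  have hc1 : c = 1 := by
    have : P 0 + P 1 + gam P = c * (P 0 ^ q + P 1 ^ q + gam P ^ q) := by linear_combination b0 + b1 + b2
    rw [hs, hsq, mul_one] at this; exact this.symm
  have key : ∀ x : k, x ≠ 0 → x = c * x ^ q → x ^ (q-1) = 1 := by
    intro x hx h
    obtain ⟨s, rfl⟩ := Nat.exists_eq_succ_of_ne_zero hq2
    rw [Nat.succ_sub_one]
    rw [hc1, one_mul, pow_succ] at h
    exact mul_right_cancel₀ hx (by rw [one_mul]; exact h.symm)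
  exact ⟨key _ h0 b0, key _ h1 b1, key _ h2 b2⟩

lemma Fq_pow [IsAlgClosed k] (q i : ℕ) (hq : q = 2^i) (P : Fin 2 → k) : ∃ L : MvPolynomial (Fin 2) k, L.IsHomogeneous 1 ∧ Fq q P = L ^ q := by
  have hq2 : 0 < q := by rw [hq]; positivity
  obtain ⟨x, hx⟩ := IsAlgClosed.exists_pow_nat_eq (P 0 * (P 0)⁻¹ ^ q + gam P * (gam P)⁻¹ ^ q) hq2
  obtain ⟨y, hy⟩ := IsAlgClosed.exists_pow_nat_eq (P 1 * (P 1)⁻¹ ^ q + gam P * (gam P)⁻¹ ^ q) hq2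
  refine ⟨C x * X 0 + C y * X 1, (isHomogeneous_C_mul_X x 0).add (isHomogeneous_C_mul_X y 1), ?_⟩
  rw [Fq_eq q i hq, ← hx, ← hy, hq, add_pow_expChar_pow, mul_pow, mul_pow, C_pow, C_pow]

end
end APN
end

section
open MvPolynomial

namespace APN

section
variable {k : Type*} [Field k] [CharP k 2]

lemma loc_data {q ℓ i t : ℕ} (hi : 1 ≤ i) (hq : q = 2^i) (hℓ : Odd ℓ) (htq : t = q*ℓ+1) {P : Fin 2 → k} (hP : InZ ℓ P) : 
    GeOrd q (tau P (fS k t)) ∧ hc q (tau P (fS k t)) = Fq q P ∧ hc (q+1) (tau P (fS k t)) = Fq1 q P := by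
  obtain ⟨R, hR, e⟩ := tau_fS q ℓ i hi hq hℓ P hP
  rw [← htq] at e
  rw [e]
  refine ⟨((geOrd_of_hom (hom_Fq q P)).add ((geOrd_of_hom (hom_Fq1 q P)).mono (by omega))).add (hR.mono (by omega)), ?_, ?_⟩
  · rw [hc_add, hc_add, hc_of_hom (hom_Fq q P), hc_ne_of_hom (hom_Fq1 q P) (by omega), hR.hc_eq_zero (by omega)]; simp
  · rw [hc_add, hc_add, hc_ne_of_hom (hom_Fq q P) (by omega), hc_of_hom (hom_Fq1 q P), hR.hc_eq_zero (by omega)]; simp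

lemma InZ.ne {ℓ : ℕ} (hℓ : Odd ℓ) {P : Fin 2 → k} (hP : InZ ℓ P) : P 0 ≠ 0 ∧ P 1 ≠ 0 ∧ gam P ≠ 0 := 
  ⟨ne_zero_of_pow hℓ hP.1, ne_zero_of_pow hℓ hP.2.1, ne_zero_of_pow hℓ hP.2.2⟩

lemma Fq1_ne {q ℓ i : ℕ} (hi : 1 ≤ i) (hq : q = 2^i) (hℓ : Odd ℓ) {P : Fin 2 → k} (hP : InZ ℓ P) : Fq1 q P ≠ 0 := 
  (Fq1_sqfree q ℓ i hi hq hℓ P hP).ne_zero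

lemma ord1 {q ℓ i t : ℕ} (hi : 1 ≤ i) (hq : q = 2^i) (hℓ : Odd ℓ) (htq : t = q*ℓ+1) {P : Fin 2 → k} (hP : InZ ℓ P) 
    (hP1 : InZ1 q P) : ordP P (fS k t) = q+1 := by
  obtain ⟨h1, h2, h3⟩ := loc_data hi hq hℓ htq hP
  obtain ⟨n0, n1, n2⟩ := hP.ne hℓ
  rw [Fq_zero q i hi hq P n0 n1 n2 hP1] at h2
  exact ordP_eq (h1.succ h2) (by rw [h3]; exact Fq1_ne hi hq hℓ hP)

lemma ord2 {q ℓ i t : ℕ} (hi : 1 ≤ i) (hq : q = 2^i) (hℓ : Odd ℓ) (htq : t = q*ℓ+1) {P : Fin 2 → k} (hP : InZ ℓ P) 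
    (hP1 : ¬ InZ1 q P) : ordP P (fS k t) = q ∧ Fq q P ≠ 0 := by
  obtain ⟨h1, h2, h3⟩ := loc_data hi hq hℓ htq hP
  obtain ⟨n0, n1, n2⟩ := hP.ne hℓ
  have hne : Fq q P ≠ 0 := fun h => hP1 (InZ1_of_Fq q i hq P n0 n1 n2 h)
  exact ⟨ordP_eq h1 (by rw [h2]; exact hne), hne⟩

lemma loc1 {q ℓ i t : ℕ} (hi : 1 ≤ i) (hq : q = 2^i) (hℓ : Odd ℓ) (htq : t = q*ℓ+1) {P : Fin 2 → k} (hP : InZ ℓ P) 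
    (hP1 : InZ1 q P) {a b r : MvPolynomial (Fin 2) k} (h : fS k t = a * b * r) (ha : a ≠ 0) (hb : b ≠ 0) (hr : r ≠ 0) :
    LocBd a b P (ordP P a * ordP P b) := by
  apply locBd_of ha hb
  obtain ⟨h1, h2, h3⟩ := loc_data hi hq hℓ htq hP
  have ho := ord1 hi hq hℓ htq hP hP1
  have e1 := hc_ordP_mul P (a := a * b) (b := r)
  rw [← ordP_mul P (mul_ne_zero ha hb) hr, ← h, ho, h3, ordP_mul P ha hb, hc_ordP_mul] at e1
  have hs := Fq1_sqfree q ℓ i hi hq hℓ P hP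
  rw [e1] at hs
  exact (squarefree_mul_iff.1 (squarefree_mul_iff.1 hs).2.1).1

variable [IsAlgClosed k]

lemma assoc_pow {L A H : MvPolynomial (Fin 2) k} {i q : ℕ} (hL : L.IsHomogeneous 1) (hA : A.IsHomogeneous i) (hA0 : A ≠ 0)
    (h : A * H = L ^ q) (h0 : L ≠ 0) : Associated A (L ^ i) := by
  have hLi := irreducible_linear hL h0
  obtain ⟨i', _, hass⟩ := (dvd_prime_pow hLi.prime q).1 (Dvd.intro _ h)
  have : i' = i := by
    by_contra hne
    rcases lt_or_gt_of_ne hne with hlt | hlt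
    · exact pow_ne_zero i' h0 (eq_zero_of_dvd_hom ((ltDeg_of_hom (hom_pow hL i')).mono (by omega : i' + 1 ≤ i)) (geOrd_of_hom hA) hass.dvd)
    · exact hA0 (eq_zero_of_dvd_hom ((ltDeg_of_hom hA).mono (by omega : i + 1 ≤ i')) (geOrd_of_hom (hom_pow hL i')) hass.symm.dvd)
  rwa [this] at hass

lemma loc2_data {q ℓ i t : ℕ} (hi : 1 ≤ i) (hq : q = 2^i) (hℓ : Odd ℓ) (htq : t = q*ℓ+1) {P : Fin 2 → k} (hP : InZ ℓ P) 
    (hP1 : ¬ InZ1 q P) {a h : MvPolynomial (Fin 2) k} (hf : fS k t = a * h) (ha : a ≠ 0) (hh : h ≠ 0) :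
    ordP P a + ordP P h = q ∧ ∃ L, Irreducible L ∧ Fq q P = L ^ q ∧ Associated (hc (ordP P a) (tau P a)) (L ^ ordP P a) ∧ 
      Associated (hc (ordP P h) (tau P h)) (L ^ ordP P h) ∧ 
      Fq1 q P = hc (ordP P a) (tau P a) * hc (ordP P h + 1) (tau P h) + hc (ordP P a + 1) (tau P a) * hc (ordP P h) (tau P h) := by
  obtain ⟨h1, h2, h3⟩ := loc_data hi hq hℓ htq hP
  obtain ⟨ho, hne⟩ := ord2 hi hq hℓ htq hP hP1
  rw [hf] at ho h2 h3
  have hsum := ordP_mul P ha hh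
  rw [ho] at hsum
  obtain ⟨L, hL, hLe⟩ := Fq_pow q i hq P
  have hq0 : q ≠ 0 := by rw [hq]; positivity
  have hL0 : L ≠ 0 := by
    rintro rfl
    rw [zero_pow hq0] at hLe
    exact hne hLe
  have e := hc_ordP_mul P (a := a) (b := h)
  rw [← hsum, h2, hLe] at e
  refine ⟨hsum.symm, L, irreducible_linear hL hL0, hLe, assoc_pow hL (hom_hc _ _) (ordP_hc P ha) e.symm hL0, 
    assoc_pow hL (hom_hc _ _) (ordP_hc P hh) (by rw [mul_comm]; exact e.symm) hL0, ?_⟩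
  rw [← h3, map_mul, hsum]
  exact hc_second_bot (ordP_ge P a) (ordP_ge P h)

lemma loc2_min {q ℓ i t : ℕ} (hi : 1 ≤ i) (hq : q = 2^i) (hℓ : Odd ℓ) (htq : t = q*ℓ+1) {P : Fin 2 → k} (hP : InZ ℓ P) 
    (hP1 : ¬ InZ1 q P) {a h : MvPolynomial (Fin 2) k} (hf : fS k t = a * h) (ha : a ≠ 0) (hh : h ≠ 0) 
    (h1 : 1 ≤ ordP P a) (h2 : 1 ≤ ordP P h) : ordP P a = 1 ∨ ordP P h = 1 := by
  obtain ⟨hs, L, hL, hLq, hA, hH, e⟩ := loc2_data hi hq hℓ htq hP hP1 hf ha hh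
  by_contra! hne
  have hsq := Fq1_sqfree q ℓ i hi hq hℓ P hP
  have d1 : L * L ∣ hc (ordP P a) (tau P a) := by
    rw [← pow_two]; exact (pow_dvd_pow L (by omega)).trans hA.symm.dvd
  have d2 : L * L ∣ hc (ordP P h) (tau P h) := by
    rw [← pow_two]; exact (pow_dvd_pow L (by omega)).trans hH.symm.dvd
  refine hL.not_isUnit (hsq L ?_)
  rw [e]
  exact dvd_add (d1.mul_right _) (d2.mul_left _)

lemma loc2_core {q ℓ i t : ℕ} (hi : 1 ≤ i) (hq : q = 2^i) (hℓ : Odd ℓ) (htq : t = q*ℓ+1) {P : Fin 2 → k} (hP : InZ ℓ P) 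
    (hP1 : ¬ InZ1 q P) {a h : MvPolynomial (Fin 2) k} (hf : fS k t = a * h) (ha : a ≠ 0) (hh : h ≠ 0) 
    (h1 : ordP P a = 1) (h2 : 1 ≤ ordP P h) : LocBd a h P q := by
  obtain ⟨hs, L, hL, hLq, hA, hH, e⟩ := loc2_data hi hq hℓ htq hP hP1 hf ha hh
  have hA0 := ordP_hc P ha
  have hgA := ordP_ge P a
  have hgH := ordP_ge P h
  obtain ⟨j, hj⟩ := Nat.exists_eq_succ_of_ne_zero (by omega : ordP P h ≠ 0)
  rw [h1] at hA e hA0 hgA hs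
  rw [hj] at hH e hgH hs
  rw [Nat.succ_eq_add_one] at hH e hgH hs
  set A := hc 1 (tau P a) with hAdef
  set H := hc (j+1) (tau P h) with hHdef
  rw [pow_one] at hA
  have hass : Associated (A ^ (j+1)) H := (hA.pow_pow).trans hH.symm
  obtain ⟨u, hu⟩ := hass
  have hAh : A.IsHomogeneous 1 := hom_hc _ _
  have hu' : hc (0 + (j+1)) (tau P h) = u.1 * A ^ (j+1) := by
    rw [zero_add, mul_comm]; exact hu.symm
  have hu2 := hom_cofactor (hc_of_hom (hom_pow hAh (j+1))) hu'
  rw [zero_add] at hu2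
  set E := hc 0 u.1 * A ^ j with hE
  have hEh : E.IsHomogeneous j := by
    have := (hom_hc 0 u.1).mul (hom_pow hAh j)
    rwa [zero_add] at this
  have hEA : E * A = H := by rw [hHdef, hu2, hE]; ring
  set h' := h - (tau P).symm E * a with hh'
  have t1 : tau P h' = tau P h - E * tau P a := by
    rw [hh', map_sub, map_mul, AlgEquiv.apply_symm_apply]
  have g0 : hc (j+1) (tau P h') = 0 := by
    rw [t1, hc_sub, hc_mul_left (hc_of_hom hEh), hEA, sub_self]
  have g1 : GeOrd (j+2) (tau P h') := by
    apply GeOrd.succ _ g0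
    rw [t1]
    exact hgH.sub ((geOrd_of_hom hEh).mul hgA)
  have g2 : A * hc (j+2) (tau P h') = Fq1 q P := by
    rw [t1, hc_sub, hc_mul_left (hc_of_hom hEh), e]
    have e2 : (2 : MvPolynomial (Fin 2) k) = 0 := CharTwo.two_eq_zero
    linear_combination (-hc 2 (tau P a)) * hEA - hc 2 (tau P a) * H * e2
  have hsq := Fq1_sqfree q ℓ i hi hq hℓ P hP
  have hne := Fq1_ne hi hq hℓ hP
  rw [← g2] at hsq hne
  refine ⟨a, Ideal.subset_span (by simp), h', ?_, 1, j+2, hgA, g1, hA0, right_ne_zero_of_mul hne, (squarefree_mul_iff.1 hsq).1, by omega⟩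
  exact sub_mem (Ideal.subset_span (by simp)) (Ideal.mul_mem_left _ _ (Ideal.subset_span (by simp)))

open Classical in
lemma loc2 {q ℓ i t : ℕ} (hi : 1 ≤ i) (hq : q = 2^i) (hℓ : Odd ℓ) (htq : t = q*ℓ+1) {P : Fin 2 → k} (hP : InZ ℓ P) 
    (hP1 : ¬ InZ1 q P) {a b r : MvPolynomial (Fin 2) k} (hf : fS k t = a * (b * r)) (ha : a ≠ 0) (hb : b ≠ 0) (hr : r ≠ 0) :
    LocBd a b P (if eval P a = 0 ∧ eval P (b * r) = 0 then q else 0) := by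
  have hh : b * r ≠ 0 := mul_ne_zero hb hr
  have ma : a ∈ Ideal.span {a, b} := Ideal.subset_span (by simp)
  have mb : b ∈ Ideal.span {a, b} := Ideal.subset_span (by simp)
  have mbr : b * r ∈ Ideal.span {a, b} := Ideal.mul_mem_right _ _ mb
  split_ifs with hc'
  · rw [← ordP_pos_iff P ha, ← ordP_pos_iff P hh] at hc'
    rcases loc2_min hi hq hℓ htq hP hP1 hf ha hh hc'.1 hc'.2 with h1 | h1
    · exact (loc2_core hi hq hℓ htq hP hP1 hf ha hh h1 hc'.2).mono ma mbr le_rfl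
    · exact (loc2_core hi hq hℓ htq hP hP1 (by rw [hf, mul_comm]) hh ha h1 hc'.1).mono mbr ma le_rfl
  · rw [← ordP_pos_iff P ha, ← ordP_pos_iff P hh] at hc'
    have key : LocBd a (b * r) P (ordP P a * ordP P (b * r)) := by
      apply locBd_of ha hh
      by_cases h0 : ordP P a = 0
      · have := ordP_hc P ha
        rw [h0] at this ⊢
        exact (hc_zero_unit this).isRelPrime_left
      · have h0 : ordP P (b * r) = 0 := by
          by_contra hne; exact hc' ⟨by omega, by omega⟩
        have := ordP_hc P hh
        rw [h0] at this ⊢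
        exact (hc_zero_unit this).isRelPrime_right
    refine key.mono ma mbr ?_
    have : ordP P a = 0 ∨ ordP P (b * r) = 0 := by omega
    rcases this with h | h <;> simp [h]

end
end APN
end

section
open Polynomial

namespace APN

section
variable {k : Type*} [Field k] [CharP k 2]

lemma lines_dvd (t : ℕ) : ∃ g : k[X][X], FF k t = C (X + 1) * ((X + 1) * (C X + X)) * g := by
  have h2 : (X : k[X][X]) + 1 = X - C 1 := by rw [CharTwo.sub_eq_add, C_1]
  have h3 : (C X : k[X][X]) + X = X - C X := by rw [CharTwo.sub_eq_add, add_comm]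
  have h1 : (X : k[X]) + 1 = X - C 1 := by rw [CharTwo.sub_eq_add, C_1]
  have p2 : Prime ((X : k[X][X]) + 1) := h2 ▸ prime_X_sub_C _
  have p3 : Prime ((C X : k[X][X]) + X) := h3 ▸ prime_X_sub_C _
  have p1 : Prime (C (X + 1) : k[X][X]) := by rw [prime_C_iff, h1]; exact prime_X_sub_C _
  have n1 : (X + 1 : k[X]) ≠ 0 := by rw [h1]; exact X_sub_C_ne_zero _
  have d1 : (C (X + 1) : k[X][X]) ∣ FF k t := by
    have e1 : (C (X + 1) : k[X][X]) ∣ (C X)^t - 1^t := by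
      have : (C (X + 1) : k[X][X]) = C X - 1 := by rw [CharTwo.sub_eq_add]; simp
      rw [this]; exact sub_dvd_pow_sub_pow _ _ _
    have e2 : (C (X + 1) : k[X][X]) ∣ (C X + X + 1)^t - X^t := by
      have : (C (X + 1) : k[X][X]) = (C X + X + 1) - X := by simp; ring
      rw [this]; exact sub_dvd_pow_sub_pow _ _ _
    have := dvd_add e1 e2
    have e : FF k t = ((C X)^t - 1^t) + ((C X + X + 1)^t - X^t) := by
      rw [FF, CharTwo.sub_eq_add, CharTwo.sub_eq_add, C_pow]; ring
    rwa [e]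
  have d2 : ((X : k[X][X]) + 1) ∣ FF k t := by
    rw [h2, dvd_iff_isRoot, IsRoot.def, FF]
    simp only [eval_add, eval_pow, eval_C, eval_X, eval_one, one_pow]
    rw [add_assoc X 1 1, CharTwo.add_self_eq_zero, add_zero, add_assoc (X^t), CharTwo.add_self_eq_zero, add_zero, CharTwo.add_self_eq_zero]
  have d3 : ((C X : k[X][X]) + X) ∣ FF k t := by
    rw [h3, dvd_iff_isRoot, IsRoot.def, FF]
    simp only [eval_add, eval_pow, eval_C, eval_X, eval_one]
    rw [CharTwo.add_self_eq_zero, CharTwo.add_self_eq_zero, zero_add, one_pow, CharTwo.add_self_eq_zero]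
  obtain ⟨A, hA⟩ := d2
  have d3' : ((C X : k[X][X]) + X) ∣ A := by
    rw [hA] at d3
    rcases p3.dvd_or_dvd d3 with h | h
    · exfalso
      rw [h3, dvd_iff_isRoot, IsRoot.def] at h
      simp at h
      exact n1 h
    · exact h
  obtain ⟨B, rfl⟩ := d3'
  have key : ∀ p : k[X][X], C (X+1) ∣ p → p.map (evalRingHom (1:k)) = 0 := by
    rintro p ⟨r, rfl⟩
    simp [CharTwo.add_self_eq_zero]
  have nx : (X : k[X]) + 1 ≠ 0 := n1
  have d1' : (C (X + 1) : k[X][X]) ∣ B := by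
    rw [hA] at d1
    rcases p1.dvd_or_dvd d1 with h | h
    · have := key _ h; simp at this; exact absurd this nx
    · rcases p1.dvd_or_dvd h with h | h
      · have := key _ h; simp at this; exact absurd (by rw [add_comm]; exact this) nx
      · exact h
  obtain ⟨G, rfl⟩ := d1'
  exact ⟨G, by rw [hA]; ring⟩

open Bivariate in
lemma equiv_map (φ : k →+* k) (a : k[X][X]) :
    equivMvPolynomial k (a.map (mapRingHom φ)) = MvPolynomial.map φ (equivMvPolynomial k a) := by
  have : ((equivMvPolynomial k : k[X][X] →+* _).comp (mapRingHom (mapRingHom φ))) =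
    (MvPolynomial.map φ).comp (equivMvPolynomial k : k[X][X] →+* MvPolynomial (Fin 2) k) := by
    ext <;> simp
  exact congrArg (fun f => f a) this

open Bivariate in
lemma no_fixedS [IsAlgClosed k] (t q ℓ i : ℕ) (ht : 3 ≤ t) (hq : q = 2^i) (hℓ : Odd ℓ) (htq : t = q*ℓ+1) (hodd : Odd t)
   (h : {n : ℕ | 0 < n ∧ ∀ a b : GaloisField 2 n, a ≠ 0 →
      Set.ncard {x : GaloisField 2 n | (x + a) ^ t + x ^ t = b} ≤ 2}.Infinite) : 
   ∃ g : MvPolynomial (Fin 2) k, fS k t = (MvPolynomial.X 0 + 1) * (MvPolynomial.X 1 + 1) * (MvPolynomial.X 0 + MvPolynomial.X 1) * g ∧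
     ∀ a, Irreducible a → a ∣ g → ¬ Associated a (MvPolynomial.map (frobenius k 2) a) := by
  obtain ⟨g, hg⟩ := lines_dvd (k := k) t
  refine ⟨equivMvPolynomial k g, ?_, ?_⟩
  · have := congrArg (equivMvPolynomial k) hg
    simp [FF] at this
    rw [fS, this]; ring
  · intro a ha hag has
    have hs := (equivMvPolynomial k).symm
    have e : a = equivMvPolynomial k ((equivMvPolynomial k).symm a) := by simp
    apply no_fixed t q ℓ i ht hq hℓ htq hodd h g hg ((equivMvPolynomial k).symm a)
    · exact (MulEquiv.irreducible_iff (equivMvPolynomial k).symm).2 ha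
    · have := map_dvd (equivMvPolynomial k).symm hag
      simpa using this
    · rw [e, ← equiv_map] at has
      have := has.map (equivMvPolynomial k).symm
      simpa using this
end
end APN
end

section
open MvPolynomial

namespace APN

section
variable {k : Type*} [Field k]

lemma tau_map (φ : k →+* k) (P : Fin 2 → k) (a : MvPolynomial (Fin 2) k) :
    tau (fun i => φ (P i)) (map φ a) = map φ (tau P a) := by
  have : ((tau (fun i => φ (P i)) : MvPolynomial (Fin 2) k →+* MvPolynomial (Fin 2) k).comp (map φ)) =
      (map φ).comp (tau P : MvPolynomial (Fin 2) k →+* MvPolynomial (Fin 2) k) := by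
    ext i <;> simp [tau_X, tau_C]
  exact congrArg (fun f => f a) this

lemma hc_map (φ : k →+* k) (n : ℕ) (a : MvPolynomial (Fin 2) k) : hc n (map φ a) = map φ (hc n a) := by
  ext d
  simp only [coeff_homogeneousComponent, coeff_map]
  split_ifs <;> simp

lemma ordP_map (φ : k →+* k) (P : Fin 2 → k) (a : MvPolynomial (Fin 2) k) :
    ordP (fun i => φ (P i)) (map φ a) = ordP P a := by
  have hinj := map_injective (σ := Fin 2) φ φ.injective
  unfold ordP
  congr 1
  ext n
  rw [tau_map]
  simp only [hc_map]
  exact not_congr (map_eq_zero_iff _ hinj)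

lemma deg_map (φ : k →+* k) (a : MvPolynomial (Fin 2) k) : (map φ a).totalDegree = a.totalDegree := by
  have hinj := φ.injective
  unfold totalDegree
  rw [support_map_of_injective _ hinj]

variable (k) in
open Classical in
noncomputable def Zf (ℓ : ℕ) : Finset (Fin 2 → k) :=
  (Fintype.piFinset fun _ : Fin 2 => Polynomial.nthRootsFinset ℓ (1:k)).filter (InZ ℓ)

lemma mem_Zf {ℓ : ℕ} (hℓ : 0 < ℓ) (P : Fin 2 → k) : P ∈ Zf k ℓ ↔ InZ ℓ P := by
  classical
  simp only [Zf, Finset.mem_filter, Fintype.mem_piFinset, Polynomial.mem_nthRootsFinset hℓ, Fin.forall_fin_two]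
  constructor
  · exact fun h => h.2
  · exact fun h => ⟨⟨h.1, h.2.1⟩, h⟩

variable (k) in
open Classical in
noncomputable def Z1 (q ℓ : ℕ) : Finset (Fin 2 → k) := (Zf k ℓ).filter (InZ1 q)

variable (k) in
open Classical in
noncomputable def Z2 (q ℓ : ℕ) : Finset (Fin 2 → k) := (Zf k ℓ).filter (fun P => ¬ InZ1 q P)

lemma mem_Z1 {q ℓ : ℕ} (hℓ : 0 < ℓ) (P : Fin 2 → k) : P ∈ Z1 k q ℓ ↔ InZ ℓ P ∧ InZ1 q P := by
  classical
  rw [Z1, Finset.mem_filter, mem_Zf hℓ]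

lemma mem_Z2 {q ℓ : ℕ} (hℓ : 0 < ℓ) (P : Fin 2 → k) : P ∈ Z2 k q ℓ ↔ InZ ℓ P ∧ ¬ InZ1 q P := by
  classical
  rw [Z2, Finset.mem_filter, mem_Zf hℓ]

lemma InZ_map (φ : k →+* k) {ℓ : ℕ} {P : Fin 2 → k} (h : InZ ℓ P) : InZ ℓ (fun i => φ (P i)) := by
  obtain ⟨h1, h2, h3⟩ := h
  refine ⟨?_, ?_, ?_⟩
  · rw [← map_pow, h1, map_one]
  · rw [← map_pow, h2, map_one]
  · have : gam (fun i => φ (P i)) = φ (gam P) := by simp [gam]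
    rw [this, ← map_pow, h3, map_one]

lemma sum_map_sq (φ : k →+* k) {q ℓ : ℕ} (hℓ : 0 < ℓ) (a : MvPolynomial (Fin 2) k) :
    ∑ P ∈ Z1 k q ℓ, ordP P (map φ a) ^ 2 = ∑ P ∈ Z1 k q ℓ, ordP P a ^ 2 := by
  symm
  have hm : ∀ P ∈ Z1 k q ℓ, (fun i => φ (P i)) ∈ Z1 k q ℓ := by
    intro P hP
    rw [mem_Z1 hℓ] at hP ⊢
    exact ⟨InZ_map φ hP.1, InZ_map φ hP.2⟩
  have hinj : Set.InjOn (fun (P : Fin 2 → k) i => φ (P i)) (Z1 k q ℓ) := by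
    intro P _ Q _ h
    funext i
    exact φ.injective (congrFun h i)
  have hs := Finset.surjOn_of_injOn_of_card_le (s := Z1 k q ℓ) (t := Z1 k q ℓ) (fun (P : Fin 2 → k) i => φ (P i)) (fun P hP => hm P hP) hinj le_rfl
  apply Finset.sum_nbij (fun P i => φ (P i)) hm hinj hs
  intro P _
  rw [ordP_map]
end
end APN
end

section
open MvPolynomial

namespace APN

section
variable {k : Type*} [Field k] [CharP k 2] [IsAlgClosed k]

open Classical in
lemma bez_f {q ℓ i t : ℕ} (hi : 1 ≤ i) (hq : q = 2^i) (hℓ : Odd ℓ) (htq : t = q*ℓ+1) (ht : 3 ≤ t) (hodd : Odd t)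
    {a b r : MvPolynomial (Fin 2) k} (hf : fS k t = a * (b * r)) (ha : a ≠ 0) (hb : b ≠ 0) (hr : r ≠ 0) :
    a.totalDegree * b.totalDegree ≤ ∑ P ∈ Z1 k q ℓ, ordP P a * ordP P b + 
      q * ((Z2 k q ℓ).filter fun P => 1 ≤ ordP P a ∧ ordP P a < q).card := by
  have hf' : fS k t = a * b * r := by rw [hf, mul_assoc]
  have hℓ0 := hℓ.pos
  have h1 := top_data ha
  have h2 := top_data hb
  have := bezout h1.1 h2.1 h2.2 (top_relPrime ht hodd hf') (Zf k ℓ) 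
    (fun P => if InZ1 q P then ordP P a * ordP P b else if 1 ≤ ordP P a ∧ ordP P a < q then q else 0)
    (fun P e1 e2 => (mem_Zf hℓ0 P).2 (zero_mem_Z (by rw [← hq]; exact htq) ht hodd hf' P e1 e2)) ?_
  · refine this.trans (le_of_eq ?_)
    rw [← Finset.sum_filter_add_sum_filter_not _ (InZ1 q)]
    congr 1
    · apply Finset.sum_congr
      · unfold Z1; congr
      · intro P hP
        rw [if_pos (Finset.mem_filter.1 hP).2]
    · have e : ∑ P ∈ (Zf k ℓ).filter (fun P => ¬ InZ1 q P), (if InZ1 q P then ordP P a * ordP P b else if 1 ≤ ordP P a ∧ ordP P a < q then q else 0)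
        = ∑ P ∈ Z2 k q ℓ, (if 1 ≤ ordP P a ∧ ordP P a < q then q else 0) := by
        apply Finset.sum_congr
        · unfold Z2; congr
        · intro P hP
          rw [if_neg (Finset.mem_filter.1 hP).2]
      rw [e, ← Finset.sum_filter, Finset.sum_const, smul_eq_mul, mul_comm]
  · intro P hP
    have hP := (mem_Zf hℓ0 P).1 hP
    by_cases hP1 : InZ1 q P
    · rw [if_pos hP1]; exact loc1 hi hq hℓ htq hP hP1 hf' ha hb hr
    · rw [if_neg hP1]
      have := loc2 hi hq hℓ htq hP hP1 hf ha hb hr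
      have hbr := mul_ne_zero hb hr
      rw [← ordP_pos_iff P ha, ← ordP_pos_iff P hbr] at this
      have o := (ord2 hi hq hℓ htq hP hP1).1
      rw [hf, ordP_mul P ha hbr] at o
      have e : (1 ≤ ordP P a ∧ 1 ≤ ordP P (b*r)) ↔ (1 ≤ ordP P a ∧ ordP P a < q) := by omega
      simp only [e] at this
      exact this

open Classical in
lemma factor_ineq {q ℓ i t : ℕ} (hi : 1 ≤ i) (hq : q = 2^i) (hℓ : Odd ℓ) (htq : t = q*ℓ+1) (ht : 3 ≤ t) (hodd : Odd t)
    {a r : MvPolynomial (Fin 2) k} (φ : k →+* k) (hf : fS k t = a * (map φ a * r)) :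
    t * a.totalDegree ≤ (q+1) * ∑ P ∈ Z1 k q ℓ, ordP P a + 
      2 * q * ((Z2 k q ℓ).filter fun P => 1 ≤ ordP P a ∧ ordP P a < q).card := by
  have hne := fS_ne (k := k) ht hodd
  have ha : a ≠ 0 := fun h => hne (by rw [hf, h, zero_mul])
  have hh : map φ a * r ≠ 0 := fun h => hne (by rw [hf, h, mul_zero])
  have hb := left_ne_zero_of_mul hh
  have hr := right_ne_zero_of_mul hh
  have b1 := bez_f hi hq hℓ htq ht hodd hf ha hb hr
  have b2 := bez_f hi hq hℓ htq ht hodd (b := map φ a * r) (r := 1) (by rw [mul_one]; exact hf) ha hh one_ne_zero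
  have hd := fS_deg (k := k) ht hodd
  rw [hf, totalDegree_mul_of_isDomain ha hh] at hd
  rw [deg_map] at b1
  have s1 := sum_map_sq φ (q := q) hℓ.pos a
  have s2 : 2 * ∑ P ∈ Z1 k q ℓ, ordP P a * ordP P (map φ a) ≤ ∑ P ∈ Z1 k q ℓ, ordP P a ^ 2 + ∑ P ∈ Z1 k q ℓ, ordP P (map φ a) ^ 2 := by
    rw [Finset.mul_sum, ← Finset.sum_add_distrib]
    apply Finset.sum_le_sum
    intro P _
    have := two_mul_le_add_sq (ordP P a) (ordP P (map φ a))
    linarith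
  have s3 : ∑ P ∈ Z1 k q ℓ, ordP P a * ordP P (map φ a * r) + ∑ P ∈ Z1 k q ℓ, ordP P a ^ 2 = (q+1) * ∑ P ∈ Z1 k q ℓ, ordP P a := by
    rw [Finset.mul_sum, ← Finset.sum_add_distrib]
    apply Finset.sum_congr rfl
    intro P hP
    have hP := (mem_Z1 hℓ.pos P).1 hP
    have := ord1 hi hq hℓ htq hP.1 hP.2
    rw [hf, ordP_mul P ha hh] at this
    rw [← this]; ring
  have e : t * a.totalDegree = a.totalDegree * a.totalDegree + a.totalDegree * (map φ a * r).totalDegree := by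
    rw [← hd]; ring
  rw [e]
  linarith

lemma three_max {q ℓ i t : ℕ} (hi : 1 ≤ i) (hq : q = 2^i) (hℓ : Odd ℓ) (htq : t = q*ℓ+1) (ht : 3 ≤ t) (hodd : Odd t)
    {P : Fin 2 → k} (hP : InZ ℓ P) (hP1 : ¬ InZ1 q P) {a b c w : MvPolynomial (Fin 2) k} (hf : fS k t = a * b * c * w)
    (oa : 1 ≤ ordP P a) (ob : 1 ≤ ordP P b) (oc : 1 ≤ ordP P c) : False := by
  have hne := fS_ne (k := k) ht hodd
  rw [hf] at hne
  have hw := right_ne_zero_of_mul hne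
  have hc := right_ne_zero_of_mul (left_ne_zero_of_mul hne)
  have hab := (left_ne_zero_of_mul (left_ne_zero_of_mul hne))
  have hb := right_ne_zero_of_mul hab
  have ha := left_ne_zero_of_mul hab
  have o := (ord2 hi hq hℓ htq hP hP1).1
  rw [hf, ordP_mul P (mul_ne_zero hab hc) hw, ordP_mul P hab hc, ordP_mul P ha hb] at o
  have key : ∀ x y : MvPolynomial (Fin 2) k, fS k t = x * y → x ≠ 0 → y ≠ 0 → 1 ≤ ordP P x → 1 ≤ ordP P y → ordP P x = 1 ∨ ordP P y = 1 := 
    fun x y h hx hy => loc2_min hi hq hℓ htq hP hP1 h hx hy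
  have k1 := key a (b * c * w) (by rw [hf]; ring) ha (mul_ne_zero (mul_ne_zero hb hc) hw)
  have k2 := key b (a * c * w) (by rw [hf]; ring) hb (mul_ne_zero (mul_ne_zero ha hc) hw)
  have k3 := key c (a * b * w) (by rw [hf]; ring) hc (mul_ne_zero (mul_ne_zero ha hb) hw)
  have k4 := key (a * b) (c * w) (by rw [hf]; ring) hab (mul_ne_zero hc hw)
  simp only [ordP_mul P (mul_ne_zero hb hc) hw, ordP_mul P (mul_ne_zero ha hc) hw, ordP_mul P (mul_ne_zero ha hb) hw, 
    ordP_mul P ha hb, ordP_mul P ha hc, ordP_mul P hb hc, ordP_mul P hc hw] at k1 k2 k3 k4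
  have he : q % 2 = 0 := by
    obtain ⟨j, rfl⟩ : ∃ j, i = j + 1 := ⟨i - 1, by omega⟩
    rw [hq, pow_succ]; omega
  omega

lemma exists_three {α : Type*} (s : Multiset α) (h : 3 ≤ s.card) : ∃ a b c w, s = a ::ₘ b ::ₘ c ::ₘ w := by
  induction s using Quotient.inductionOn with
  | h l =>
    match l, h with
    | a :: b :: c :: l, _ => exact ⟨a, b, c, l, rfl⟩

open Classical in
lemma sum_ineq {q ℓ t : ℕ} (s : Multiset (MvPolynomial (Fin 2) k)) (h0 : ∀ a ∈ s, a ≠ 0)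
    (h : ∀ a ∈ s, t * a.totalDegree ≤ (q+1) * ∑ P ∈ Z1 k q ℓ, ordP P a + 
      2 * q * ((Z2 k q ℓ).filter fun P => 1 ≤ ordP P a ∧ ordP P a < q).card) :
    s.prod ≠ 0 ∧ t * s.prod.totalDegree ≤ (q+1) * ∑ P ∈ Z1 k q ℓ, ordP P s.prod + 
      2 * q * ∑ P ∈ Z2 k q ℓ, s.countP (fun a => 1 ≤ ordP P a ∧ ordP P a < q) := by
  induction s using Multiset.induction_on with
  | empty => simp
  | cons a s ih =>
    have ha := h0 a (Multiset.mem_cons_self _ _)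
    have h1 := h a (Multiset.mem_cons_self _ _)
    obtain ⟨h2, h3⟩ := ih (fun b hb => h0 b (Multiset.mem_cons_of_mem hb)) (fun b hb => h b (Multiset.mem_cons_of_mem hb))
    rw [Multiset.prod_cons]
    refine ⟨mul_ne_zero ha h2, ?_⟩
    rw [totalDegree_mul_of_isDomain ha h2]
    simp only [ordP_mul _ ha h2, Multiset.countP_cons, Finset.sum_add_distrib]
    rw [Finset.card_filter] at h1
    linarith

lemma main_ineq {q ℓ i t : ℕ} (hi : 1 ≤ i) (hq : q = 2^i) (hℓ : Odd ℓ) (htq : t = q*ℓ+1) (ht : 3 ≤ t) (hodd : Odd t)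
    (φ : k →+* k) {w g : MvPolynomial (Fin 2) k} (hf : fS k t = w * g) 
    (hg : ∀ a, Irreducible a → a ∣ g → ∃ r, fS k t = a * (map φ a * r)) : 
    t * g.totalDegree ≤ (q+1)^2 * (Z1 k q ℓ).card + 4 * q * (Z2 k q ℓ).card := by
  classical
  have hne := fS_ne (k := k) ht hodd
  have hne' := hne
  rw [hf] at hne'
  have hg0 := right_ne_zero_of_mul hne'
  have hw0 := left_ne_zero_of_mul hne'
  obtain ⟨s, hs, u, hu⟩ := UniqueFactorizationMonoid.exists_prime_factors g hg0
  have hsum := sum_ineq (q := q) (ℓ := ℓ) (t := t) s (fun a ha => (hs a ha).ne_zero) (fun a ha => by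
    obtain ⟨r, hr⟩ := hg a (hs a ha).irreducible ((Multiset.dvd_prod ha).trans ⟨u, hu.symm⟩)
    exact factor_ineq hi hq hℓ htq ht hodd φ hr)
  obtain ⟨hp, hsum⟩ := hsum
  have hdeg : g.totalDegree = s.prod.totalDegree := by
    rw [← hu, totalDegree_mul_of_isDomain hp u.ne_zero]
    have : (u : MvPolynomial (Fin 2) k).totalDegree = 0 := by
      have := u.isUnit
      rw [MvPolynomial.isUnit_iff_eq_C_of_isReduced] at this
      obtain ⟨c, _, hc⟩ := this
      rw [hc, totalDegree_C]
    omega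
  have hf' : fS k t = s.prod * (u * w) := by rw [hf, ← hu]; ring
  have hu0 : (u * w : MvPolynomial (Fin 2) k) ≠ 0 := mul_ne_zero u.ne_zero hw0
  have h1 : ∑ P ∈ Z1 k q ℓ, ordP P s.prod ≤ (Z1 k q ℓ).card * (q+1) := by
    rw [← smul_eq_mul]
    apply Finset.sum_le_card_nsmul
    intro P hP
    have hP := (mem_Z1 hℓ.pos P).1 hP
    have := ord1 hi hq hℓ htq hP.1 hP.2
    rw [hf', ordP_mul P hp hu0] at this
    omega
  have h2 : ∑ P ∈ Z2 k q ℓ, s.countP (fun a => 1 ≤ ordP P a ∧ ordP P a < q) ≤ (Z2 k q ℓ).card * 2 := by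
    rw [← smul_eq_mul]
    apply Finset.sum_le_card_nsmul
    intro P hP
    have hP := (mem_Z2 hℓ.pos P).1 hP
    by_contra hlt
    rw [Multiset.countP_eq_card_filter] at hlt
    obtain ⟨a, b, c, v, hv⟩ := exists_three _ (by omega : 3 ≤ (s.filter (fun a => 1 ≤ ordP P a ∧ ordP P a < q)).card)
    have hle := Multiset.prod_dvd_prod_of_le (Multiset.filter_le (fun a => 1 ≤ ordP P a ∧ ordP P a < q) s)
    have hm : ∀ x ∈ s.filter (fun a => 1 ≤ ordP P a ∧ ordP P a < q), 1 ≤ ordP P x := fun x hx => (Multiset.mem_filter.1 hx).2.1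
    rw [hv] at hle hm
    obtain ⟨z, hz⟩ := hle
    simp only [Multiset.prod_cons] at hz
    exact three_max hi hq hℓ htq ht hodd hP.1 hP.2 (a := a) (b := b) (c := c) (w := v.prod * z * (u * w)) (by rw [hf', hz]; ring)
      (hm a (by simp)) (hm b (by simp)) (hm c (by simp))
  rw [hdeg]
  calc _ ≤ _ := hsum
    _ ≤ (q+1) * ((Z1 k q ℓ).card * (q+1)) + 2 * q * ((Z2 k q ℓ).card * 2) := by gcongr
    _ = _ := by ring
end
end APN
end

section
open MvPolynomial

namespace APN

section
variable {k : Type*} [Field k] [CharP k 2]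

lemma card_Zf {ℓ : ℕ} (hℓ : Odd ℓ) : (Zf k ℓ).card ≤ ℓ * (ℓ - 1) + 1 := by
  classical
  have hℓ0 := hℓ.pos
  set μ := Polynomial.nthRootsFinset ℓ (1:k) with hμ
  have hμc : μ.card ≤ ℓ := by
    have := Polynomial.card_nthRoots ℓ (1:k)
    exact (Multiset.toFinset_card_le _).trans this
  have hmaps : ∀ P ∈ Zf k ℓ, P 0 ∈ μ := by
    intro P hP
    rw [hμ, Polynomial.mem_nthRootsFinset hℓ0]
    exact ((mem_Zf hℓ0 P).1 hP).1
  rw [Finset.card_eq_sum_card_fiberwise hmaps]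
  have hfib : ∀ α ∈ μ, ((Zf k ℓ).filter (fun P => P 0 = α)).card ≤ (ℓ - 1) + if α = 1 then 1 else 0 := by
    intro α _
    have hle : ((Zf k ℓ).filter (fun P => P 0 = α)).card ≤ ℓ := by
      refine le_trans (Finset.card_le_card_of_injOn (t := μ) (fun P => P 1) ?_ ?_) hμc
      · intro P hP
        simp only [Finset.coe_filter, Set.mem_ofPred_eq] at hP
        simp only [hμ, Finset.mem_coe, Polynomial.mem_nthRootsFinset hℓ0]
        exact ((mem_Zf hℓ0 P).1 hP.1).2.1
      · intro P hP Q hQ h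
        simp only [Finset.coe_filter, Set.mem_ofPred_eq] at hP hQ
        funext i
        fin_cases i
        · exact hP.2.trans hQ.2.symm
        · exact h
    by_cases hα : α = 1
    · rw [if_pos hα]; omega
    · rw [if_neg hα]
      have hev : Even ((Zf k ℓ).filter (fun P => P 0 = α)).card := by
        rw [even_iff_two_dvd, ← ZMod.natCast_eq_zero_iff]
        rw [Finset.card_eq_sum_ones, Nat.cast_sum]
        have hg2 : ∀ P : Fin 2 → k, gam ![P 0, gam P] = P 1 := by
          intro P
          have h2 : (2:k) = 0 := CharTwo.two_eq_zero
          simp only [gam, Matrix.cons_val_zero, Matrix.cons_val_one]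
          linear_combination (P 0 + 1) * h2
        refine Finset.sum_involution (fun P _ => ![P 0, gam P]) ?_ ?_ ?_ ?_
        · intro P _; decide
        · intro P hP _ h
          have h1 := congrFun h 1
          simp only [Matrix.cons_val_one, gam] at h1
          apply hα
          rw [← (Finset.mem_filter.1 hP).2, ← CharTwo.add_eq_zero]
          simp only [Matrix.cons_val_fin_one] at h1
          linear_combination h1
        · intro P hP
          rw [Finset.mem_filter, mem_Zf hℓ0] at hP ⊢
          obtain ⟨⟨h1, h2, h3⟩, h4⟩ := hP
          refine ⟨⟨?_, ?_, ?_⟩, ?_⟩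
          · simpa using h1
          · simpa using h3
          · rw [hg2]; exact h2
          · simpa using h4
        · intro P hP
          funext i
          fin_cases i
          · simp
          · simp only [Fin.mk_one, Matrix.cons_val_one, Matrix.cons_val_zero, Matrix.cons_val_fin_one]
            exact hg2 P
      obtain ⟨x, hx⟩ := hev
      obtain ⟨y, hy⟩ := hℓ
      omega
  refine (Finset.sum_le_sum hfib).trans ?_
  rw [Finset.sum_add_distrib, Finset.sum_const, smul_eq_mul, Finset.sum_ite_eq']
  gcongr
  split_ifs <;> omega

lemma card_Z1 {q ℓ : ℕ} (hℓ : Odd ℓ) : (Z1 k q ℓ).card ≤ Nat.gcd ℓ (q-1) * (Nat.gcd ℓ (q-1) - 1) + 1 := by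
  have hd : Odd (Nat.gcd ℓ (q-1)) := Odd.of_dvd_nat hℓ (Nat.gcd_dvd_left _ _)
  refine le_trans (Finset.card_le_card ?_) (card_Zf (k := k) hd)
  intro P hP
  rw [mem_Z1 hℓ.pos] at hP
  rw [mem_Zf hd.pos]
  exact ⟨pow_gcd_eq_one.2 ⟨hP.1.1, hP.2.1⟩, pow_gcd_eq_one.2 ⟨hP.1.2.1, hP.2.2.1⟩, pow_gcd_eq_one.2 ⟨hP.1.2.2, hP.2.2.2⟩⟩

lemma card_Z12 {q ℓ : ℕ} : (Z1 k q ℓ).card + (Z2 k q ℓ).card = (Zf k ℓ).card := by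
  classical
  rw [Z1, Z2, Finset.card_filter_add_card_filter_not]

lemma card_Z2 {q ℓ : ℕ} (hℓ : Odd ℓ) (h : ℓ ∣ q - 1) : (Z2 k q ℓ).card = 0 := by
  rw [Finset.card_eq_zero, Finset.eq_empty_iff_forall_notMem]
  intro P hP
  rw [mem_Z2 hℓ.pos] at hP
  obtain ⟨m, hm⟩ := h
  apply hP.2
  obtain ⟨h1, h2, h3⟩ := hP.1
  refine ⟨?_, ?_, ?_⟩ <;> rw [hm, pow_mul] <;> simp [h1, h2, h3]
end

lemma arith1 {q ℓ t A : ℕ} (hℓ : 3 ≤ ℓ) (hq : 3 * ℓ + 1 ≤ q) (ht : t = q*ℓ+1) (hA : A ≤ ℓ * (ℓ-1) + 1)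
    (h : t * (t - 3) ≤ (q+1)^2 * A) : False := by
  obtain ⟨m, rfl⟩ : ∃ m, ℓ = m + 3 := ⟨ℓ - 3, by omega⟩
  obtain ⟨p, rfl⟩ : ∃ p, q = 3 * (m+3) + 1 + p := ⟨q - (3 * (m+3) + 1), by omega⟩
  have e : t - 3 = (3 * (m+3) + 1 + p) * (m+3) - 2 := by omega
  have e2 : 2 ≤ (3 * (m+3) + 1 + p) * (m+3) := by nlinarith
  rw [e, ht] at h
  have h2 := h.trans (Nat.mul_le_mul_left _ hA)
  have e3 : m + 3 - 1 = m + 2 := by omega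
  rw [e3] at h2
  zify [e2] at h2
  have hm : (0:ℤ) ≤ m := by positivity
  have hp : (0:ℤ) ≤ p := by positivity
  ring_nf at h2
  have : (0:ℤ) ≤ m * p := by positivity
  have : (0:ℤ) ≤ m^2 * p := by positivity
  have : (0:ℤ) ≤ m * p^2 := by positivity
  have : (0:ℤ) ≤ m^2 * p^2 := by positivity
  have : (0:ℤ) ≤ m^3 * p := by positivity
  have : (0:ℤ) ≤ m^3 := by positivity
  have : (0:ℤ) ≤ m^2 := by positivity
  have : (0:ℤ) ≤ p^2 := by positivity
  have : (0:ℤ) ≤ m^4 := by positivity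
  linarith

lemma arith2 {q ℓ t A B d : ℕ} (hd : 1 ≤ d) (hdl : 3 * d ≤ ℓ) (hq : 8 ≤ q) (ht : t = q*ℓ+1) (hA : A ≤ d * (d-1) + 1)
    (hAB : A + B ≤ ℓ * (ℓ-1) + 1)
    (h : t * (t - 3) ≤ (q+1)^2 * A + 4 * q * B) : False := by
  obtain ⟨x, rfl⟩ : ∃ x, d = x + 1 := ⟨d - 1, by omega⟩
  obtain ⟨m, rfl⟩ : ∃ m, ℓ = 3 * (x+1) + m := ⟨ℓ - 3*(x+1), by omega⟩
  obtain ⟨p, rfl⟩ : ∃ p, q = p + 8 := ⟨q - 8, by omega⟩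
  have e : t - 3 = (p+8) * (3 * (x+1) + m) - 2 := by omega
  have e2 : 2 ≤ (p+8) * (3 * (x+1) + m) := by nlinarith
  rw [e, ht] at h
  have e3 : 3 * (x+1) + m - 1 = 3 * x + m + 2 := by omega
  have e4 : x + 1 - 1 = x := by omega
  rw [e3] at hAB
  rw [e4] at hA
  zify [e2] at h hA hAB
  have hm : (0:ℤ) ≤ m := by positivity
  have hx : (0:ℤ) ≤ x := by positivity
  have hp : (0:ℤ) ≤ p := by positivity
  have k1 := mul_le_mul_of_nonneg_left hA (by positivity : (0:ℤ) ≤ (p+7)^2)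
  have k2 := mul_le_mul_of_nonneg_left hAB (by positivity : (0:ℤ) ≤ 4*(p+8))
  have k3 : ((p:ℤ)+8+1)^2 * A + 4*(p+8)*B = (p+7)^2 * A + 4*(p+8)*(A+B) := by ring
  rw [k3] at h
  have h' := h.trans (add_le_add k1 k2)
  ring_nf at h'
  have : (0:ℤ) ≤ x * p := by positivity
  have : (0:ℤ) ≤ x * m := by positivity
  have : (0:ℤ) ≤ m * p := by positivity
  have : (0:ℤ) ≤ x * p * m := by positivity
  have : (0:ℤ) ≤ x * p * m^2 := by positivity
  have : (0:ℤ) ≤ x^2 * p := by positivity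
  have : (0:ℤ) ≤ x^2 * p^2 := by positivity
  have : (0:ℤ) ≤ x * p^2 := by positivity
  have : (0:ℤ) ≤ x * p^2 * m := by positivity
  have : (0:ℤ) ≤ m^2 * p := by positivity
  have : (0:ℤ) ≤ m^2 * p^2 := by positivity
  have : (0:ℤ) ≤ m * p^2 := by positivity
  have : (0:ℤ) ≤ p^2 := by positivity
  have : (0:ℤ) ≤ x^2 := by positivity
  have : (0:ℤ) ≤ m^2 := by positivity
  linarith

lemma arith3 {ℓ t A B d : ℕ} (hd : d = 1 ∨ d = 3) (hdl : 3 * d ≤ ℓ) (ht : t = 4*ℓ+1) (hA : A ≤ d * (d-1) + 1)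
    (hAB : A + B ≤ ℓ * (ℓ-1) + 1)
    (h : t * (t - 3) ≤ (4+1)^2 * A + 4 * 4 * B) : False := by
  obtain ⟨m, rfl⟩ : ∃ m, ℓ = m + 1 := ⟨ℓ - 1, by omega⟩
  subst ht
  have e : 4 * (m+1) + 1 - 3 = 4 * m + 2 := by omega
  have e' : m + 1 - 1 = m := by omega
  rw [e] at h
  rw [e'] at hAB
  rcases hd with rfl | rfl <;> norm_num at hA <;> nlinarith

lemma arith_main {q ℓ i t A B : ℕ} (hi : 2 ≤ i) (hq : q = 2^i) (hodd : Odd ℓ) (hℓ1 : ℓ ≠ 1) (hℓq : ℓ ≠ q - 1) (ht : t = q*ℓ+1)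
    (hA : A ≤ Nat.gcd ℓ (q-1) * (Nat.gcd ℓ (q-1) - 1) + 1) (hAB : A + B ≤ ℓ * (ℓ-1) + 1)
    (hB : ℓ ∣ q - 1 → B = 0)
    (h : t * (t - 3) ≤ (q+1)^2 * A + 4 * q * B) : False := by
  obtain ⟨y, hy⟩ := id hodd
  have hqe : ∃ z, q = 4 * z ∧ 1 ≤ z := ⟨2^(i-2), by rw [hq, show i = (i-2)+2 by omega]; simp; ring, Nat.one_le_two_pow⟩
  obtain ⟨z, hz, hz1⟩ := hqe
  by_cases hdvd : ℓ ∣ q - 1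
  · have hB0 := hB hdvd
    subst hB0
    obtain ⟨m, hm⟩ := hdvd
    have : 3 ≤ m := by
      by_contra hlt
      have : m = 0 ∨ m = 1 ∨ m = 2 := by omega
      rcases this with rfl | rfl | rfl <;> omega
    have : ℓ * 3 ≤ ℓ * m := Nat.mul_le_mul_left _ this
    exact arith1 (q := q) (ℓ := ℓ) (t := t) (A := A) (by omega) (by omega) ht (by omega) (by simpa using h)
  · set d := Nat.gcd ℓ (q-1) with hd
    have hdd : d ∣ ℓ := Nat.gcd_dvd_left _ _
    have hdq : d ∣ q - 1 := Nat.gcd_dvd_right _ _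
    have hd1 : 1 ≤ d := Nat.gcd_pos_of_pos_left _ hodd.pos
    have h3d : 3 * d ≤ ℓ := by
      obtain ⟨m, hm⟩ := id hdd
      have : 3 ≤ m := by
        by_contra hlt
        have : m = 0 ∨ m = 1 ∨ m = 2 := by omega
        rcases this with rfl | rfl | rfl
        · omega
        · exact hdvd (by rw [hm, mul_one]; exact hdq)
        · omega
      nlinarith
    by_cases hz2 : z = 1
    · have hq4 : q = 4 := by omega
      rw [hq4] at hdq h ht
      have hle := Nat.le_of_dvd (by norm_num) hdq
      refine arith3 (d := d) ?_ h3d ht hA hAB h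
      norm_num at hdq
      have : d ≠ 2 := by rintro h; rw [h] at hdq; omega
      omega
    · exact arith2 hd1 h3d (by omega) ht hA hAB h
end APN
end

section
open MvPolynomial

namespace APN

section
variable {k : Type*} [Field k] [CharP k 2] [IsAlgClosed k]

lemma irr_map {a : MvPolynomial (Fin 2) k} (ha : Irreducible a) : Irreducible (map (frobenius k 2) a) := by
  have := (MulEquiv.irreducible_iff (mapEquiv (Fin 2) (frobeniusEquiv k 2)) (x := a)).2 ha
  exact this

lemma cofactor {t : ℕ} (ht : 3 ≤ t) (hodd : Odd t) {g : MvPolynomial (Fin 2) k} 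
    (hf : fS k t = (X 0 + 1) * (X 1 + 1) * (X 0 + X 1) * g)
    (hg : ∀ a, Irreducible a → a ∣ g → ¬ Associated a (map (frobenius k 2) a)) (a : MvPolynomial (Fin 2) k)
    (ha : Irreducible a) (hag : a ∣ g) : ∃ r, g = a * (map (frobenius k 2) a * r) := by
  have hne := fS_ne (k := k) ht hodd
  have hs : map (frobenius k 2) g = g := by
    have h1 : map (frobenius k 2) (fS k t) = fS k t := by simp [fS]
    rw [hf] at h1 hne
    simp only [map_mul, map_add, map_X, map_one] at h1
    exact mul_left_cancel₀ (left_ne_zero_of_mul hne) h1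
  obtain ⟨h, rfl⟩ := id hag
  have hi := irr_map ha
  have hd : map (frobenius k 2) a ∣ a * h := by
    rw [← hs, map_mul]; exact dvd_mul_right _ _
  rcases hi.prime.dvd_or_dvd hd with h1 | ⟨r, rfl⟩
  · exact absurd (hi.associated_of_dvd ha h1).symm (hg a ha hag)
  · exact ⟨r, rfl⟩

lemma deg_g {t : ℕ} (ht : 3 ≤ t) (hodd : Odd t) {g : MvPolynomial (Fin 2) k} 
    (hf : fS k t = (X 0 + 1) * (X 1 + 1) * (X 0 + X 1) * g) : t - 3 ≤ g.totalDegree := by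
  have hd := fS_deg (k := k) ht hodd
  have h1 : ∀ a b : MvPolynomial (Fin 2) k, a.totalDegree ≤ 1 → b.totalDegree ≤ 1 → (a+b).totalDegree ≤ 1 := 
    fun a b ha hb => (totalDegree_add a b).trans (max_le ha hb)
  have hX : ∀ i : Fin 2, (X i : MvPolynomial (Fin 2) k).totalDegree ≤ 1 := fun i => by rw [totalDegree_X]
  have h1' : (1 : MvPolynomial (Fin 2) k).totalDegree ≤ 1 := by simp
  rw [hf] at hd
  have e1 := totalDegree_mul ((X 0 + 1) * (X 1 + 1) * (X 0 + X 1)) g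
  have e2 := totalDegree_mul ((X 0 + 1) * (X 1 + 1)) (X 0 + X 1 : MvPolynomial (Fin 2) k)
  have e3 := totalDegree_mul (X 0 + 1) (X 1 + 1 : MvPolynomial (Fin 2) k)
  have := h1 _ _ (hX 0) h1'
  have := h1 _ _ (hX 1) h1'
  have := h1 _ _ (hX 0) (hX 1)
  omega

omit [IsAlgClosed k] in
lemma F3_ne {a b c : k} (ha : a ≠ 0) (hb : b ≠ 0) (hc : c ≠ 0) (h : a + b + c = 1) :
   (a*b*c)^4 * ((b⁻¹+c⁻¹)^3 * (a⁻¹)^4 + (a⁻¹+c⁻¹)^3 * (b⁻¹)^4 + (a⁻¹+b⁻¹)^3 * (c⁻¹)^4) = (1+a)*(1+b)*(1+c) := by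
  have h2 : (2:k) = 0 := CharTwo.two_eq_zero
  have e1 : b⁻¹+c⁻¹ = (1+a)/(b*c) := by field_simp; linear_combination h - a * h2
  have e2 : a⁻¹+c⁻¹ = (1+b)/(a*c) := by field_simp; linear_combination h - b * h2
  have e3 : a⁻¹+b⁻¹ = (1+c)/(a*b) := by field_simp; linear_combination h - c * h2
  rw [e1, e2, e3]
  have e4 : (a*b*c)^4 * (((1+a)/(b*c))^3 * (a⁻¹)^4 + ((1+b)/(a*c))^3 * (b⁻¹)^4 + ((1+c)/(a*b))^3 * (c⁻¹)^4) =
    (1+a)^3*(b*c) + (1+b)^3*(a*c) + (1+c)^3*(a*b) := by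
    field_simp
  rw [e4]
  have hc' : c = 1 - a - b := by linear_combination h
  subst hc'
  linear_combination (6*(a*b*(1-a-b)) - (a*b+b*(1-a-b)+(1-a-b)*a)*(a*b*(1-a-b)) - 1) * h2

lemma no_common {ℓ t : ℕ} (hℓ : Odd ℓ) (htq : t = 2*ℓ+1) (ht : 3 ≤ t) (hodd : Odd t) {a b r : MvPolynomial (Fin 2) k}
    (hf : fS k t = (X 0 + 1) * (X 1 + 1) * (X 0 + X 1) * (a * (b * r))) (P : Fin 2 → k) (h1 : eval P a = 0) (h2 : eval P b = 0) : False := by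
  have hne := fS_ne (k := k) ht hodd
  rw [hf] at hne
  have hl := left_ne_zero_of_mul hne
  have hab := right_ne_zero_of_mul hne
  have ha := left_ne_zero_of_mul hab
  have hbr := right_ne_zero_of_mul hab
  have hb := left_ne_zero_of_mul hbr
  have hr := right_ne_zero_of_mul hbr
  have hl3 := right_ne_zero_of_mul hl
  have hl12 := left_ne_zero_of_mul hl
  have hl1 := left_ne_zero_of_mul hl12
  have hl2 := right_ne_zero_of_mul hl12
  have hP : InZ ℓ P := zero_mem_Z (i := 1) (by rw [htq, pow_one]) ht hodd (a := a) (b := b) (r := (X 0 + 1) * (X 1 + 1) * (X 0 + X 1) * r) (by rw [hf]; ring) P h1 h2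
  have oa := (ordP_pos_iff P ha).2 h1
  have ob := (ordP_pos_iff P hb).2 h2
  have o1 := (ordP_pos_iff P hl1)
  have o2 := (ordP_pos_iff P hl2)
  have o3 := (ordP_pos_iff P hl3)
  simp only [map_add, eval_X, map_one] at o1 o2 o3
  have ho : ordP P (fS k t) = ordP P (X 0 + 1 : MvPolynomial (Fin 2) k) + ordP P (X 1 + 1 : MvPolynomial (Fin 2) k) + ordP P (X 0 + X 1 : MvPolynomial (Fin 2) k) + (ordP P a + (ordP P b + ordP P r)) := by
    rw [hf, ordP_mul P hl hab, ordP_mul P hl12 hl3, ordP_mul P hl1 hl2, ordP_mul P ha hbr, ordP_mul P hb hr]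
  by_cases hP1 : InZ1 2 P
  · rw [ord1 (q := 2) (i := 1) le_rfl rfl hℓ htq hP hP1] at ho
    obtain ⟨i1, i2, i3⟩ := hP1
    norm_num at i1 i2
    have := o1.2 (by rw [i1, CharTwo.add_self_eq_zero])
    have := o2.2 (by rw [i2, CharTwo.add_self_eq_zero])
    have := o3.2 (by rw [i1, i2, CharTwo.add_self_eq_zero])
    omega
  · rw [(ord2 (q := 2) (i := 1) le_rfl rfl hℓ htq hP hP1).1] at ho
    have n1 : P 0 + 1 ≠ 0 := fun h => by have := o1.2 h; omega
    have n2 : P 1 + 1 ≠ 0 := fun h => by have := o2.2 h; omega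
    have n3 : P 0 + P 1 ≠ 0 := fun h => by have := o3.2 h; omega
    obtain ⟨oo, L, hL, hFL, A1, A2, hF3⟩ := loc2_data (q := 2) (i := 1) le_rfl rfl hℓ htq hP hP1 (a := a) (h := b * r * ((X 0 + 1) * (X 1 + 1) * (X 0 + X 1)))
      (by rw [hf]; ring) ha (mul_ne_zero hbr hl)
    have oa1 : ordP P a = 1 := by omega
    have oh1 : ordP P (b * r * ((X 0 + 1) * (X 1 + 1) * (X 0 + X 1))) = 1 := by omega
    rw [oa1, pow_one] at A1
    rw [oh1, pow_one] at A2
    have hLd : L ∣ Fq1 2 P := by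
      rw [hF3, oa1, oh1]
      exact dvd_add (A1.dvd'.mul_right _) (A2.dvd'.mul_left _)
    obtain ⟨m0, m1, m2⟩ := hP.ne hℓ
    obtain ⟨u, hu⟩ := IsAlgClosed.exists_pow_nat_eq (P 0) (n := 2) (by norm_num)
    obtain ⟨v, hv⟩ := IsAlgClosed.exists_pow_nat_eq (P 1) (n := 2) (by norm_num)
    obtain ⟨w, hw⟩ := IsAlgClosed.exists_pow_nat_eq (gam P) (n := 2) (by norm_num)
    have hu0 : u ≠ 0 := by rintro rfl; apply m0; rw [← hu]; norm_num
    have hv0 : v ≠ 0 := by rintro rfl; apply m1; rw [← hv]; norm_num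
    have hw0 : w ≠ 0 := by rintro rfl; apply m2; rw [← hw]; norm_num
    have h20 : (2:k) = 0 := CharTwo.two_eq_zero
    have hs : u + v + w = 1 := by
      have := sum_gam P
      apply pow_q_inj (i := 1)
      rw [← hu, ← hv, ← hw] at this
      rw [pow_one, one_pow]
      linear_combination this + (u*v+v*w+w*u) * h20
    set Q : Fin 2 → k := ![v⁻¹ + w⁻¹, u⁻¹ + w⁻¹] with hQ
    have q0 : Q 0 = v⁻¹ + w⁻¹ := rfl
    have q1 : Q 1 = u⁻¹ + w⁻¹ := rfl
    have eF : eval Q (Fq 2 P) = 0 := by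
      simp only [Fq, map_add, map_mul, map_pow, eval_C, eval_X, q0, q1, ← hu, ← hv, ← hw]
      have hx : ∀ x : k, x ≠ 0 → x^2 * ((x^2)⁻¹)^2 = (x⁻¹)^2 := fun x hx => by field_simp
      rw [hx u hu0, hx v hv0, hx w hw0]
      generalize u⁻¹ = U
      generalize v⁻¹ = V
      generalize w⁻¹ = W
      linear_combination (U^2*V^2+U^2*W^2+V^2*W^2+U^2*V*W+V^2*U*W+W^2*U*V+2*W^3*(U+V)+2*W^4) * h20
    have eL : eval Q L = 0 := by
      rw [hFL, map_pow] at eF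
      exact pow_eq_zero_iff (two_ne_zero) |>.1 eF
    have eF1 : eval Q (Fq1 2 P) = 0 := by
      obtain ⟨z, hz⟩ := hLd
      rw [hz, map_mul, eL, zero_mul]
    have := F3_ne hu0 hv0 hw0 hs
    have e1 : eval Q (Fq1 2 P) = ((v⁻¹+w⁻¹)^3 * (u⁻¹)^4 + (u⁻¹+w⁻¹)^3 * (v⁻¹)^4 + (u⁻¹+v⁻¹)^3 * (w⁻¹)^4) := by
      have e0 : v⁻¹ + w⁻¹ + (u⁻¹ + w⁻¹) = u⁻¹ + v⁻¹ := by linear_combination w⁻¹ * h20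
      simp only [Fq1, map_add, map_mul, map_pow, eval_C, eval_X, q0, q1, ← hu, ← hv, ← hw, e0]
      ring
    rw [← e1, eF1, mul_zero] at this
    have hsq : ∀ x : k, 1 + x = 0 → x^2 + 1 = 0 := fun x h => by linear_combination (x - 1) * h + h20
    rcases mul_eq_zero.1 this.symm with h | h
    · rcases mul_eq_zero.1 h with h | h
      · exact n1 (by rw [← hu]; exact hsq _ h)
      · exact n2 (by rw [← hv]; exact hsq _ h)
    · apply n3
      have h3 := hsq _ h
      rw [hw, gam] at h3
      linear_combination h3 - h20

lemma case_two {ℓ t : ℕ} (hℓ : Odd ℓ) (hℓ1 : ℓ ≠ 1) (htq : t = 2*ℓ+1) (ht : 3 ≤ t) (hodd : Odd t) {g : MvPolynomial (Fin 2) k}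
    (hf : fS k t = (X 0 + 1) * (X 1 + 1) * (X 0 + X 1) * g)
    (hg : ∀ a, Irreducible a → a ∣ g → ¬ Associated a (map (frobenius k 2) a)) : False := by
  have hd := deg_g ht hodd hf
  have hne := fS_ne (k := k) ht hodd
  have hg0 : g ≠ 0 := by rw [hf] at hne; exact right_ne_zero_of_mul hne
  have hpos := hℓ.pos
  have hnu : ¬ IsUnit g := by
    intro h
    have := (MvPolynomial.isUnit_iff_totalDegree_of_isReduced.mp h).2
    omega
  obtain ⟨a, ha, hag⟩ := WfDvdMonoid.exists_irreducible_factor hnu hg0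
  obtain ⟨r, hr⟩ := cofactor ht hodd hf hg a ha hag
  have hf2 := hf
  rw [hr] at hf2
  have hf3 : fS k t = a * map (frobenius k 2) a * ((X 0 + 1) * (X 1 + 1) * (X 0 + X 1) * r) := by rw [hf2]; ring
  have h1 := top_data ha.ne_zero
  have h2 := top_data (irr_map ha).ne_zero
  have := bezout h1.1 h2.1 h2.2 (top_relPrime ht hodd hf3) ∅ (fun _ => 0) (fun P e1 e2 => (no_common hℓ htq ht hodd hf2 P e1 e2).elim) (by simp)
  rw [deg_map, Finset.sum_empty] at this
  have hz : a.totalDegree = 0 := by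
    by_contra hh
    have := Nat.mul_pos (Nat.pos_of_ne_zero hh) (Nat.pos_of_ne_zero hh)
    omega
  rw [totalDegree_eq_zero_iff_eq_C] at hz
  apply ha.not_isUnit
  have hc : coeff 0 a ≠ 0 := fun h => ha.ne_zero (by rw [hz, h, C_0])
  rw [hz]
  exact (Ne.isUnit hc).map C
end
end APN
end

/-- If `x ↦ x^t` is APN on `𝔽_{2^n}` for infinitely many positive `n`, then `t` is a
Gold number `2^i + 1` or a Kasami–Welch number `4^i - 2^i + 1`. -/
theorem stmt_0 (t : ℕ) (ht : 3 ≤ t) (htodd : Odd t) (h : {n : ℕ | 0 < n ∧ ∀ a b : GaloisField 2 n, a ≠ 0 → Set.ncard {x : GaloisField 2 n | (x + a) ^ t + x ^ t = b} ≤ 2}.Infinite) : (∃ i : ℕ, 1 ≤ i ∧ t = 2 ^ i + 1) ∨ (∃ i : ℕ, 1 ≤ i ∧ t = 4 ^ i - 2 ^ i + 1) := by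
  obtain ⟨i, ℓ, hℓ, e⟩ := Nat.exists_eq_two_pow_mul_odd (n := t - 1) (by omega)
  have htq : t = 2^i * ℓ + 1 := by omega
  have hi : 1 ≤ i := by
    rcases Nat.eq_zero_or_pos i with rfl | h
    · exfalso
      obtain ⟨x, hx⟩ := htodd
      obtain ⟨y, hy⟩ := hℓ
      simp at htq
      omega
    · exact h
  by_cases hℓ1 : ℓ = 1
  · left; exact ⟨i, hi, by rw [htq, hℓ1, mul_one]⟩
  by_cases hℓq : ℓ = 2^i - 1
  · right
    refine ⟨i, hi, ?_⟩
    rw [htq, hℓq, Nat.mul_sub, mul_one, ← mul_pow]; norm_num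
  exfalso
  have : CharP (AlgebraicClosure (ZMod 2)) 2 := inferInstance
  obtain ⟨g, hf, hg⟩ := APN.no_fixedS (k := AlgebraicClosure (ZMod 2)) t (2^i) ℓ i ht rfl hℓ htq htodd h
  rcases Nat.lt_or_ge i 2 with h2 | h2
  · have : i = 1 := by omega
    subst this
    exact APN.case_two hℓ hℓ1 (by simpa using htq) ht htodd hf hg
  · have hm := APN.main_ineq hi rfl hℓ htq ht htodd (frobenius (AlgebraicClosure (ZMod 2)) 2) hf (fun a ha hag => by
      obtain ⟨r, hr⟩ := APN.cofactor ht htodd hf hg a ha hag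
      exact ⟨(MvPolynomial.X 0 + 1) * (MvPolynomial.X 1 + 1) * (MvPolynomial.X 0 + MvPolynomial.X 1) * r, by rw [hf, hr]; ring⟩)
    have hd := APN.deg_g ht htodd hf
    refine APN.arith_main h2 rfl hℓ hℓ1 hℓq htq (APN.card_Z1 (k := AlgebraicClosure (ZMod 2)) hℓ) 
      (by rw [APN.card_Z12]; exact APN.card_Zf hℓ) (fun hh => APN.card_Z2 hℓ hh) (le_trans (Nat.mul_le_mul_left _ hd) hm)
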